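/- Let n ≥ 2, 1 ≤ j ≤ n−1, 0 < D < 1 and r ≥ 1. Then, as N → ∞ along square-free integers N, the proportion of subgroups H ∈ H_{N,j}(n) for which #{x ∈ ℤⁿ : ‖x‖∞ ≤ D·N^{j/n} and (x mod N) ∈ H} = r tends to c_{n,r} = μ(Ω̃_{n,r}). That is, lim_{N→∞, N squarefree} #{H ∈ H_{N,j}(n) : #{x ∈ ℤⁿ : ‖x‖∞ ≤ D·N^{j/n}, (x mod N) ∈ H} = r} / #H_{N,j}(n) = μ(Ω̃_{n,r}). -/

import Mathlib

open Matrix MeasureTheory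

noncomputable section

/-- The subgroup `Γ = SL_n(ℤ)` inside `G = SL_n(ℝ)`, realized as the range of the map
induced by the ring homomorphism `ℤ → ℝ`. -/
def Gamma (n : ℕ) : Subgroup (Matrix.SpecialLinearGroup (Fin n) ℝ) :=
  (Matrix.SpecialLinearGroup.map (Int.castRingHom ℝ)).range

/-- The homogeneous space `X = Γ\G = SL_n(ℤ)\SL_n(ℝ)` (right cosets `Γg`). -/
def XSpace (n : ℕ) : Type :=
  Quotient (QuotientGroup.rightRel (Gamma n))

/-- The topology on `SL_n(ℝ)` induced from the space of matrices. -/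
instance (n : ℕ) : TopologicalSpace (Matrix.SpecialLinearGroup (Fin n) ℝ) :=
  TopologicalSpace.induced (fun g => (g : Matrix (Fin n) (Fin n) ℝ)) inferInstance

/-- The quotient topology on `X = Γ\G`. -/
instance (n : ℕ) : TopologicalSpace (XSpace n) :=
  instTopologicalSpaceQuotient

/-- The Borel σ-algebra on `X`. -/
instance (n : ℕ) : MeasurableSpace (XSpace n) := borel _

instance (n : ℕ) : BorelSpace (XSpace n) := ⟨rfl⟩

/-- Right translation `Γx ↦ Γxg` of `G` on `X = Γ\G`. -/
def rightTranslate (n : ℕ) (g : Matrix.SpecialLinearGroup (Fin n) ℝ) :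
    XSpace n → XSpace n :=
  Quotient.map' (fun x => x * g) (fun x y hxy => by
    simp only [QuotientGroup.rightRel_apply] at hxy ⊢
    simpa [mul_assoc] using hxy)

/-- `Ω̃_{n,r}` : the set of cosets `Γg ∈ X` such that the lattice `ℤⁿg` contains exactly
`r` points `vg` (for `v ∈ ℤⁿ`) of sup-norm at most `D`. -/
def OmegaTilde (n : ℕ) (D : ℝ) (r : ℕ) : Set (XSpace n) :=
  {x | ∃ g : Matrix.SpecialLinearGroup (Fin n) ℝ,
    (Quotient.mk'' g : XSpace n) = x ∧
    Set.ncard {v : Fin n → ℤ |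
      ‖Matrix.vecMul (fun i => (v i : ℝ)) (g : Matrix (Fin n) (Fin n) ℝ)‖ ≤ D} = r}


/-- `H_{N,j}(n)`: the set of subgroups of `(ℤ/Nℤ)ⁿ` that are solution sets of a system
`Ax ≡ 0 (mod N)` of `j` linear congruences in `n` variables whose associated map
`(ℤ/Nℤ)ⁿ → (ℤ/Nℤ)ʲ` is surjective. -/
def congruenceSet (N n j : ℕ) : Set (AddSubgroup (Fin n → ZMod N)) :=
  {H | ∃ A : Matrix (Fin j) (Fin n) (ZMod N),
    (Function.Surjective fun x : Fin n → ZMod N => A.mulVec x) ∧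
    (H : Set (Fin n → ZMod N)) = {x | A.mulVec x = 0}}

/-!
Lifting to `ℤⁿ` turns `H ∈ H_{N,j}(n)` into a sublattice of index `N ^ j`; scaled to covolume one,
it is a point of the Hecke orbit of the base point of `X`, and the short solutions of the system
become the lattice vectors of sup-norm at most `D`. So the claim is that the Hecke averages
`T_N 𝟙_Ω̃` at the base point tend to `μ(Ω̃)`.

For a prime `p`, all but a vanishing proportion of the orbit is the translate, by the diagonal
matrix with entries proportional to `p` and `1`, of a fine grid of horospherical unipotents. Long
stretches of such a grid are Birkhoff averages of a unipotent element, which is ergodic by the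
Mautner phenomenon; so by the mean ergodic theorem `T_p f → ∫ f` pointwise, hence in `L¹(μ)`. For
squarefree `N = M p` the Chinese remainder theorem gives `T_N = T_M T_p`, and `T_M` is an
`L¹`-contraction, so it is enough that the largest prime factor of a squarefree `N` tends to
infinity with `N`. Since `T_N` commutes with right translation, `T_N f` is as uniformly continuous
as `f`, and convergence in mean becomes convergence at every point.

Finally `Ω̃` is a `μ`-continuity set: its boundary consists of lattices having a vector of
sup-norm exactly `D`, and a diagonal flow shows that these form a null set.
-/

open Filter Topology
open scoped BigOperators ENNReal MatrixGroups RightActions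

/-! ### Right actions of locally compact groups -/

section RightAction

variable {G X : Type*} [Group G] [TopologicalSpace G] [MulAction Gᵐᵒᵖ X]

/-- Bounded right uniformly continuous functions on a right `G`-space: bounded continuous
functions whose translates `x ↦ f (x <• g)` converge uniformly to `f` as `g → 1`. These are the
test functions of all equidistribution statements below. -/
structure BddRightUnifCont (G : Type*) {X : Type*} [Group G] [TopologicalSpace G]
    [MulAction Gᵐᵒᵖ X] [TopologicalSpace X] (f : X → ℝ) : Prop where
  bdd : ∃ C, ∀ x, |f x| ≤ C
  continuous : Continuous f
  uniform : TendstoUniformly (fun (g : G) x => f (x <• g)) f (𝓝 1)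

namespace BddRightUnifCont

variable [TopologicalSpace X] {f f' : X → ℝ}

lemma eventually_abs_sub_le (hf : BddRightUnifCont G f) {ε : ℝ} (hε : 0 < ε) :
    ∀ᶠ g in 𝓝 (1 : G), ∀ x, |f (x <• g) - f x| ≤ ε := by
  filter_upwards [Metric.tendstoUniformly_iff.1 hf.uniform ε hε] with g hg x
  rw [← Real.dist_eq, dist_comm]
  exact (hg x).le

lemma const (c : ℝ) : BddRightUnifCont G (fun _ : X => c) where
  bdd := ⟨|c|, fun _ => le_rfl⟩
  continuous := continuous_const
  uniform := Metric.tendstoUniformly_iff.2 fun ε hε => by simp [hε]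

lemma comp_left (hf : BddRightUnifCont G f) {ψ : ℝ → ℝ} (hψ : UniformContinuous ψ) :
    BddRightUnifCont G (fun x => ψ (f x)) where
  bdd := by
    obtain ⟨C, hC⟩ := hf.bdd
    obtain ⟨C', hC'⟩ := isCompact_Icc.exists_bound_of_continuousOn
      (hψ.continuous.continuousOn (s := Set.Icc (-C) C))
    exact ⟨C', fun x => hC' _ (abs_le.1 (hC x))⟩
  continuous := hψ.continuous.comp hf.continuous
  uniform := hψ.comp_tendstoUniformly hf.uniform

lemma add (hf : BddRightUnifCont G f) (hf' : BddRightUnifCont G f') :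
    BddRightUnifCont G (fun x => f x + f' x) where
  bdd := by
    obtain ⟨C, hC⟩ := hf.bdd
    obtain ⟨C', hC'⟩ := hf'.bdd
    exact ⟨C + C', fun x => (abs_add_le _ _).trans (add_le_add (hC x) (hC' x))⟩
  continuous := hf.continuous.add hf'.continuous
  uniform := hf.uniform.add hf'.uniform

lemma const_mul (hf : BddRightUnifCont G f) (c : ℝ) : BddRightUnifCont G (fun x => c * f x) :=
  hf.comp_left (uniformContinuous_const_smul c)

lemma sub (hf : BddRightUnifCont G f) (hf' : BddRightUnifCont G f') :
    BddRightUnifCont G (fun x => f x - f' x) := by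
  simpa only [neg_one_mul, ← sub_eq_add_neg] using hf.add (hf'.const_mul (-1))

lemma abs (hf : BddRightUnifCont G f) : BddRightUnifCont G (fun x => |f x|) :=
  hf.comp_left Real.uniformContinuous_abs

lemma sum {ι : Type*} (s : Finset ι) {F : ι → X → ℝ} (h : ∀ i, BddRightUnifCont G (F i)) :
    BddRightUnifCont G (fun x => ∑ i ∈ s, F i x) := by
  classical
  induction s using Finset.induction_on with
  | empty => simpa only [Finset.sum_empty] using const 0
  | insert a s ha ih => simpa only [Finset.sum_insert ha] using (h a).add ih

lemma translate [IsTopologicalGroup G] [ContinuousConstSMul Gᵐᵒᵖ X] (hf : BddRightUnifCont G f)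
    (a : G) : BddRightUnifCont G (fun x => f (x <• a)) where
  bdd := by
    obtain ⟨C, hC⟩ := hf.bdd
    exact ⟨C, fun x => hC _⟩
  continuous := hf.continuous.comp (continuous_const_smul _)
  uniform := by
    have hconj : Tendsto (fun g : G => a⁻¹ * g * a) (𝓝 1) (𝓝 1) := by
      have : Continuous (fun g : G => a⁻¹ * g * a) := by fun_prop
      simpa only [mul_one, inv_mul_cancel] using this.tendsto 1
    refine Metric.tendstoUniformly_iff.2 fun ε hε => ?_
    filter_upwards [hconj.eventually (Metric.tendstoUniformly_iff.1 hf.uniform ε hε)] with g hg x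
    simpa only [smul_smul, ← MulOpposite.op_mul, mul_assoc, mul_inv_cancel_left] using hg (x <• a)

lemma birkhoffAverage [IsTopologicalGroup G] [ContinuousConstSMul Gᵐᵒᵖ X]
    (hf : BddRightUnifCont G f) (u : G) (H : ℕ) :
    BddRightUnifCont G (birkhoffAverage ℝ (fun x : X => x <• u) f H) := by
  have hsum := (sum (Finset.range H) fun k => hf.translate (u ^ k)).const_mul (H : ℝ)⁻¹
  convert hsum with x
  simp only [_root_.birkhoffAverage, birkhoffSum, smul_iterate, ← MulOpposite.op_pow, smul_eq_mul]

section Measure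

variable [MeasurableSpace X] [BorelSpace X] (μ : Measure X) [IsFiniteMeasure μ]

lemma memLp (hf : BddRightUnifCont G f) (p : ℝ≥0∞) : MemLp f p μ := by
  obtain ⟨C, hC⟩ := hf.bdd
  exact MemLp.of_bound hf.continuous.measurable.aestronglyMeasurable C (Eventually.of_forall hC)

lemma integrable (hf : BddRightUnifCont G f) : Integrable f μ :=
  memLp_one_iff_integrable.1 (hf.memLp μ 1)

end Measure

end BddRightUnifCont

/-- The orbit map being open, convergence of the translates at one point of the orbit is the same
as convergence along neighbourhoods of that point. -/
lemma continuous_of_tendstoUniformly_rightSMul [TopologicalSpace X] {f : X → ℝ}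
    (hopen : ∀ x : X, IsOpenMap fun g : G => x <• g)
    (hf : TendstoUniformly (fun (g : G) x => f (x <• g)) f (𝓝 1)) : Continuous f := by
  refine continuous_iff_continuousAt.2 fun x => ?_
  have hnhds : 𝓝 x ≤ map (fun g : G => x <• g) (𝓝 1) := by
    simpa only [MulOpposite.op_one, one_smul] using (hopen x).nhds_le 1
  exact (tendsto_map'_iff.2 (hf.tendsto_at x)).mono_left hnhds

section Measure

lemma exists_isCompact_measure_orbit_ne_zero [SigmaCompactSpace G]
    [MulAction.IsPretransitive Gᵐᵒᵖ X] [MeasurableSpace X] (μ : Measure X)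
    [IsProbabilityMeasure μ] (x₀ : X) :
    ∃ Q : Set G, IsCompact Q ∧ μ ((fun g => x₀ <• g) '' Q) ≠ 0 := by
  by_contra! hnull
  have hunion := measure_iUnion_null fun k => hnull _ (isCompact_compactCovering G k)
  have hrange : Set.range (fun g : G => x₀ <• g) = Set.univ :=
    Set.range_eq_univ.2 fun x => by
      obtain ⟨g, hg⟩ := MulAction.exists_smul_eq Gᵐᵒᵖ x₀ x
      exact ⟨g.unop, hg⟩
  rw [← Set.image_iUnion, iUnion_compactCovering, Set.image_univ, hrange, measure_univ] at hunion
  exact one_ne_zero hunion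

variable [TopologicalSpace X] [MeasurableSpace X] [BorelSpace X] [SecondCountableTopology G]
  [ContinuousSMul Gᵐᵒᵖ X] [MeasurableSpace G] [BorelSpace G]

lemma measurable_rightSMul : Measurable fun q : X × G => q.1 <• q.2 :=
  ((MulOpposite.continuous_op.comp continuous_snd).smul continuous_fst).measurable

lemma lintegral_lintegral_rightSMul (ν : Measure G) [SigmaFinite ν] (μ : Measure X) [SFinite μ]
    [SMulInvariantMeasure Gᵐᵒᵖ X μ] (K : Set G) {ψ : X → ℝ≥0∞} (hψ : Measurable ψ) :
    ∫⁻ x, ∫⁻ g in K, ψ (x <• g) ∂ν ∂μ = ν K * ∫⁻ x, ψ x ∂μ := by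
  rw [lintegral_lintegral_swap (f := fun x g => ψ (x <• g))
    (hψ.comp measurable_rightSMul).aemeasurable]
  have hinv (g : G) : ∫⁻ x, ψ (x <• g) ∂μ = ∫⁻ x, ψ x ∂μ :=
    (measurePreserving_smul (MulOpposite.op g) μ).lintegral_comp hψ
  simp only [hinv, lintegral_const, Measure.restrict_apply MeasurableSet.univ,
    Set.univ_inter, mul_comm]

variable [IsTopologicalGroup G] [LocallyCompactSpace G] [MulAction.IsPretransitive Gᵐᵒᵖ X]
  (ν : Measure G) [ν.IsHaarMeasure] (μ : Measure X) [IsProbabilityMeasure μ]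

/-- Haar measure pushed to an orbit is locally dominated by the invariant measure: the average of
`g ↦ ψ (x <• g)` over `Q⁻¹V` is at least `∫⁻ g in V, ψ (x₀ <• g)` for `x ∈ x₀ <• Q`. -/
lemma exists_setLIntegral_rightSMul_le [T2Space G] [SMulInvariantMeasure Gᵐᵒᵖ X μ] {V : Set G}
    (hV : IsCompact V) (x₀ : X) :
    ∃ C : ℝ≥0∞, C ≠ ⊤ ∧ ∀ ψ : X → ℝ≥0∞, Measurable ψ →
      ∫⁻ g in V, ψ (x₀ <• g) ∂ν ≤ C * ∫⁻ x, ψ x ∂μ := by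
  obtain ⟨Q, hQ, hQμ⟩ := exists_isCompact_measure_orbit_ne_zero (G := G) μ x₀
  set K : Set G := (fun q : G × G => q.1⁻¹ * q.2) '' (Q ×ˢ V)
  have hKc : IsCompact K := (hQ.prod hV).image (by fun_prop)
  refine ⟨ν K / μ ((fun g => x₀ <• g) '' Q), ENNReal.div_ne_top hKc.measure_lt_top.ne hQμ,
    fun ψ hψ => ?_⟩
  set I := ∫⁻ g in V, ψ (x₀ <• g) ∂ν with hI
  have hlower : (fun g => x₀ <• g) '' Q ⊆ {x | I ≤ ∫⁻ g in K, ψ (x <• g) ∂ν} := by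
    rintro _ ⟨q, hq, rfl⟩
    rw [Set.mem_ofPred_eq, hI, ← lintegral_indicator hV.isClosed.measurableSet,
      ← lintegral_indicator hKc.isClosed.measurableSet, ← lintegral_mul_left_eq_self _ q]
    refine lintegral_mono fun g => ?_
    by_cases hg : q * g ∈ V
    · have hgK : g ∈ K := ⟨(q, q * g), ⟨hq, hg⟩, inv_mul_cancel_left q g⟩
      simp [hg, hgK, mul_smul]
    · simp [hg]
  have hmeas : Measurable fun x => ∫⁻ g in K, ψ (x <• g) ∂ν :=
    (hψ.comp measurable_rightSMul).lintegral_prod_right'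
  have hmarkov := mul_meas_ge_le_lintegral hmeas (μ := μ) I
  rw [lintegral_lintegral_rightSMul ν μ K hψ] at hmarkov
  rw [← ENNReal.mul_div_right_comm,
    ENNReal.le_div_iff_mul_le (Or.inl hQμ) (Or.inl (measure_ne_top _ _))]
  exact (mul_le_mul_right (measure_mono hlower) I).trans hmarkov

open scoped Pointwise in
lemma exists_setLIntegral_rightSMul_mul_le [T2Space G] [SMulInvariantMeasure Gᵐᵒᵖ X μ]
    {T W : Set G} (hT : IsCompact T) (hW : IsCompact W) (x₀ : X) :
    ∃ C : ℝ≥0∞, C ≠ ⊤ ∧ ∀ t ∈ T, ∀ ψ : X → ℝ≥0∞, Measurable ψ →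
      ∫⁻ w in W, ψ (x₀ <• (t * w)) ∂ν ≤ C * ∫⁻ x, ψ x ∂μ := by
  obtain ⟨C, hC, hle⟩ := exists_setLIntegral_rightSMul_le ν μ (hT.mul hW) x₀
  refine ⟨C, hC, fun t ht ψ hψ => le_trans ?_ (hle ψ hψ)⟩
  rw [← lintegral_indicator hW.measurableSet, ← lintegral_indicator (hT.mul hW).measurableSet,
    ← lintegral_mul_left_eq_self ((T * W).indicator _) t]
  refine lintegral_mono fun w => ?_
  by_cases hw : w ∈ W
  · simp [hw, Set.mul_mem_mul ht hw]
  · simp [hw]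

lemma exists_le_mul_integral_of_le_expect [T2Space G] [SMulInvariantMeasure Gᵐᵒᵖ X μ]
    {T W : Set G} (hT : IsCompact T) (hW : IsCompact W) (hW1 : W ∈ 𝓝 1) (x₀ : X) :
    ∃ C : ℝ, ∀ F : X → ℝ, Measurable F → Integrable F μ → (∀ x, 0 ≤ F x) →
      ∀ {ι : Type*} (s : Finset ι), s.Nonempty → ∀ t : ι → G, (∀ i ∈ s, t i ∈ T) →
        ∀ L, (∀ w ∈ W, L ≤ 𝔼 i ∈ s, F (x₀ <• (t i * w))) → L ≤ C * ∫ x, F x ∂μ := by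
  let ν : Measure G := Measure.haar
  obtain ⟨C, hC, hle⟩ := exists_setLIntegral_rightSMul_mul_le ν μ hT hW x₀
  have hW0 : ν W ≠ 0 := (ν.measure_pos_of_mem_nhds hW1).ne'
  refine ⟨(C / ν W).toReal, fun F hF hFint hF0 ι s hs t ht L hL => ?_⟩
  set ψ : X → ℝ≥0∞ := fun x => ENNReal.ofReal (F x)
  have hψ : Measurable ψ := hF.ennreal_ofReal
  have hψint : ∫⁻ x, ψ x ∂μ = ENNReal.ofReal (∫ x, F x ∂μ) :=
    (ofReal_integral_eq_lintegral_ofReal hFint (Eventually.of_forall hF0)).symm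
  have hmeas (i : ι) : Measurable fun w : G => ψ (x₀ <• (t i * w)) :=
    hψ.comp (measurable_rightSMul.comp
      (measurable_const.prodMk (continuous_const_mul (t i)).measurable))
  have hpoint : ∀ w ∈ W, s.card * ENNReal.ofReal L ≤ ∑ i ∈ s, ψ (x₀ <• (t i * w)) := by
    intro w hw
    rw [← ENNReal.ofReal_sum_of_nonneg fun i _ => hF0 _, ← ENNReal.ofReal_natCast,
      ← ENNReal.ofReal_mul (Nat.cast_nonneg _), ← Finset.card_mul_expect]
    gcongr
    exact hL w hw
  have hsum : s.card * (ENNReal.ofReal L * ν W) ≤ s.card * (C * ∫⁻ x, ψ x ∂μ) :=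
    calc s.card * (ENNReal.ofReal L * ν W)
        = ∫⁻ _ in W, s.card * ENNReal.ofReal L ∂ν := by rw [setLIntegral_const, mul_assoc]
      _ ≤ ∫⁻ w in W, ∑ i ∈ s, ψ (x₀ <• (t i * w)) ∂ν := setLIntegral_mono' hW.measurableSet hpoint
      _ = ∑ i ∈ s, ∫⁻ w in W, ψ (x₀ <• (t i * w)) ∂ν := lintegral_finsetSum _ fun i _ => hmeas i
      _ ≤ s.card * (C * ∫⁻ x, ψ x ∂μ) := by
          rw [← nsmul_eq_mul, ← Finset.sum_const]
          exact Finset.sum_le_sum fun i hi => hle _ (ht i hi) ψ hψ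
  have hcard : (s.card : ℝ≥0∞) ≠ 0 := mod_cast hs.card_pos.ne'
  rw [ENNReal.mul_le_mul_iff_right hcard (ENNReal.natCast_ne_top _),
    ← ENNReal.le_div_iff_mul_le (Or.inl hW0) (Or.inl hW.measure_ne_top),
    ENNReal.mul_div_right_comm, hψint, ← ENNReal.ofReal_toReal (ENNReal.div_ne_top hC hW0),
    ← ENNReal.ofReal_mul ENNReal.toReal_nonneg] at hsum
  exact (ENNReal.ofReal_le_ofReal_iff
    (mul_nonneg ENNReal.toReal_nonneg (integral_nonneg hF0))).1 hsum

lemma ae_eq_const_of_forall_ae_rightSMul_eq {φ : X → ℝ} (hφ : Measurable φ)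
    (h : ∀ g : G, ∀ᵐ x ∂μ, φ (x <• g) = φ x) : ∃ c : ℝ, ∀ᵐ x ∂μ, φ x = c := by
  let ν : Measure G := Measure.haar
  have hfiber : ∀ᵐ x ∂μ, ∀ᵐ g ∂ν, φ (x <• g) = φ x :=
    (Measure.ae_ae_comm (p := fun g x => φ (x <• g) = φ x)
      (measurableSet_eq_fun (hφ.comp (measurable_rightSMul.comp measurable_swap))
        (hφ.comp measurable_snd))).1 (Eventually.of_forall h)
  obtain ⟨x₀, hx₀⟩ := hfiber.exists
  have horbit : ∀ x, ∀ᵐ g ∂ν, φ (x <• g) = φ x₀ := by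
    intro x
    obtain ⟨k, rfl⟩ := MulAction.exists_smul_eq Gᵐᵒᵖ x₀ x
    filter_upwards [(measurePreserving_mul_left ν k.unop).quasiMeasurePreserving.ae hx₀] with g hg
    simpa only [smul_smul, MulOpposite.op_mul, MulOpposite.op_unop] using hg
  have hswap : ∀ᵐ g ∂ν, ∀ᵐ x ∂μ, φ (x <• g) = φ x₀ :=
    (Measure.ae_ae_comm (p := fun x g => φ (x <• g) = φ x₀)
      (measurableSet_eq_fun (hφ.comp measurable_rightSMul) measurable_const)).1
      (Eventually.of_forall horbit)
  obtain ⟨g, hg⟩ := hswap.exists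
  refine ⟨φ x₀, ?_⟩
  filter_upwards [hg, h g] with x hxconst hxinv
  rw [← hxinv, hxconst]

end Measure

end RightAction

/-! ### The Mautner phenomenon -/

section Mautner

variable {G : Type*} [Group G] [TopologicalSpace G]

/-- A closure property shared by all stabilizers of vectors in continuous isometric
representations: if `S * w m * S` meets `a * z m` for some `w m, z m → 1`, then `a ∈ S`. It is the
only property of stabilizers used in the Mautner phenomenon. -/
def MautnerClosed (S : Subgroup G) : Prop :=
  ∀ (a : G) (s t w z : ℕ → G), (∀ m, s m ∈ S) → (∀ m, t m ∈ S) →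
    Tendsto w atTop (𝓝 1) → Tendsto z atTop (𝓝 1) →
    (∀ m, s m * w m * t m = a * z m) → a ∈ S

lemma mautnerClosed_comap_stabilizer {K V : Type*} [Group K] [MetricSpace V] [MulAction K V]
    [IsIsometricSMul K V] (φ : G →* K) {v : V}
    (hv : Tendsto (fun g => φ g • v) (𝓝 1) (𝓝 v)) :
    MautnerClosed ((MulAction.stabilizer K v).comap φ) := by
  intro a s t w z hs ht hw hz heq
  have hright : Tendsto (fun m => φ (a * z m) • v) atTop (𝓝 (φ a • v)) := by
    simp only [map_mul, mul_smul]
    exact ((isometry_smul V (φ a)).continuous.tendsto v).comp (hv.comp hz)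
  have hleft : Tendsto (fun m => φ (a * z m) • v) atTop (𝓝 v) := by
    refine tendsto_iff_dist_tendsto_zero.2
      ((tendsto_iff_dist_tendsto_zero.1 (hv.comp hw)).congr fun m => ?_)
    have hsm : φ (s m) • v = v := hs m
    have htm : φ (t m) • v = v := ht m
    calc dist (φ (w m) • v) v = dist (φ (s m) • φ (w m) • v) (φ (s m) • v) :=
          (dist_smul _ _ _).symm
      _ = dist (φ (a * z m) • v) v := by rw [hsm, ← heq, map_mul, mul_smul, htm, map_mul, mul_smul]
  exact tendsto_nhds_unique hright hleft

lemma MautnerClosed.mem_of_tendsto_conj {S : Subgroup G} (hS : MautnerClosed S) {a g : G}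
    (ha : a ∈ S) (h : Tendsto (fun m : ℕ => a ^ m * g * (a ^ m)⁻¹) atTop (𝓝 1)) : g ∈ S :=
  hS g (fun m => (a ^ m)⁻¹) (fun m => a ^ m) _ (fun _ => 1) (fun m => S.inv_mem (S.pow_mem ha m))
    (fun m => S.pow_mem ha m) h tendsto_const_nhds fun m => by group

end Mautner

section Transvection

open Matrix.SpecialLinearGroup
open scoped commutatorElement

section Field

variable {ι F : Type*} [Fintype ι] [DecidableEq ι] [Field F]

lemma diag2n_coe_eq_one_add_single {k l : ι} (h : k ≠ l) {c : F} (hc : c ≠ 0) :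
    (diag2n h c hc).1 = 1 + single k k (c - 1) + single l l (c⁻¹ - 1) := by
  rw [diag2n_coe]
  ext i j
  by_cases hij : i = j
  · subst hij
    by_cases hk : i = k
    · subst hk
      simp [h.symm]
    · by_cases hl : i = l
      · subst hl
        simp [hk, h]
      · simp [hk, hl, Ne.symm hk, Ne.symm hl]
  · have hk : ¬ (k = i ∧ k = j) := fun h => hij (h.1.symm.trans h.2)
    have hl : ¬ (l = i ∧ l = j) := fun h => hij (h.1.symm.trans h.2)
    simp [hij, hk, hl]

/-- The relation `(1 x; 0 1) (1 0; y 1) (1 -x/c; 0 1) = (c 0; 0 1/c) (1 0; yc 1)` in `SL₂`, where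
`c = 1 + xy`. -/
lemma transvection_mul_transvection_symm_mul {k l : ι} (h : k ≠ l) {x y c : F} (hc : c ≠ 0)
    (hxy : 1 + x * y = c) :
    (transvection h x * transvection h.symm y * transvection h (-x / c)) =
      diag2n h c hc * transvection h.symm (y * c) := by
  have hkk : x * y = c - 1 := by rw [← hxy]; ring
  have hll : y * (-x / c) = c⁻¹ - 1 := by field_simp; rw [← hxy]; ring
  have hkl : x + -x / c + (c - 1) * (-x / c) = 0 := by field_simp; ring
  have hlk : y * c + (c⁻¹ - 1) * (y * c) = y := by field_simp; ring
  apply Subtype.ext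
  simp only [coe_mul, transvection_coe, diag2n_coe_eq_one_add_single, mul_add, add_mul, mul_one,
    one_mul, single_mul_single_same, ne_eq, h, h.symm, not_false_eq_true,
    single_mul_single_of_ne, add_zero, hkk, hll]
  calc (1 : Matrix ι ι F) + single k l x + (single l k y + single k k (c - 1)) +
        (single k l (-x / c) + (single l l (c⁻¹ - 1) + single k l ((c - 1) * (-x / c))))
      = 1 + single k k (c - 1) + single l l (c⁻¹ - 1) + single l k y +
          single k l (x + -x / c + (c - 1) * (-x / c)) := by
        rw [single_add, single_add]; abel
    _ = 1 + single k k (c - 1) + single l l (c⁻¹ - 1) +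
          single l k (y * c + (c⁻¹ - 1) * (y * c)) := by
        rw [hkl, hlk, single_zero, add_zero]
    _ = _ := by rw [single_add]

lemma conj_transvection_of_coe_eq_diagonal {A : SpecialLinearGroup ι F} {d : ι → F}
    (hA : A.1 = diagonal d) {x y : ι} (hxy : x ≠ y) (hd : d y ≠ 0) (t : F) :
    A * transvection hxy t * A⁻¹ = transvection hxy (d x / d y * t) := by
  rw [mul_inv_eq_iff_eq_mul]
  apply Subtype.ext
  rw [coe_mul, coe_mul, hA, transvection_coe, transvection_coe, mul_add, add_mul, mul_one,
    one_mul]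
  congr 1
  ext i j
  rw [diagonal_mul, mul_diagonal]
  by_cases hij : x = i ∧ y = j
  · obtain ⟨rfl, rfl⟩ := hij
    simp only [single_apply_same]
    field_simp
  · simp [hij]

lemma transvection_eq_commutator {x y k : ι} (hxy : x ≠ y) (hxk : x ≠ k) (hky : k ≠ y) (t : F) :
    transvection hxy t = ⁅transvection hxk t, transvection hky 1⁆ := by
  rw [commutatorElement_def, transvection_inv, transvection_inv]
  apply Subtype.ext
  simp only [coe_mul, transvection_coe, mul_add, add_mul, mul_one, one_mul,
    single_mul_single_same, ne_eq, hxk.symm, hky.symm, hxy.symm,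
    not_false_eq_true, single_mul_single_of_ne, add_zero]
  simp only [mul_neg, mul_one, neg_neg, ← single_neg]
  abel

end Field

section Real

variable {n : ℕ}

lemma continuous_transvection {k l : Fin n} (h : k ≠ l) :
    Continuous fun t : ℝ => (transvection h t : SL(n, ℝ)) := by
  refine continuous_induced_rng.2 (continuous_const.add (continuous_matrix fun i j => ?_))
  simp only [single_apply]
  split_ifs
  exacts [continuous_id, continuous_const]

lemma tendsto_transvection_one {α : Type*} {L : Filter α} {k l : Fin n} (h : k ≠ l) {f : α → ℝ}
    (hf : Tendsto f L (𝓝 0)) : Tendsto (fun a => (transvection h (f a) : SL(n, ℝ))) L (𝓝 1) := by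
  simpa only [transvection_coeff_zero, Function.comp_def] using
    ((continuous_transvection h).tendsto 0).comp hf

namespace MautnerClosed

variable {S : Subgroup SL(n, ℝ)}

lemma diag2n_two_mem (hS : MautnerClosed S) {k l : Fin n} (h : k ≠ l)
    (hu : transvection h (1 : ℝ) ∈ S) : diag2n h (2 : ℝ) two_ne_zero ∈ S := by
  have hnat (m : ℕ) : transvection h (m : ℝ) ∈ S := by
    induction m with
    | zero => rw [Nat.cast_zero, transvection_coeff_zero]; exact S.one_mem
    | succ m ih => rw [Nat.cast_succ, transvection_add]; exact S.mul_mem ih hu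
  have hneg (m : ℕ) : transvection h (-m : ℝ) ∈ S := by
    rw [← transvection_inv]
    exact S.inv_mem (hnat m)
  have hlim : Tendsto (fun m : ℕ => 1 / ((m : ℝ) + 1)) atTop (𝓝 0) :=
    tendsto_one_div_add_atTop_nhds_zero_nat
  refine hS _ (fun m => transvection h ((2 * (m + 1) : ℕ) : ℝ))
    (fun m => transvection h (-((m + 1 : ℕ) : ℝ)))
    (fun m => transvection h.symm ((1 / ((m : ℝ) + 1)) / 2))
    (fun m => transvection h.symm ((1 / ((m : ℝ) + 1)) / 2 * 2))
    (fun m => hnat _) (fun m => hneg _)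
    (tendsto_transvection_one _ (by simpa only [zero_div] using hlim.div_const 2))
    (tendsto_transvection_one _ (by simpa only [div_mul_cancel_of_invertible] using hlim))
    fun m => ?_
  have hcoeff : (-((m + 1 : ℕ) : ℝ)) = -((2 * (m + 1) : ℕ) : ℝ) / 2 := by push_cast; ring
  rw [hcoeff]
  refine transvection_mul_transvection_symm_mul h _ ?_
  push_cast
  field_simp
  norm_num

lemma transvection_mem_of_lt (hS : MautnerClosed S) {A : SL(n, ℝ)} (hAS : A ∈ S) {x y : Fin n}
    (hxy : x ≠ y) {c : ℝ} (hc₀ : 0 ≤ c) (hc₁ : c < 1)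
    (hconj : ∀ t : ℝ, A * transvection hxy t * A⁻¹ = transvection hxy (c * t)) (t : ℝ) :
    transvection hxy t ∈ S := by
  have hpow (m : ℕ) : A ^ m * transvection hxy t * (A ^ m)⁻¹ = transvection hxy (c ^ m * t) := by
    induction m with
    | zero => simp
    | succ m ih =>
      rw [pow_succ' c, mul_assoc c, ← hconj, ← ih, pow_succ']
      group
  refine hS.mem_of_tendsto_conj hAS ?_
  simp only [hpow]
  refine tendsto_transvection_one hxy ?_
  simpa only [zero_mul] using (tendsto_pow_atTop_nhds_zero_of_lt_one hc₀ hc₁).mul_const t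

lemma transvection_mem_of_ne (hS : MautnerClosed S) {A : SL(n, ℝ)} (hAS : A ∈ S) {d : Fin n → ℝ}
    (hA : A.1 = diagonal d) (hd : ∀ i, 0 < d i) {x y : Fin n} (hxy : x ≠ y) (hne : d x ≠ d y)
    (t : ℝ) : transvection hxy t ∈ S := by
  have hconj := conj_transvection_of_coe_eq_diagonal hA hxy (hd y).ne'
  rcases lt_or_gt_of_ne hne with hlt | hgt
  · exact hS.transvection_mem_of_lt hAS hxy (div_pos (hd x) (hd y)).le
      ((div_lt_one (hd y)).2 hlt) hconj t
  · refine hS.transvection_mem_of_lt (S.inv_mem hAS) hxy (div_pos (hd y) (hd x)).le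
      ((div_lt_one (hd x)).2 hgt) (fun s => ?_) t
    have hcancel : d x / d y * (d y / d x * s) = s := by
      have := (hd x).ne'
      have := (hd y).ne'
      field_simp
    rw [← congrArg (SpecialLinearGroup.transvection hxy) hcancel, ← hconj]
    group

lemma transvection_mem (hS : MautnerClosed S) {k l : Fin n} (h : k ≠ l)
    (hu : transvection h (1 : ℝ) ∈ S) {x y : Fin n} (hxy : x ≠ y) (t : ℝ) :
    transvection hxy t ∈ S := by
  set d : Fin n → ℝ := fun i => if i = k then 2 else if i = l then 2⁻¹ else 1 with hd
  have hdpos (i : Fin n) : 0 < d i := by simp only [hd]; split_ifs <;> norm_num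
  have hmem {x y : Fin n} (hxy : x ≠ y) (hne : d x ≠ d y) (t : ℝ) : transvection hxy t ∈ S :=
    hS.transvection_mem_of_ne (hS.diag2n_two_mem h hu) (diag2n_coe h 2 two_ne_zero) hdpos hxy hne t
  by_cases hdd : d x = d y
  · have hmax {i : Fin n} (hi : i ≠ k) : d i ≠ d k := by
      simp only [hd, if_neg hi]
      split_ifs <;> norm_num
    have hxk : x ≠ k := by
      rintro rfl
      exact hmax hxy.symm hdd.symm
    have hky : k ≠ y := by
      rintro rfl
      exact hmax hxy hdd
    have h₁ := hmem hxk (hmax hxk) t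
    have h₂ := hmem hky (hmax hky.symm).symm 1
    rw [transvection_eq_commutator hxy hxk hky, commutatorElement_def]
    exact S.mul_mem (S.mul_mem (S.mul_mem h₁ h₂) (S.inv_mem h₁)) (S.inv_mem h₂)
  · exact hmem hxy hdd t

theorem eq_top_of_transvection_mem (hS : MautnerClosed S) {k l : Fin n} (h : k ≠ l)
    (hu : transvection h (1 : ℝ) ∈ S) : S = ⊤ := by
  have : Nontrivial (Fin n) := ⟨k, l, h⟩
  refine S.eq_top_iff'.2 fun g => diagonal_transvection_induction' (· ∈ S) g ?_
    (fun i j hij a => hS.transvection_mem h hu hij a) fun A B hA hB => S.mul_mem hA hB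
  intro i j hij c hc
  have hrel := transvection_mul_transvection_symm_mul hij (x := c - 1) (y := 1) hc (by ring)
  change diag2n hij c hc ∈ S
  rw [← mul_inv_eq_iff_eq_mul.2 hrel]
  have htv {x y : Fin n} (hxy : x ≠ y) (t : ℝ) := hS.transvection_mem h hu hxy t
  exact S.mul_mem (S.mul_mem (S.mul_mem (htv _ _) (htv _ _)) (htv _ _)) (S.inv_mem (htv _ _))

end MautnerClosed

end Real

end Transvection

/-! ### The mean ergodic theorem for Mautner elements -/

section Koopman

section Lp

variable {X : Type*} [MeasurableSpace X] {μ : Measure X}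

lemma integral_abs_sub_le_dist_toLp [IsProbabilityMeasure μ] {f : X → ℝ} (hf : MemLp f 2 μ)
    (v : Lp ℝ 2 μ) : ∫ x, |f x - v x| ∂μ ≤ dist (hf.toLp f) v := by
  have hsub : MemLp (fun x => f x - v x) 2 μ := hf.sub (Lp.memLp v)
  have hnorm : eLpNorm (fun x => f x - v x) 2 μ = eLpNorm (hf.toLp f - v : Lp ℝ 2 μ) 2 μ := by
    refine eLpNorm_congr_ae ?_
    filter_upwards [hf.coeFn_toLp, Lp.coeFn_sub (hf.toLp f) v] with x hfx hx
    rw [hx, Pi.sub_apply, hfx]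
  rw [dist_eq_norm, Lp.norm_def, ← hnorm]
  have hL1 : ∫ x, |f x - v x| ∂μ = (eLpNorm (fun x => f x - v x) 1 μ).toReal := by
    rw [eLpNorm_one_eq_lintegral_enorm]
    exact integral_norm_eq_lintegral_enorm hsub.1
  rw [hL1]
  exact ENNReal.toReal_mono hsub.2.ne (eLpNorm_le_eLpNorm_of_exponent_le one_le_two hsub.1)

lemma birkhoffAverage_compMeasurePreserving_toLp {τ : X → X} (hτ : MeasurePreserving τ μ μ)
    {f : X → ℝ} (hf : MemLp f 2 μ) {H : ℕ} (hH : MemLp (birkhoffAverage ℝ τ f H) 2 μ) :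
    birkhoffAverage ℝ (Lp.compMeasurePreservingₗᵢ ℝ τ hτ) id H (hf.toLp f) = hH.toLp _ := by
  have hiter (k : ℕ) : (Lp.compMeasurePreservingₗᵢ ℝ τ hτ)^[k] (hf.toLp f) =
      (hf.comp_measurePreserving (hτ.iterate k)).toLp _ := by
    induction k with
    | zero => rfl
    | succ k ih =>
      rw [Function.iterate_succ_apply', ih]
      exact MemLp.toLp_congr (f := (f ∘ τ^[k]) ∘ τ)
        ((hf.comp_measurePreserving (hτ.iterate k)).comp_measurePreserving hτ) _
        (ae_of_all _ fun x => rfl)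
  rw [birkhoffAverage, birkhoffSum]
  simp only [hiter, id]
  refine Lp.ext ?_
  have hterms : ∀ᵐ x ∂μ, ∀ k, (hf.comp_measurePreserving (hτ.iterate k)).toLp _ x = f (τ^[k] x) :=
    ae_all_iff.2 fun k => (hf.comp_measurePreserving (hτ.iterate k)).coeFn_toLp
  filter_upwards [hterms, hH.coeFn_toLp, Lp.coeFn_smul ((H : ℝ)⁻¹)
      (∑ k ∈ Finset.range H, (hf.comp_measurePreserving (hτ.iterate k)).toLp _),
    Lp.coeFn_finsetSum (Finset.range H)
      fun k => (hf.comp_measurePreserving (hτ.iterate k)).toLp _] with x hx hHx hsmul hsum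
  rw [hHx, hsmul, Pi.smul_apply, hsum, Finset.sum_apply, Finset.sum_congr rfl fun k _ => hx k]
  rfl

end Lp

lemma isClosed_setOf_tendsto_smul {α K V : Type*} [PseudoMetricSpace V] [SMul K V]
    [IsIsometricSMul K V] (φ : α → K) (L : Filter α) :
    IsClosed {v : V | Tendsto (fun a => φ a • v) L (𝓝 v)} := by
  refine isClosed_of_closure_subset fun v hv => Metric.tendsto_nhds.2 fun ε hε => ?_
  obtain ⟨w, hw, hvw⟩ := Metric.mem_closure_iff.1 hv (ε / 3) (by positivity)
  filter_upwards [Metric.tendsto_nhds.1 hw (ε / 3) (by positivity)] with a ha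
  calc dist (φ a • v) v ≤ dist (φ a • v) (φ a • w) + dist (φ a • w) w + dist w v :=
        dist_triangle4 _ _ _ _
    _ < ε := by rw [dist_smul, dist_comm w v]; linarith

/-- The homomorphism through which `G` acts on `Lᵖ` functions of a right `G`-space by
`(g • f) x = f (x <• g)`. -/
def koopmanHom (G : Type*) [Group G] : G →* (Gᵐᵒᵖ)ᵈᵐᵃ :=
  (MulEquiv.opOp G).toMonoidHom

variable {G X : Type*} [Group G] [TopologicalSpace G] [MulAction Gᵐᵒᵖ X] [TopologicalSpace X]
  [MeasurableSpace X] [BorelSpace X] [ContinuousConstSMul Gᵐᵒᵖ X] {μ : Measure X}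
  [IsProbabilityMeasure μ] [SMulInvariantMeasure Gᵐᵒᵖ X μ] {f : X → ℝ}

lemma BddRightUnifCont.tendsto_koopman_smul (hf : BddRightUnifCont G f) :
    Tendsto (fun g => koopmanHom G g • (hf.memLp μ 2).toLp f) (𝓝 1)
      (𝓝 ((hf.memLp μ 2).toLp f)) := by
  refine Metric.tendsto_nhds.2 fun ε hε => ?_
  filter_upwards [hf.eventually_abs_sub_le (half_pos hε)] with g hg
  have htranslate : MemLp (fun x => f (x <• g)) 2 μ :=
    (hf.memLp μ 2).comp_measurePreserving (measurePreserving_smul (MulOpposite.op g) μ)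
  have hsmul : koopmanHom G g • (hf.memLp μ 2).toLp f = htranslate.toLp _ :=
    DomMulAct.mk_smul_toLp (MulOpposite.op g) (hf.memLp μ 2)
  have hbound := Lp.norm_le_of_ae_bound (C := ε / 2)
    (f := (htranslate.sub (hf.memLp μ 2)).toLp _) (half_pos hε).le (by
      filter_upwards [(htranslate.sub (hf.memLp μ 2)).coeFn_toLp] with x hx
      rw [hx]
      exact hg x)
  rw [hsmul, dist_eq_norm, ← MemLp.toLp_sub]
  refine hbound.trans_lt ?_
  simpa [measureUnivNNReal] using half_lt_self hε

lemma exists_tendsto_birkhoffAverage_toLp [IsTopologicalGroup G] (hf : BddRightUnifCont G f)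
    (u : G) :
    ∃ v : Lp ℝ 2 μ, koopmanHom G u • v = v ∧
      Tendsto (fun g => koopmanHom G g • v) (𝓝 1) (𝓝 v) ∧
      Tendsto (fun H => ((hf.birkhoffAverage u H).memLp μ 2).toLp _) atTop (𝓝 v) := by
  have hτ := measurePreserving_smul (MulOpposite.op u) μ
  let T := Lp.compMeasurePreservingₗᵢ (p := 2) (E := ℝ) ℝ _ hτ
  have hlim := T.toContinuousLinearMap.tendsto_birkhoffAverage_orthogonalProjection
    T.norm_toContinuousLinearMap_le ((hf.memLp μ 2).toLp f)
  set P := (T.toContinuousLinearMap.eqLocus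
    (1 : Lp ℝ 2 μ →L[ℝ] Lp ℝ 2 μ)).orthogonalProjectionOnto ((hf.memLp μ 2).toLp f)
  have havg (H : ℕ) := birkhoffAverage_compMeasurePreserving_toLp hτ (hf.memLp μ 2)
    ((hf.birkhoffAverage u H).memLp μ 2)
  replace hlim : Tendsto (fun H => ((hf.birkhoffAverage u H).memLp μ 2).toLp _) atTop
      (𝓝 (P : Lp ℝ 2 μ)) := hlim.congr havg
  exact ⟨P, P.2, (isClosed_setOf_tendsto_smul (koopmanHom G) (𝓝 1)).mem_of_tendsto hlim
    (Eventually.of_forall fun H => (hf.birkhoffAverage u H).tendsto_koopman_smul), hlim⟩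

lemma integral_birkhoffAverage_rightSMul [IsTopologicalGroup G] (hf : BddRightUnifCont G f)
    (u : G) {H : ℕ} (hH : H ≠ 0) :
    ∫ x, birkhoffAverage ℝ (fun x => x <• u) f H x ∂μ = ∫ x, f x ∂μ := by
  have hinv (k : ℕ) : ∫ x, f (x <• u ^ k) ∂μ = ∫ x, f x ∂μ := by
    have hmp := measurePreserving_smul (MulOpposite.op (u ^ k)) μ
    conv_rhs => rw [← hmp.map_eq]
    exact (integral_map hmp.measurable.aemeasurable
      hf.continuous.measurable.aestronglyMeasurable).symm
  simp only [birkhoffAverage, birkhoffSum, smul_iterate, ← MulOpposite.op_pow, smul_eq_mul]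
  rw [integral_const_mul,
    integral_finsetSum _ fun k _ => (hf.translate (u ^ k)).integrable μ]
  simp only [hinv, Finset.sum_const, Finset.card_range, nsmul_eq_mul]
  field_simp

end Koopman

section MeanErgodic

variable {G X : Type*} [Group G] [TopologicalSpace G] [IsTopologicalGroup G]
  [LocallyCompactSpace G] [SecondCountableTopology G] [MeasurableSpace G] [BorelSpace G]
  [MulAction Gᵐᵒᵖ X] [MulAction.IsPretransitive Gᵐᵒᵖ X] [TopologicalSpace X] [MeasurableSpace X]
  [BorelSpace X] [ContinuousSMul Gᵐᵒᵖ X] {μ : Measure X} [IsProbabilityMeasure μ]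
  [SMulInvariantMeasure Gᵐᵒᵖ X μ] {f : X → ℝ}

/-- The limit of the averages in `L²` is fixed by `u`, hence by all of `G`, hence constant. -/
theorem tendsto_integral_abs_birkhoffAverage_sub (hf : BddRightUnifCont G f) {u : G}
    (hu : ∀ S : Subgroup G, MautnerClosed S → u ∈ S → S = ⊤) :
    Tendsto (fun H => ∫ x, |birkhoffAverage ℝ (fun x => x <• u) f H x - ∫ y, f y ∂μ| ∂μ)
      atTop (𝓝 0) := by
  obtain ⟨v, hvu, hvcont, hlim⟩ := exists_tendsto_birkhoffAverage_toLp (μ := μ) hf u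
  have hstab := hu _ (mautnerClosed_comap_stabilizer (koopmanHom G) hvcont) hvu
  have hfixed (g : G) : koopmanHom G g • v = v :=
    (hstab ▸ Subgroup.mem_top g : g ∈ (MulAction.stabilizer _ v).comap (koopmanHom G))
  obtain ⟨c, hc⟩ := ae_eq_const_of_forall_ae_rightSMul_eq μ (Lp.stronglyMeasurable v).measurable
    fun g => by
      filter_upwards [DomMulAct.smul_Lp_ae_eq (koopmanHom G g) v] with x hx
      rw [hfixed] at hx
      exact hx.symm
  have hL1 : Tendsto (fun H => ∫ x, |birkhoffAverage ℝ (fun x => x <• u) f H x - c| ∂μ)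
      atTop (𝓝 0) := by
    refine squeeze_zero (fun H => integral_nonneg fun x => abs_nonneg _) (fun H => ?_)
      (tendsto_iff_dist_tendsto_zero.1 hlim)
    refine le_of_eq_of_le (integral_congr_ae ?_) (integral_abs_sub_le_dist_toLp _ v)
    filter_upwards [hc] with x hx
    rw [hx]
  have hint : Tendsto (fun H => ∫ x, birkhoffAverage ℝ (fun x => x <• u) f H x ∂μ) atTop
      (𝓝 c) := by
    refine tendsto_iff_norm_sub_tendsto_zero.2
      (squeeze_zero (fun H => norm_nonneg _) (fun H => ?_) hL1)
    have hsub : ∫ x, birkhoffAverage ℝ (fun x => x <• u) f H x ∂μ - c =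
        ∫ x, (birkhoffAverage ℝ (fun x => x <• u) f H x - c) ∂μ := by
      rw [integral_sub ((hf.birkhoffAverage u H).integrable μ) (integrable_const _)]
      simp
    rw [hsub]
    exact norm_integral_le_integral_norm _
  have hc' : ∫ y, f y ∂μ = c := tendsto_nhds_unique (tendsto_const_nhds.congr'
    ((eventually_ne_atTop 0).mono fun H hH =>
      (integral_birkhoffAverage_rightSMul (μ := μ) hf u hH).symm)) hint
  rwa [hc']

end MeanErgodic

/-! ### The homogeneous space `SL_n(ℤ)\SL_n(ℝ)` -/

section SpecialLinearGroup

variable {n : ℕ}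

instance : IsTopologicalGroup SL(n, ℝ) := Matrix.SpecialLinearGroup.topologicalGroup

lemma isClosedEmbedding_coe_SL :
    IsClosedEmbedding (fun g : SL(n, ℝ) => (g : Matrix (Fin n) (Fin n) ℝ)) :=
  Matrix.SpecialLinearGroup.isClosedEmbedding_val

lemma continuous_coe_SL : Continuous (fun g : SL(n, ℝ) => (g : Matrix (Fin n) (Fin n) ℝ)) :=
  isClosedEmbedding_coe_SL.continuous

instance : T2Space SL(n, ℝ) := isClosedEmbedding_coe_SL.isEmbedding.t2Space

instance : LocallyCompactSpace SL(n, ℝ) :=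
  have : LocallyCompactSpace (Matrix (Fin n) (Fin n) ℝ) :=
    inferInstanceAs (LocallyCompactSpace (Fin n → Fin n → ℝ))
  isClosedEmbedding_coe_SL.locallyCompactSpace

instance : SecondCountableTopology SL(n, ℝ) :=
  have : SecondCountableTopology (Matrix (Fin n) (Fin n) ℝ) :=
    inferInstanceAs (SecondCountableTopology (Fin n → Fin n → ℝ))
  isClosedEmbedding_coe_SL.isEmbedding.secondCountableTopology

instance : MeasurableSpace SL(n, ℝ) := borel _

instance : BorelSpace SL(n, ℝ) := ⟨rfl⟩

lemma SL_ext_coe {R : Type*} [CommRing R] {g h : SL(n, R)}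
    (hgh : (g : Matrix (Fin n) (Fin n) R) = (h : Matrix (Fin n) (Fin n) R)) : g = h :=
  Subtype.ext hgh

lemma exists_forall_abs_sub_one_le_mem {O : Set SL(n, ℝ)} (hO : O ∈ 𝓝 1) :
    ∃ δ > 0, ∀ g : SL(n, ℝ),
      (∀ i k, |g i k - (1 : Matrix (Fin n) (Fin n) ℝ) i k| ≤ δ) → g ∈ O := by
  rw [isClosedEmbedding_coe_SL.isEmbedding.isInducing.nhds_eq_comap, mem_comap] at hO
  obtain ⟨T, hT, hTO⟩ := hO
  obtain ⟨δ, hδ, hball⟩ := (Metric.nhds_basis_closedBall (α := Fin n → Fin n → ℝ)).mem_iff.1 hT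
  exact ⟨δ, hδ, fun g hg => hTO <| hball <|
    (dist_pi_le_iff (X := fun _ => Fin n → ℝ) hδ.le).2 fun i =>
      (dist_pi_le_iff (X := fun _ => ℝ) hδ.le).2 fun k => hg i k⟩

lemma eventually_forall_abs_sub_one_le {δ : ℝ} (hδ : 0 < δ) :
    ∀ᶠ g : SL(n, ℝ) in 𝓝 1, ∀ i k, |g i k - (1 : Matrix (Fin n) (Fin n) ℝ) i k| ≤ δ := by
  refine eventually_all.2 fun i => eventually_all.2 fun k => ?_
  have hentry := (continuous_coe_SL.matrix_elem i k).tendsto (1 : SL(n, ℝ))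
  filter_upwards [Metric.tendsto_nhds.1 hentry δ hδ] with g hg
  exact hg.le

end SpecialLinearGroup

namespace XSpace

variable {n : ℕ}

/-- The projection `g ↦ Γg` from `SL_n(ℝ)` onto `X = Γ\SL_n(ℝ)`. -/
def mk (g : SL(n, ℝ)) : XSpace n := Quotient.mk'' g

lemma mk_surjective : Function.Surjective (mk : SL(n, ℝ) → XSpace n) := Quotient.exists_rep

lemma mk_eq_mk_iff {g h : SL(n, ℝ)} : mk g = mk h ↔ h * g⁻¹ ∈ Gamma n :=
  (Quotient.eq'' (s₁ := QuotientGroup.rightRel (Gamma n))).trans (QuotientGroup.rightRel_apply ..)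

lemma mk_mul_of_mem {γ : SL(n, ℝ)} (hγ : γ ∈ Gamma n) (g : SL(n, ℝ)) : mk (γ * g) = mk g := by
  simpa [mk_eq_mk_iff] using inv_mem hγ

instance : MulAction SL(n, ℝ)ᵐᵒᵖ (XSpace n) where
  smul g := rightTranslate n g.unop
  one_smul x := by
    obtain ⟨g, rfl⟩ := mk_surjective x
    exact congrArg mk (mul_one g)
  mul_smul g h x := by
    obtain ⟨k, rfl⟩ := mk_surjective x
    exact congrArg mk (mul_assoc k h.unop g.unop).symm

@[simp] lemma mk_rightSMul (g h : SL(n, ℝ)) : mk g <• h = mk (g * h) := rfl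

instance : MulAction.IsPretransitive SL(n, ℝ)ᵐᵒᵖ (XSpace n) where
  exists_smul_eq x y := by
    obtain ⟨g, rfl⟩ := mk_surjective x
    obtain ⟨h, rfl⟩ := mk_surjective y
    exact ⟨MulOpposite.op (g⁻¹ * h), by rw [mk_rightSMul, mul_inv_cancel_left]⟩

lemma continuous_mk : Continuous (mk : SL(n, ℝ) → XSpace n) := continuous_quotient_mk'

lemma isOpenMap_mk : IsOpenMap (mk : SL(n, ℝ) → XSpace n) := by
  intro O hO
  have hsat : mk ⁻¹' (mk '' O) = ⋃ γ : Gamma n, (fun g => (γ : SL(n, ℝ)) * g) ⁻¹' O := by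
    ext g
    simp only [Set.mem_preimage, Set.mem_image, Set.mem_iUnion]
    constructor
    · rintro ⟨h, hh, he⟩
      rw [eq_comm, mk_eq_mk_iff] at he
      exact ⟨⟨_, he⟩, by simpa using hh⟩
    · rintro ⟨γ, hγ⟩
      exact ⟨_, hγ, mk_mul_of_mem γ.2 g⟩
  change IsOpen (mk ⁻¹' (mk '' O))
  rw [hsat]
  exact isOpen_iUnion fun γ => hO.preimage (continuous_const_mul _)

lemma isOpenQuotientMap_mk : IsOpenQuotientMap (mk : SL(n, ℝ) → XSpace n) :=
  ⟨mk_surjective, continuous_mk, isOpenMap_mk⟩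

instance : ContinuousSMul SL(n, ℝ)ᵐᵒᵖ (XSpace n) where
  continuous_smul := by
    have hquot : IsOpenQuotientMap (Prod.map id mk : SL(n, ℝ)ᵐᵒᵖ × SL(n, ℝ) → _ × XSpace n) :=
      IsOpenQuotientMap.id.prodMap isOpenQuotientMap_mk
    exact hquot.isQuotientMap.continuous_iff.2
      (continuous_mk.comp (continuous_snd.mul (MulOpposite.continuous_unop.comp continuous_fst)))

lemma isOpenMap_rightSMul (x : XSpace n) : IsOpenMap fun g : SL(n, ℝ) => x <• g := by
  obtain ⟨h, rfl⟩ := mk_surjective x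
  exact isOpenMap_mk.comp (isOpenMap_mul_left h)

end XSpace

/-! ### Horospherical unipotents and block scalings -/

section DetNormalize

variable {n : ℕ}

/-- The multiple of `M` of determinant one, for a real matrix `M` of positive determinant; it is
`1` by convention when `M.det ≤ 0`. -/
def detNormalize (M : Matrix (Fin n) (Fin n) ℝ) : SL(n, ℝ) :=
  if h : 0 < M.det then
    ⟨M.det ^ (-(1 / n : ℝ)) • M, by
      rcases Nat.eq_zero_or_pos n with rfl | hn
      · simp
      · have hexp : -(1 / (n : ℝ)) * n = -1 := by field_simp
        rw [det_smul, Fintype.card_fin, ← Real.rpow_natCast, ← Real.rpow_mul h.le, hexp,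
          Real.rpow_neg_one, inv_mul_cancel₀ h.ne']⟩
  else 1

lemma coe_detNormalize {M : Matrix (Fin n) (Fin n) ℝ} (h : 0 < M.det) :
    (detNormalize M : Matrix (Fin n) (Fin n) ℝ) = M.det ^ (-(1 / n : ℝ)) • M :=
  congrArg Subtype.val (dif_pos h)

lemma detNormalize_mul {M Q : Matrix (Fin n) (Fin n) ℝ} (hM : 0 < M.det) (hQ : 0 < Q.det) :
    detNormalize (M * Q) = detNormalize M * detNormalize Q := by
  have hMQ : 0 < (M * Q).det := by rw [det_mul]; exact mul_pos hM hQ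
  apply SL_ext_coe
  rw [Matrix.SpecialLinearGroup.coe_mul, coe_detNormalize hM, coe_detNormalize hQ,
    coe_detNormalize hMQ, det_mul, Real.mul_rpow hM.le hQ.le, smul_mul_smul_comm]

lemma detNormalize_coe (g : SL(n, ℝ)) : detNormalize (g : Matrix (Fin n) (Fin n) ℝ) = g := by
  apply SL_ext_coe
  rw [coe_detNormalize (by rw [g.2]; exact one_pos), g.2, Real.one_rpow, one_smul]

end DetNormalize

section LowerUnipotent

variable {n : ℕ} {R S : Type*} [CommRing R] [CommRing S]

/-- The projection of `Rⁿ` onto its first `j` coordinates, as an idempotent diagonal matrix. -/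
def leadingProjection (R : Type*) [CommRing R] (n j : ℕ) : Matrix (Fin n) (Fin n) R :=
  diagonal fun i => if (i : ℕ) < j then 1 else 0

lemma isIdempotentElem_leadingProjection (j : ℕ) :
    IsIdempotentElem (leadingProjection R n j) := by
  rw [IsIdempotentElem, leadingProjection, diagonal_mul_diagonal]
  congr 1
  ext i
  split_ifs <;> simp

/-- The lower-left `(n - j) × j` block of a square matrix, extended by zero. -/
def lowerLeftBlock (j : ℕ) (s : Matrix (Fin n) (Fin n) R) : Matrix (Fin n) (Fin n) R :=
  (1 - leadingProjection R n j) * s * leadingProjection R n j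

lemma lowerLeftBlock_apply (j : ℕ) (s : Matrix (Fin n) (Fin n) R) (i k : Fin n) :
    lowerLeftBlock j s i k = if (k : ℕ) < j ∧ j ≤ (i : ℕ) then s i k else 0 := by
  have hcompl : 1 - leadingProjection R n j =
      diagonal fun i : Fin n => if (i : ℕ) < j then 0 else 1 := by
    rw [leadingProjection, ← diagonal_one, diagonal_sub]
    congr 1
    ext i
    split_ifs <;> simp
  rw [lowerLeftBlock, hcompl, leadingProjection, mul_diagonal, diagonal_mul]
  by_cases hi : (i : ℕ) < j <;> by_cases hk : (k : ℕ) < j <;> simp [hi, hk]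

lemma lowerLeftBlock_mul_lowerLeftBlock (j : ℕ) (s t : Matrix (Fin n) (Fin n) R) :
    lowerLeftBlock j s * lowerLeftBlock j t = 0 := by
  have hE := (isIdempotentElem_leadingProjection (R := R) (n := n) j).mul_one_sub_self
  calc lowerLeftBlock j s * lowerLeftBlock j t
      = (1 - leadingProjection R n j) * s *
          (leadingProjection R n j * (1 - leadingProjection R n j)) * t *
          leadingProjection R n j := by simp only [lowerLeftBlock, mul_assoc]
    _ = 0 := by rw [hE]; simp

lemma lowerLeftBlock_add (j : ℕ) (s t : Matrix (Fin n) (Fin n) R) :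
    lowerLeftBlock j (s + t) = lowerLeftBlock j s + lowerLeftBlock j t := by
  rw [lowerLeftBlock, mul_add, add_mul, lowerLeftBlock, lowerLeftBlock]

lemma lowerLeftBlock_map (φ : R →+* S) (j : ℕ) (s : Matrix (Fin n) (Fin n) R) :
    lowerLeftBlock j (s.map φ) = (lowerLeftBlock j s).map φ := by
  ext i k
  simp only [lowerLeftBlock_apply, map_apply]
  split_ifs <;> simp

lemma det_one_add_lowerLeftBlock (j : ℕ) (s : Matrix (Fin n) (Fin n) R) :
    (1 + lowerLeftBlock j s).det = 1 := by
  rw [det_of_isLowerTriangular]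
  · refine Finset.prod_eq_one fun i _ => ?_
    rw [Matrix.add_apply, lowerLeftBlock_apply, if_neg (by omega), one_apply_eq, add_zero]
  · intro i k hik
    have hik : i < k := hik
    rw [Matrix.add_apply, lowerLeftBlock_apply, if_neg (by omega), one_apply_ne hik.ne, add_zero]

/-- The element of the abelian unipotent group `(1 0; * 1)`, with blocks of sizes `j` and `n - j`,
whose lower-left block is that of `s`; the other entries of `s` are ignored. -/
def lowerUnipotent (j : ℕ) (s : Matrix (Fin n) (Fin n) R) : SL(n, R) :=
  ⟨1 + lowerLeftBlock j s, det_one_add_lowerLeftBlock j s⟩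

lemma coe_lowerUnipotent (j : ℕ) (s : Matrix (Fin n) (Fin n) R) :
    (lowerUnipotent j s : Matrix (Fin n) (Fin n) R) = 1 + lowerLeftBlock j s := rfl

lemma lowerUnipotent_mul (j : ℕ) (s t : Matrix (Fin n) (Fin n) R) :
    lowerUnipotent j s * lowerUnipotent j t = lowerUnipotent j (s + t) := by
  apply SL_ext_coe
  simp only [Matrix.SpecialLinearGroup.coe_mul, coe_lowerUnipotent, lowerLeftBlock_add, mul_add,
    add_mul, lowerLeftBlock_mul_lowerLeftBlock, one_mul, mul_one, add_zero, add_assoc]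

lemma lowerUnipotent_zero (j : ℕ) : lowerUnipotent j (0 : Matrix (Fin n) (Fin n) R) = 1 := by
  apply SL_ext_coe
  simp [coe_lowerUnipotent, lowerLeftBlock]

lemma lowerUnipotent_inv (j : ℕ) (s : Matrix (Fin n) (Fin n) R) :
    (lowerUnipotent j s)⁻¹ = lowerUnipotent j (-s) := by
  rw [inv_eq_iff_mul_eq_one, lowerUnipotent_mul, add_neg_cancel, lowerUnipotent_zero]

lemma lowerUnipotent_pow (j : ℕ) (s : Matrix (Fin n) (Fin n) R) (h : ℕ) :
    lowerUnipotent j s ^ h = lowerUnipotent j (h • s) := by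
  induction h with
  | zero => rw [pow_zero, zero_smul, lowerUnipotent_zero]
  | succ h ih => rw [pow_succ, ih, lowerUnipotent_mul, succ_nsmul]

lemma map_lowerUnipotent (φ : R →+* S) (j : ℕ) (s : Matrix (Fin n) (Fin n) R) :
    Matrix.SpecialLinearGroup.map φ (lowerUnipotent j s) = lowerUnipotent j (s.map φ) := by
  apply SL_ext_coe
  rw [coe_lowerUnipotent, lowerLeftBlock_map]
  change φ.mapMatrix (1 + lowerLeftBlock j s) = 1 + φ.mapMatrix (lowerLeftBlock j s)
  rw [map_add, map_one]

lemma lowerUnipotent_intCast_mem_Gamma (j : ℕ) (z : Matrix (Fin n) (Fin n) ℤ) :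
    lowerUnipotent j (z.map (Int.cast : ℤ → ℝ)) ∈ Gamma n :=
  ⟨lowerUnipotent j z, map_lowerUnipotent (Int.castRingHom ℝ) j z⟩

lemma continuous_lowerLeftBlock (j : ℕ) :
    Continuous (lowerLeftBlock j : Matrix (Fin n) (Fin n) ℝ → _) :=
  (continuous_const.matrix_mul continuous_id).matrix_mul continuous_const

lemma continuous_lowerUnipotent (j : ℕ) :
    Continuous (lowerUnipotent j : Matrix (Fin n) (Fin n) ℝ → SL(n, ℝ)) :=
  isClosedEmbedding_coe_SL.isEmbedding.continuous_iff.2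
    (continuous_const.add (continuous_lowerLeftBlock j))

lemma tendsto_lowerUnipotent_one (j : ℕ) :
    Tendsto (lowerUnipotent j : Matrix (Fin n) (Fin n) ℝ → SL(n, ℝ)) (𝓝 0) (𝓝 1) :=
  (continuous_lowerUnipotent j).tendsto' 0 1 (lowerUnipotent_zero j)

end LowerUnipotent

section BlockScaling

variable {n j p : ℕ}

/-- The diagonal matrix `diag(p, …, p, 1, …, 1)` with `j` leading entries `p`. -/
def blockScaling (R : Type*) [CommRing R] (n j p : ℕ) : Matrix (Fin n) (Fin n) R :=
  diagonal fun i => if (i : ℕ) < j then (p : R) else 1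

lemma det_blockScaling_pos {R : Type*} [CommRing R] [LinearOrder R] [IsStrictOrderedRing R]
    (n j : ℕ) (hp : 1 ≤ p) : 0 < (blockScaling R n j p).det := by
  rw [blockScaling, det_diagonal]
  exact Finset.prod_pos fun i _ => by split_ifs <;> positivity

/-- The multiple of `diag(p, …, p, 1, …, 1)` in `SL_n(ℝ)`. -/
def normalizedScaling (n j p : ℕ) : SL(n, ℝ) := detNormalize (blockScaling ℝ n j p)

lemma blockScaling_mul_lowerUnipotent (hp : 1 ≤ p) (t : Matrix (Fin n) (Fin n) ℝ) :
    blockScaling ℝ n j p * (lowerUnipotent j t : Matrix (Fin n) (Fin n) ℝ) =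
      (lowerUnipotent j ((p : ℝ)⁻¹ • t) : Matrix (Fin n) (Fin n) ℝ) * blockScaling ℝ n j p := by
  rw [coe_lowerUnipotent, coe_lowerUnipotent, mul_add, add_mul, mul_one, one_mul]
  congr 1
  ext i k
  rw [blockScaling, diagonal_mul, mul_diagonal, lowerLeftBlock_apply, lowerLeftBlock_apply]
  by_cases h : (k : ℕ) < j ∧ j ≤ (i : ℕ)
  · rw [if_pos h, if_pos h, if_pos h.1, if_neg (not_lt.2 h.2), Matrix.smul_apply, smul_eq_mul]
    field_simp
  · rw [if_neg h, if_neg h, mul_zero, zero_mul]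

lemma normalizedScaling_mul_lowerUnipotent (hp : 1 ≤ p) (t : Matrix (Fin n) (Fin n) ℝ) :
    normalizedScaling n j p * lowerUnipotent j t =
      lowerUnipotent j ((p : ℝ)⁻¹ • t) * normalizedScaling n j p := by
  have hscale := det_blockScaling_pos (R := ℝ) n j hp
  have hunip (s : Matrix (Fin n) (Fin n) ℝ) :
      0 < (lowerUnipotent j s : Matrix (Fin n) (Fin n) ℝ).det := by
    rw [(lowerUnipotent j s).2]
    exact one_pos
  have hnorm := congrArg detNormalize (blockScaling_mul_lowerUnipotent (n := n) (j := j) hp t)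
  rwa [detNormalize_mul hscale (hunip _), detNormalize_mul (hunip _) hscale, detNormalize_coe,
    detNormalize_coe] at hnorm

lemma conj_normalizedScaling_lowerUnipotent (hp : 1 ≤ p) (t : Matrix (Fin n) (Fin n) ℝ) :
    (normalizedScaling n j p)⁻¹ * lowerUnipotent j t * normalizedScaling n j p =
      lowerUnipotent j ((p : ℝ) • t) := by
  have hp0 : (p : ℝ) ≠ 0 := by positivity
  have h := normalizedScaling_mul_lowerUnipotent (n := n) (j := j) hp ((p : ℝ) • t)
  rw [inv_smul_smul₀ hp0] at h
  rw [mul_assoc, ← h, inv_mul_cancel_left]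

lemma blockScaling_mul_conj (hp : 1 ≤ p) (q : SL(n, ℝ)) :
    blockScaling ℝ n j p *
      (((normalizedScaling n j p)⁻¹ * q * normalizedScaling n j p : SL(n, ℝ)) :
        Matrix (Fin n) (Fin n) ℝ) =
      (q : Matrix (Fin n) (Fin n) ℝ) * blockScaling ℝ n j p := by
  have hdet := det_blockScaling_pos (R := ℝ) n j hp
  obtain ⟨r, hr⟩ : ∃ r, r = (normalizedScaling n j p)⁻¹ * q * normalizedScaling n j p := ⟨_, rfl⟩
  have hrel : normalizedScaling n j p * r = q * normalizedScaling n j p := by rw [hr]; group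
  rw [← hr]
  have hcoe : ((normalizedScaling n j p * r : SL(n, ℝ)) : Matrix (Fin n) (Fin n) ℝ) =
      (q * normalizedScaling n j p : SL(n, ℝ)) := by rw [hrel]
  rw [Matrix.SpecialLinearGroup.coe_mul, Matrix.SpecialLinearGroup.coe_mul _ (normalizedScaling ..),
    normalizedScaling, coe_detNormalize hdet, smul_mul_assoc, mul_smul_comm] at hcoe
  exact smul_right_injective _ (Real.rpow_pos_of_pos hdet _).ne' hcoe

lemma abs_conj_normalizedScaling_sub_one_le (hp : 1 ≤ p) {q : SL(n, ℝ)}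
    (hq : lowerLeftBlock j (q : Matrix (Fin n) (Fin n) ℝ) = 0) (i k : Fin n) :
    |((normalizedScaling n j p)⁻¹ * q * normalizedScaling n j p : SL(n, ℝ)) i k -
      (1 : Matrix (Fin n) (Fin n) ℝ) i k| ≤ |q i k - (1 : Matrix (Fin n) (Fin n) ℝ) i k| := by
  have hp0 : (p : ℝ) ≠ 0 := by positivity
  have hentry := congrFun (congrFun (blockScaling_mul_conj (j := j) hp q) i) k
  rw [blockScaling, diagonal_mul, mul_diagonal] at hentry
  set r := (normalizedScaling n j p)⁻¹ * q * normalizedScaling n j p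
  by_cases hi : (i : ℕ) < j <;> by_cases hk : (k : ℕ) < j
  · rw [if_pos hi, if_pos hk, mul_comm] at hentry
    rw [mul_right_cancel₀ hp0 hentry]
  · rw [if_pos hi, if_neg hk, mul_one] at hentry
    have hik : i ≠ k := fun h => hk (h ▸ hi)
    rw [one_apply_ne hik, sub_zero, sub_zero, ← hentry, abs_mul, Nat.abs_cast]
    exact le_mul_of_one_le_left (abs_nonneg _) (mod_cast hp)
  · have hqik := congrFun (congrFun hq i) k
    rw [lowerLeftBlock_apply, if_pos ⟨hk, not_lt.1 hi⟩, Matrix.zero_apply] at hqik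
    rw [if_neg hi, hqik, zero_mul, one_mul] at hentry
    rw [hentry, hqik]
  · rw [if_neg hi, if_neg hk, one_mul, mul_one] at hentry
    rw [hentry]

end BlockScaling

section LowerUnipotentPart

variable {n : ℕ}

/-- The leading `j × j` block of a real matrix, completed by the identity block. -/
def leadingBlock (j : ℕ) (w : Matrix (Fin n) (Fin n) ℝ) : Matrix (Fin n) (Fin n) ℝ :=
  leadingProjection ℝ n j * w * leadingProjection ℝ n j + (1 - leadingProjection ℝ n j)

/-- The block `c * a⁻¹` of `w = (a b; c d) = (1 0; c * a⁻¹ 1) * (a b; 0 *)`, meaningful when the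
leading block `a` is invertible. -/
def lowerUnipotentPart (j : ℕ) (w : Matrix (Fin n) (Fin n) ℝ) : Matrix (Fin n) (Fin n) ℝ :=
  lowerLeftBlock j w * (leadingBlock j w)⁻¹

lemma leadingBlock_one (j : ℕ) : leadingBlock j (1 : Matrix (Fin n) (Fin n) ℝ) = 1 := by
  rw [leadingBlock, mul_one, isIdempotentElem_leadingProjection, add_sub_cancel]

lemma continuous_leadingBlock (j : ℕ) :
    Continuous (leadingBlock j : Matrix (Fin n) (Fin n) ℝ → _) :=
  ((continuous_const.matrix_mul continuous_id).matrix_mul continuous_const).add continuous_const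

lemma eventually_isUnit_det_leadingBlock (j : ℕ) :
    ∀ᶠ w in 𝓝 (1 : Matrix (Fin n) (Fin n) ℝ), IsUnit (leadingBlock j w).det := by
  simp only [isUnit_iff_ne_zero]
  refine (continuous_leadingBlock j).matrix_det.continuousAt.eventually_ne ?_
  rw [leadingBlock_one, det_one]
  exact one_ne_zero

lemma tendsto_lowerUnipotentPart (j : ℕ) :
    Tendsto (lowerUnipotentPart j) (𝓝 (1 : Matrix (Fin n) (Fin n) ℝ)) (𝓝 0) := by
  have hinv : ContinuousAt (fun w : Matrix (Fin n) (Fin n) ℝ => (leadingBlock j w)⁻¹) 1 := by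
    simp only [inv_def, Ring.inverse_eq_inv']
    have hdet : (leadingBlock j (1 : Matrix (Fin n) (Fin n) ℝ)).det ≠ 0 := by
      rw [leadingBlock_one, det_one]
      exact one_ne_zero
    exact ((continuous_leadingBlock j).matrix_det.continuousAt.inv₀ hdet).smul
      (continuous_leadingBlock j).matrix_adjugate.continuousAt
  have hpart : ContinuousAt (lowerUnipotentPart (n := n) j) 1 :=
    ContinuousAt.mul (continuous_lowerLeftBlock j).continuousAt hinv
  have hone : lowerUnipotentPart j (1 : Matrix (Fin n) (Fin n) ℝ) = 0 := by
    rw [lowerUnipotentPart, lowerLeftBlock, mul_one,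
      (isIdempotentElem_leadingProjection j).one_sub_mul_self, zero_mul]
  exact hone ▸ hpart.tendsto

lemma lowerLeftBlock_lowerUnipotent_neg_part_mul {j : ℕ} {w : SL(n, ℝ)}
    (hw : IsUnit (leadingBlock j (w : Matrix (Fin n) (Fin n) ℝ)).det) :
    lowerLeftBlock j ((lowerUnipotent j (-lowerUnipotentPart j w) * w : SL(n, ℝ)) :
      Matrix (Fin n) (Fin n) ℝ) = 0 := by
  set E := leadingProjection ℝ n j with hE
  set A : Matrix (Fin n) (Fin n) ℝ := ↑w
  set t := lowerUnipotentPart j A with ht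
  have hidem : E * E = E := isIdempotentElem_leadingProjection j
  have hidem' : (1 - E) * (1 - E) = 1 - E :=
    (isIdempotentElem_leadingProjection (R := ℝ) (n := n) j).one_sub
  have hsolve : t * leadingBlock j A = (1 - E) * A * E := by
    rw [ht, lowerUnipotentPart, mul_assoc, nonsing_inv_mul _ hw, mul_one, lowerLeftBlock]
  have hblock : E * A * E = leadingBlock j A * E := by
    rw [leadingBlock, ← hE, add_mul, sub_mul, one_mul, hidem, sub_self, add_zero, mul_assoc _ E E,
      hidem]
  calc lowerLeftBlock j ((lowerUnipotent j (-t) * w : SL(n, ℝ)) : Matrix (Fin n) (Fin n) ℝ)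
      = (1 - E) * ((1 + (1 - E) * -t * E) * A) * E := rfl
    _ = (1 - E) * A * E - (1 - E) * (1 - E) * t * (E * A * E) := by noncomm_ring
    _ = (1 - E) * A * E - (1 - E) * (1 - E) * (t * leadingBlock j A) * E := by
        rw [hblock]; simp only [mul_assoc]
    _ = (1 - E) * A * E - (1 - E) * (1 - E) * (1 - E) * A * (E * E) := by
        rw [hsolve]; simp only [mul_assoc]
    _ = 0 := by rw [hidem', hidem', hidem, sub_self]

end LowerUnipotentPart

/-! ### Averages over grids in the unipotent group -/

section Expect

variable {ι : Type*} {s : Finset ι} {F F' : ι → ℝ}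

lemma abs_expect_sub_expect_le (hs : s.Nonempty) {ε : ℝ} (h : ∀ i ∈ s, |F i - F' i| ≤ ε) :
    |𝔼 i ∈ s, F i - 𝔼 i ∈ s, F' i| ≤ ε := by
  rw [← Finset.expect_sub_distrib]
  exact (Finset.abs_expect_le s _).trans (Finset.expect_le hs h)

lemma abs_expect_sub_le_expect_abs_sub (hs : s.Nonempty) (c : ℝ) :
    |𝔼 i ∈ s, F i - c| ≤ 𝔼 i ∈ s, |F i - c| := by
  conv_lhs => rw [← Finset.expect_const hs c, ← Finset.expect_sub_distrib]
  exact Finset.abs_expect_le s _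

end Expect

section BirkhoffAverage

variable {G X : Type*} [Group G] [MulAction Gᵐᵒᵖ X] {f : X → ℝ}

lemma birkhoffAverage_rightSMul_eq_expect (u : G) (H : ℕ) (x : X) :
    birkhoffAverage ℝ (fun x : X => x <• u) f H x = 𝔼 h ∈ Finset.range H, f (x <• (u ^ h)) := by
  simp only [birkhoffAverage, birkhoffSum, smul_iterate, ← MulOpposite.op_pow, smul_eq_mul,
    Finset.expect_eq_sum_div_card, Finset.card_range, div_eq_inv_mul]

lemma abs_birkhoffAverage_rightSMul_sub_le {u v : G} (huv : Commute u v) {H : ℕ} (hH : 1 ≤ H)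
    {ε : ℝ} (hv : ∀ x, |f (x <• v) - f x| ≤ ε) (x : X) :
    |birkhoffAverage ℝ (fun x : X => x <• u) f H (x <• v) -
      birkhoffAverage ℝ (fun x : X => x <• u) f H x| ≤ ε := by
  rw [birkhoffAverage_rightSMul_eq_expect, birkhoffAverage_rightSMul_eq_expect]
  refine abs_expect_sub_expect_le (Finset.nonempty_range_iff.2 (by lia)) fun h _ => ?_
  have hcomm : (x <• v) <• (u ^ h) = (x <• (u ^ h)) <• v := by
    rw [smul_smul, smul_smul, ← MulOpposite.op_mul, ← MulOpposite.op_mul, (huv.pow_left h).eq]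
  rw [hcomm]
  exact hv _

end BirkhoffAverage

section Grid

variable {n j m p K : ℕ}

/-- The integer matrices with entries in `[0, m)`. -/
def matrixBox (n m : ℕ) : Finset (Matrix (Fin n) (Fin n) ℤ) :=
  Fintype.piFinset fun _ => Fintype.piFinset fun _ => Finset.Ico (0 : ℤ) m

lemma mem_matrixBox {B : Matrix (Fin n) (Fin n) ℤ} :
    B ∈ matrixBox n m ↔ ∀ i k, 0 ≤ B i k ∧ B i k < m :=
  Fintype.mem_piFinset.trans <| forall_congr' fun _ =>
    Fintype.mem_piFinset.trans <| forall_congr' fun _ => Finset.mem_Ico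

lemma card_matrixBox (n m : ℕ) : (matrixBox n m).card = m ^ (n * n) :=
  (Fintype.card_piFinset (α := fun _ : Fin n => Fin n → ℤ) _).trans (by simp [pow_mul])

lemma matrixBox_nonempty (n : ℕ) (hm : 1 ≤ m) : (matrixBox n m).Nonempty := by
  rw [← Finset.card_pos, card_matrixBox]
  exact Nat.pow_pos hm

/-- The point `z / m` of the grid `m⁻¹ℤ^{n × n}`. -/
def gridPoint (m : ℕ) (z : Matrix (Fin n) (Fin n) ℤ) : Matrix (Fin n) (Fin n) ℝ :=
  (m : ℝ)⁻¹ • z.map Int.cast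

lemma gridPoint_apply (m : ℕ) (z : Matrix (Fin n) (Fin n) ℤ) (i k : Fin n) :
    gridPoint m z i k = z i k / m := by
  rw [gridPoint, Matrix.smul_apply, map_apply, smul_eq_mul, div_eq_inv_mul]

lemma gridPoint_add (m : ℕ) (z w : Matrix (Fin n) (Fin n) ℤ) :
    gridPoint m (z + w) = gridPoint m z + gridPoint m w := by
  ext i k
  simp only [gridPoint_apply, Matrix.add_apply, Int.cast_add, add_div]

lemma gridPoint_smul (hm : 1 ≤ m) (z : Matrix (Fin n) (Fin n) ℤ) :
    gridPoint m ((m : ℤ) • z) = z.map Int.cast := by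
  have hm0 : (m : ℝ) ≠ 0 := by positivity
  ext i k
  simp only [gridPoint_apply, Matrix.smul_apply, map_apply, smul_eq_mul, Int.cast_mul,
    Int.cast_natCast, mul_div_cancel_left₀ _ hm0]

lemma gridPoint_add_smul_gridPoint (hK : 1 ≤ K) (B b : Matrix (Fin n) (Fin n) ℤ) :
    gridPoint p B + (p : ℝ)⁻¹ • gridPoint K b = gridPoint (p * K) ((K : ℤ) • B + b) := by
  have hK0 : (K : ℝ) ≠ 0 := by positivity
  ext i k
  simp only [gridPoint_apply, Matrix.add_apply, Matrix.smul_apply, smul_eq_mul, Int.cast_add,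
    Int.cast_mul, Int.cast_natCast, Nat.cast_mul, add_div, mul_comm (p : ℝ),
    mul_div_mul_left _ _ hK0]
  rw [inv_mul_eq_div, div_div]

lemma gridPoint_mem_Icc {B : Matrix (Fin n) (Fin n) ℤ} (hB : B ∈ matrixBox n m) (i k : Fin n) :
    gridPoint m B i k ∈ Set.Icc 0 1 := by
  have hmem := mem_matrixBox.1 hB i k
  have h0 : (0 : ℝ) ≤ B i k := mod_cast hmem.1
  have h1 : (B i k : ℝ) ≤ m := mod_cast hmem.2.le
  rw [gridPoint_apply]
  exact ⟨by positivity, div_le_one_of_le₀ h1 (Nat.cast_nonneg m)⟩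

lemma exists_abs_smul_sub_gridPoint_le (hp : 1 ≤ p) (hK : 1 ≤ K) (t : Matrix (Fin n) (Fin n) ℝ) :
    ∃ z : Matrix (Fin n) (Fin n) ℤ, ∀ i k,
      |((p : ℝ) • (t - gridPoint (p * K) z)) i k| ≤ 1 / (K : ℝ) := by
  have hK0 : (0 : ℝ) < K := by positivity
  refine ⟨Matrix.of fun i k => round ((p : ℝ) * K * t i k), fun i k => ?_⟩
  have hentry : ((p : ℝ) • (t - gridPoint (p * K)
      (Matrix.of fun i k => round ((p : ℝ) * K * t i k)))) i k =
        (p * K * t i k - round ((p : ℝ) * K * t i k)) / K := by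
    rw [Matrix.smul_apply, Matrix.sub_apply, gridPoint_apply, of_apply, smul_eq_mul]
    push_cast
    field_simp
  rw [hentry, abs_div, abs_of_pos hK0]
  gcongr
  exact (abs_sub_round _).trans (by norm_num)

lemma abs_lowerUnipotent_sub_one_le (j : ℕ) (s : Matrix (Fin n) (Fin n) ℝ) (i k : Fin n) :
    |lowerUnipotent j s i k - (1 : Matrix (Fin n) (Fin n) ℝ) i k| ≤ |s i k| := by
  rw [coe_lowerUnipotent, Matrix.add_apply, add_sub_cancel_left, lowerLeftBlock_apply]
  split_ifs
  · exact le_rfl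
  · rw [abs_zero]
    exact abs_nonneg _

lemma mk_lowerUnipotent_gridPoint_add_smul (hm : 1 ≤ m) (z w : Matrix (Fin n) (Fin n) ℤ)
    (g : SL(n, ℝ)) :
    XSpace.mk (lowerUnipotent j (gridPoint m (z + (m : ℤ) • w)) * g) =
      XSpace.mk (lowerUnipotent j (gridPoint m z) * g) := by
  rw [add_comm, gridPoint_add, gridPoint_smul hm, ← lowerUnipotent_mul, mul_assoc,
    XSpace.mk_mul_of_mem (lowerUnipotent_intCast_mem_Gamma j w)]

/-- The average of `f` over the points `Γ u(B / m) g` of the translated grid, where `u(s)` is the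
unipotent `(1 0; s 1)` and `B` runs over the integer matrices modulo `m`. -/
def gridAverage (j m : ℕ) (f : XSpace n → ℝ) (g : SL(n, ℝ)) : ℝ :=
  𝔼 B ∈ matrixBox n m, f (XSpace.mk (lowerUnipotent j (gridPoint m B) * g))

lemma gridAverage_lowerUnipotent_mul (hm : 1 ≤ m) (f : XSpace n → ℝ)
    (z : Matrix (Fin n) (Fin n) ℤ) (g : SL(n, ℝ)) :
    gridAverage j m f (lowerUnipotent j (gridPoint m z) * g) = gridAverage j m f g := by
  have hm0 : (0 : ℤ) < m := mod_cast hm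
  have hmem (B : Matrix (Fin n) (Fin n) ℤ) : (B.map (· % (m : ℤ))) ∈ matrixBox n m :=
    mem_matrixBox.2 fun i k => ⟨Int.emod_nonneg _ hm0.ne', Int.emod_lt_of_pos _ hm0⟩
  refine Finset.expect_nbij' (fun B => (B + z).map (· % (m : ℤ)))
    (fun B => (B - z).map (· % (m : ℤ))) (fun B _ => hmem _) (fun B _ => hmem _) ?_ ?_ ?_
  · intro B hB
    ext i k
    have hBik := mem_matrixBox.1 hB i k
    simp [Int.emod_eq_of_lt hBik.1 hBik.2]
  · intro B hB
    ext i k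
    have hBik := mem_matrixBox.1 hB i k
    simp [Int.emod_eq_of_lt hBik.1 hBik.2]
  · intro B _
    have hdiv : B + z = (B + z).map (· % (m : ℤ)) + (m : ℤ) • (B + z).map (· / (m : ℤ)) := by
      ext i k
      exact (Int.emod_add_mul_ediv _ _).symm
    rw [← mul_assoc, lowerUnipotent_mul, ← gridPoint_add, hdiv,
      mk_lowerUnipotent_gridPoint_add_smul hm, ← hdiv]

lemma gridAverage_mul (f : XSpace n → ℝ) (g h : SL(n, ℝ)) :
    gridAverage j m f (g * h) = gridAverage j m (fun x => f (x <• h)) g := by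
  simp only [gridAverage, XSpace.mk_rightSMul, mul_assoc]

lemma abs_gridAverage_mul_sub_le (hm : 1 ≤ m) {f : XSpace n → ℝ} {h : SL(n, ℝ)} {ε : ℝ}
    (hf : ∀ x, |f (x <• h) - f x| ≤ ε) (g : SL(n, ℝ)) :
    |gridAverage j m f (g * h) - gridAverage j m f g| ≤ ε := by
  rw [gridAverage_mul]
  exact abs_expect_sub_expect_le (matrixBox_nonempty n hm) fun B _ => hf _

lemma gridAverage_birkhoffAverage (f : XSpace n → ℝ) (s : Matrix (Fin n) (Fin n) ℝ) (H : ℕ)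
    (g : SL(n, ℝ)) :
    gridAverage j m (birkhoffAverage ℝ (fun x => x <• lowerUnipotent j s) f H) g =
      𝔼 h ∈ Finset.range H, gridAverage j m f (g * lowerUnipotent j (h • s)) := by
  simp only [gridAverage, birkhoffAverage_rightSMul_eq_expect, lowerUnipotent_pow,
    XSpace.mk_rightSMul, mul_assoc]
  exact Finset.expect_comm ..

end Grid

section FineGrid

variable {n j p : ℕ}

lemma mul_normalizedScaling_eq (hp : 1 ≤ p) (w : SL(n, ℝ)) (s t : Matrix (Fin n) (Fin n) ℝ) :
    w * normalizedScaling n j p = lowerUnipotent j s * (normalizedScaling n j p *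
      (lowerUnipotent j ((p : ℝ) • (t - s)) * ((normalizedScaling n j p)⁻¹ *
        (lowerUnipotent j (-t) * w) * normalizedScaling n j p))) := by
  have hcancel : lowerUnipotent j s * lowerUnipotent j (t - s) * lowerUnipotent j (-t) = 1 := by
    rw [lowerUnipotent_mul, lowerUnipotent_mul, add_sub_cancel, add_neg_cancel,
      lowerUnipotent_zero]
  rw [← conj_normalizedScaling_lowerUnipotent hp]
  calc w * normalizedScaling n j p
      = lowerUnipotent j s * lowerUnipotent j (t - s) * lowerUnipotent j (-t) * w *
          normalizedScaling n j p := by rw [hcancel, one_mul]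
    _ = _ := by group

lemma tendsto_lowerUnipotent_neg_part_mul (j : ℕ) :
    Tendsto (fun w : SL(n, ℝ) => lowerUnipotent j
      (-lowerUnipotentPart j (w : Matrix (Fin n) (Fin n) ℝ)) * w) (𝓝 1) (𝓝 1) := by
  have hpart : Tendsto (fun w : SL(n, ℝ) =>
      -lowerUnipotentPart j (w : Matrix (Fin n) (Fin n) ℝ)) (𝓝 1) (𝓝 0) := by
    simpa only [neg_zero, Function.comp_apply] using
      ((tendsto_lowerUnipotentPart j).comp (continuous_coe_SL.tendsto 1)).neg
  simpa only [one_mul, Function.comp_apply, id_eq] using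
    ((tendsto_lowerUnipotent_one j).comp hpart).mul tendsto_id

/-- Conjugation by the scaling expands only the unipotent direction, and that by a factor `p`;
rounding to the grid of mesh `1 / (p * K)` therefore leaves an error of size `1 / K`. -/
lemma eventually_exists_mul_normalizedScaling_eq (j : ℕ) {O : Set SL(n, ℝ)} (hO : O ∈ 𝓝 1) :
    ∃ K₀ ≥ 1, ∀ᶠ w : SL(n, ℝ) in 𝓝 1, ∀ K ≥ K₀, ∀ p ≥ 1,
      ∃ z : Matrix (Fin n) (Fin n) ℤ, ∃ o ∈ O, w * normalizedScaling n j p =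
        lowerUnipotent j (gridPoint (p * K) z) * (normalizedScaling n j p * o) := by
  obtain ⟨V, hV, hVO⟩ := exists_nhds_one_split hO
  obtain ⟨δ, hδ, hδV⟩ := exists_forall_abs_sub_one_le_mem hV
  obtain ⟨K₁, hK₁⟩ := exists_nat_one_div_lt hδ
  refine ⟨K₁ + 1, Nat.le_add_left 1 K₁, ?_⟩
  filter_upwards [(continuous_coe_SL.tendsto 1).eventually (eventually_isUnit_det_leadingBlock j),
    (tendsto_lowerUnipotent_neg_part_mul j).eventually (eventually_forall_abs_sub_one_le hδ)]
    with w hunit hparabolic K hK p hp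
  set t := lowerUnipotentPart j (w : Matrix (Fin n) (Fin n) ℝ)
  have hKδ : 1 / (K : ℝ) ≤ δ := by
    refine le_trans ?_ hK₁.le
    gcongr
    exact_mod_cast hK
  obtain ⟨z, hz⟩ := exists_abs_smul_sub_gridPoint_le hp (by lia : 1 ≤ K) t
  refine ⟨z, _, hVO _ (hδV _ fun i k => ?_) _ (hδV _ fun i k => ?_),
    mul_normalizedScaling_eq hp w (gridPoint (p * K) z) t⟩
  · exact (abs_lowerUnipotent_sub_one_le j _ i k).trans ((hz i k).trans hKδ)
  · exact (abs_conj_normalizedScaling_sub_one_le hp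
      (lowerLeftBlock_lowerUnipotent_neg_part_mul hunit) i k).trans (hparabolic i k)

lemma eventually_abs_gridAverage_mul_normalizedScaling_sub_le (j : ℕ) {f : XSpace n → ℝ}
    (hf : BddRightUnifCont SL(n, ℝ) f) {ε : ℝ} (hε : 0 < ε) :
    ∃ K₀ ≥ 1, ∀ᶠ w : SL(n, ℝ) in 𝓝 1, ∀ K ≥ K₀, ∀ p ≥ 1,
      |gridAverage j (p * K) f (w * normalizedScaling n j p) -
        gridAverage j (p * K) f (normalizedScaling n j p)| ≤ ε := by
  obtain ⟨K₀, hK₀, hgrid⟩ :=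
    eventually_exists_mul_normalizedScaling_eq j (hf.eventually_abs_sub_le hε)
  refine ⟨K₀, hK₀, ?_⟩
  filter_upwards [hgrid] with w hw K hK p hp
  have hm : 1 ≤ p * K := Nat.mul_pos hp (hK₀.trans hK)
  obtain ⟨z, o, ho, heq⟩ := hw K hK p hp
  rw [heq, gridAverage_lowerUnipotent_mul hm]
  exact abs_gridAverage_mul_sub_le hm ho _

lemma isCompact_lowerUnipotent_image_Icc (j : ℕ) :
    IsCompact ((lowerUnipotent j : Matrix (Fin n) (Fin n) ℝ → SL(n, ℝ)) ''
      {s | ∀ i k, s i k ∈ Set.Icc 0 1}) := by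
  have hbox : IsCompact {s : Matrix (Fin n) (Fin n) ℝ | ∀ i k, s i k ∈ Set.Icc 0 1} := by
    have hpi := isCompact_univ_pi fun _ : Fin n => isCompact_univ_pi fun _ : Fin n =>
      isCompact_Icc (a := (0 : ℝ)) (b := 1)
    simp only [Set.pi, Set.mem_univ, true_imp_iff, Set.mem_ofPred_eq] at hpi
    exact hpi
  exact hbox.image (continuous_lowerUnipotent j)

variable {μ : Measure (XSpace n)} [IsProbabilityMeasure μ]
  [SMulInvariantMeasure SL(n, ℝ)ᵐᵒᵖ (XSpace n) μ]

lemma exists_le_mul_integral_of_le_gridAverage (j : ℕ) {W : Set SL(n, ℝ)} (hW : IsCompact W)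
    (hW1 : W ∈ 𝓝 1) :
    ∃ C : ℝ, ∀ F : XSpace n → ℝ, BddRightUnifCont SL(n, ℝ) F → (∀ x, 0 ≤ F x) →
      ∀ m ≥ 1, ∀ (a : SL(n, ℝ)) (L : ℝ),
        (∀ w ∈ W, L ≤ gridAverage j m F (w * a)) → L ≤ C * ∫ x, F x ∂μ := by
  obtain ⟨C, hle⟩ := exists_le_mul_integral_of_le_expect μ
    (isCompact_lowerUnipotent_image_Icc j) hW hW1 (XSpace.mk 1)
  refine ⟨C, fun F hF hF0 m hm a L hL => ?_⟩
  have hFa := hF.translate a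
  rw [← integral_smul_eq_self F (g := MulOpposite.op a)]
  refine hle _ hFa.continuous.measurable (hFa.integrable μ) (fun x => hF0 _) _
    (matrixBox_nonempty n hm) (fun B => lowerUnipotent j (gridPoint m B))
    (fun B hB => ⟨_, gridPoint_mem_Icc hB, rfl⟩) L fun w hw => ?_
  simpa only [gridAverage_mul, gridAverage, XSpace.mk_rightSMul, one_mul, mul_assoc] using hL w hw

lemma abs_sub_sub_le_gridAverage_abs_birkhoffAverage_sub {K H : ℕ} (hp : 1 ≤ p) (hK : 1 ≤ K)
    (hH : 1 ≤ H) {f : XSpace n → ℝ} {s : Matrix (Fin n) (Fin n) ℝ} {w : SL(n, ℝ)} {A c ε : ℝ}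
    (hA : ∀ h < H, |gridAverage j (p * K) f
      (w * lowerUnipotent j ((p : ℝ)⁻¹ • h • s) * normalizedScaling n j p) - A| ≤ ε) :
    |A - c| - ε ≤ gridAverage j (p * K)
      (fun x => |birkhoffAverage ℝ (fun x => x <• lowerUnipotent j s) f H x - c|)
      (w * normalizedScaling n j p) := by
  set E := gridAverage j (p * K) (birkhoffAverage ℝ (fun x => x <• lowerUnipotent j s) f H)
    (w * normalizedScaling n j p) with hE
  have hrange : (Finset.range H).Nonempty := Finset.nonempty_range_iff.2 (by lia)
  have hEA : |E - A| ≤ ε := by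
    rw [hE, gridAverage_birkhoffAverage]
    refine (abs_expect_sub_le_expect_abs_sub hrange A).trans
      (Finset.expect_le hrange fun h hh => ?_)
    rw [mul_assoc, normalizedScaling_mul_lowerUnipotent hp, ← mul_assoc]
    exact hA h (Finset.mem_range.1 hh)
  have hEc : |E - c| ≤ gridAverage j (p * K)
      (fun x => |birkhoffAverage ℝ (fun x => x <• lowerUnipotent j s) f H x - c|)
      (w * normalizedScaling n j p) :=
    abs_expect_sub_le_expect_abs_sub (matrixBox_nonempty n (Nat.mul_pos hp hK)) c
  have htri := abs_sub_le A E c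
  rw [abs_sub_comm A E] at htri
  linarith

lemma eq_top_of_mautnerClosed_of_lowerUnipotent_single_mem {k l : Fin n} (hl : (l : ℕ) < j)
    (hk : j ≤ (k : ℕ)) (S : Subgroup SL(n, ℝ)) (hS : MautnerClosed S)
    (hu : lowerUnipotent j (single k l 1) ∈ S) : S = ⊤ := by
  have hkl : k ≠ l := fun h => by subst h; lia
  have htrans : lowerUnipotent j (single k l (1 : ℝ)) =
      Matrix.SpecialLinearGroup.transvection hkl 1 := by
    apply SL_ext_coe
    change 1 + lowerLeftBlock j (single k l (1 : ℝ)) = Matrix.transvection k l 1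
    rw [Matrix.transvection]
    congr 1
    ext a b
    rw [lowerLeftBlock_apply]
    split_ifs with hab
    · rfl
    · rw [single_apply_of_ne]
      rintro ⟨rfl, rfl⟩
      exact hab ⟨hl, hk⟩
  exact hS.eq_top_of_transvection_mem hkl (htrans ▸ hu)

lemma eventually_lowerUnipotent_inv_smul_mem (j H : ℕ) (s : Matrix (Fin n) (Fin n) ℝ)
    {W : Set SL(n, ℝ)} (hW : W ∈ 𝓝 1) :
    ∀ᶠ p : ℕ in atTop, ∀ h < H, lowerUnipotent j ((p : ℝ)⁻¹ • h • s) ∈ W := by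
  simp only [← Finset.mem_range]
  refine (Finset.eventually_all _).2 fun h _ => ?_
  have hsmall : Tendsto (fun p : ℕ => (p : ℝ)⁻¹ • h • s) atTop (𝓝 0) := by
    simpa only [zero_smul] using (tendsto_inv_atTop_nhds_zero_nat (𝕜 := ℝ)).smul_const (h • s)
  exact ((tendsto_lowerUnipotent_one j).comp hsmall).eventually hW

/-- Being insensitive to a small translation of the base point, the average over a sufficiently
fine grid may be smeared over a neighbourhood of `1`, where the mean ergodic theorem applies. -/
theorem exists_forall_abs_gridAverage_mul_sub_le {f : XSpace n → ℝ}
    (hf : BddRightUnifCont SL(n, ℝ) f) {k l : Fin n} (hl : (l : ℕ) < j) (hk : j ≤ (k : ℕ)) {ε : ℝ}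
    (hε : 0 < ε) :
    ∃ K₀ ≥ 1, ∀ᶠ p in atTop, ∀ K ≥ K₀,
      |gridAverage j (p * K) f (normalizedScaling n j p) - ∫ x, f x ∂μ| ≤ ε := by
  set c := ∫ x, f x ∂μ
  set s : Matrix (Fin n) (Fin n) ℝ := single k l 1
  obtain ⟨K₀, hK₀, hnear⟩ :=
    eventually_abs_gridAverage_mul_normalizedScaling_sub_le j hf (half_pos hε)
  obtain ⟨V, hV, hVnear⟩ := exists_nhds_one_split hnear
  obtain ⟨W, hW1, hWV, hW⟩ := local_compact_nhds hV
  obtain ⟨C, hC⟩ := exists_le_mul_integral_of_le_gridAverage (μ := μ) j hW hW1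
  obtain ⟨H, hH, hH1⟩ : ∃ H, C * ∫ x, |birkhoffAverage ℝ (fun x => x <• lowerUnipotent j s) f H x
      - c| ∂μ < ε / 2 ∧ 1 ≤ H := by
    have hlim := (tendsto_integral_abs_birkhoffAverage_sub (μ := μ) hf
      (eq_top_of_mautnerClosed_of_lowerUnipotent_single_mem hl hk)).const_mul C
    rw [mul_zero] at hlim
    exact ((hlim.eventually_lt_const (half_pos hε)).and (eventually_ge_atTop 1)).exists
  refine ⟨K₀, hK₀, ?_⟩
  filter_upwards [eventually_lowerUnipotent_inv_smul_mem j H s hV, eventually_ge_atTop 1]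
    with p hpV hp K hK
  have hK1 : 1 ≤ K := hK₀.trans hK
  have hbound := hC (fun x => |birkhoffAverage ℝ (fun x => x <• lowerUnipotent j s) f H x - c|)
    ((hf.birkhoffAverage _ H).sub (.const c)).abs (fun x => abs_nonneg _) (p * K)
    (Nat.mul_pos hp hK1) (normalizedScaling n j p)
    (|gridAverage j (p * K) f (normalizedScaling n j p) - c| - ε / 2) fun w hw =>
      abs_sub_sub_le_gridAverage_abs_birkhoffAverage_sub hp hK1 hH1 fun h hh =>
        hVnear w (hWV hw) _ (hpV h hh) K hK p hp
  linarith

end FineGrid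

section CoarseGrid

variable {n j p : ℕ}

lemma sum_matrixBox_sum_matrixBox_le {p K L : ℕ} (hLK : L ≤ K) {G : Matrix (Fin n) (Fin n) ℤ → ℝ}
    (hG : ∀ B, 0 ≤ G B) :
    ∑ B ∈ matrixBox n p, ∑ b ∈ matrixBox n L, G ((K : ℤ) • B + b) ≤
      ∑ B ∈ matrixBox n (p * K), G B := by
  classical
  have hLK' : (L : ℤ) ≤ K := mod_cast hLK
  have hdigit {B b : Matrix (Fin n) (Fin n) ℤ} (hb : b ∈ matrixBox n L) (i k : Fin n) :
      B i k = ((K : ℤ) • B + b) i k / K := by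
    obtain ⟨h0, hlt⟩ := mem_matrixBox.1 hb i k
    rw [Matrix.add_apply, Matrix.smul_apply, smul_eq_mul,
      Int.mul_add_ediv_left _ _ (by lia : (K : ℤ) ≠ 0), Int.ediv_eq_zero_of_lt h0 (by lia),
      add_zero]
  have hinj : Set.InjOn
      (fun q : Matrix (Fin n) (Fin n) ℤ × Matrix (Fin n) (Fin n) ℤ => (K : ℤ) • q.1 + q.2)
      (matrixBox n p ×ˢ matrixBox n L : Finset _) := by
    rintro ⟨B, b⟩ hBb ⟨B', b'⟩ hBb' heq
    rw [Finset.mem_coe, Finset.mem_product] at hBb hBb'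
    replace heq : (K : ℤ) • B + b = (K : ℤ) • B' + b' := heq
    have hB : B = B' := by
      ext i k
      exact (hdigit hBb.2 i k).trans (heq ▸ (hdigit hBb'.2 i k).symm)
    subst hB
    rw [add_right_inj] at heq
    rw [heq]
  rw [← Finset.sum_product', ← Finset.sum_image (f := G) hinj]
  refine Finset.sum_le_sum_of_subset_of_nonneg (Finset.image_subset_iff.2 ?_) fun B _ _ => hG B
  rintro ⟨B, b⟩ hBb
  obtain ⟨hB, hb⟩ := Finset.mem_product.1 hBb
  refine mem_matrixBox.2 fun i k => ?_
  obtain ⟨hB0, hBp⟩ := mem_matrixBox.1 hB i k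
  obtain ⟨hb0, hbL⟩ := mem_matrixBox.1 hb i k
  simp only [Matrix.add_apply, Matrix.smul_apply, smul_eq_mul, Nat.cast_mul] at *
  constructor <;> nlinarith [hLK']

lemma expect_matrixBox_expect_matrixBox_le {p L M : ℕ} (hp : 1 ≤ p) (hL : 1 ≤ L) (hM : 1 ≤ M)
    {G : Matrix (Fin n) (Fin n) ℤ → ℝ} (hG : ∀ B, 0 ≤ G B) :
    𝔼 B ∈ matrixBox n p, 𝔼 b ∈ matrixBox n L, G (((M * L : ℕ) : ℤ) • B + b) ≤
      M ^ (n * n) * 𝔼 B ∈ matrixBox n (p * (M * L)), G B := by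
  have hsum := sum_matrixBox_sum_matrixBox_le (p := p) (Nat.le_mul_of_pos_left L hM) hG
  simp only [Finset.expect_eq_sum_div_card, card_matrixBox, ← Finset.sum_div, Nat.cast_pow,
    Nat.cast_mul, mul_pow] at hsum ⊢
  calc _ ≤ (∑ B ∈ matrixBox n (p * (M * L)), G B) / (L : ℝ) ^ (n * n) / (p : ℝ) ^ (n * n) := by
        gcongr
    _ = _ := by field_simp

lemma gridAverage_le_add_mul_gridAverage {L M : ℕ} (hp : 1 ≤ p) (hL : 1 ≤ L) (hM : 1 ≤ M)
    {F : XSpace n → ℝ} (hF0 : ∀ x, 0 ≤ F x) {ε : ℝ} (hF : ∀ b ∈ matrixBox n L, ∀ x,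
      F x ≤ ε + F (x <• lowerUnipotent j (gridPoint (M * L) b))) :
    gridAverage j p F (normalizedScaling n j p) ≤
      ε + M ^ (n * n) * gridAverage j (p * (M * L)) F (normalizedScaling n j p) := by
  set G : Matrix (Fin n) (Fin n) ℤ → ℝ := fun B =>
    F (XSpace.mk (lowerUnipotent j (gridPoint (p * (M * L)) B) * normalizedScaling n j p))
  have hfine (B b : Matrix (Fin n) (Fin n) ℤ) :
      F (XSpace.mk (lowerUnipotent j (gridPoint p B) * normalizedScaling n j p) <•
        lowerUnipotent j (gridPoint (M * L) b)) = G (((M * L : ℕ) : ℤ) • B + b) := by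
    rw [XSpace.mk_rightSMul, mul_assoc, normalizedScaling_mul_lowerUnipotent hp, ← mul_assoc,
      lowerUnipotent_mul, gridPoint_add_smul_gridPoint (Nat.mul_pos hM hL)]
  calc gridAverage j p F (normalizedScaling n j p)
      ≤ 𝔼 B ∈ matrixBox n p, 𝔼 b ∈ matrixBox n L, (ε + G (((M * L : ℕ) : ℤ) • B + b)) :=
        Finset.expect_le_expect fun B _ => Finset.le_expect (matrixBox_nonempty n hL) fun b hb =>
          hfine B b ▸ hF b hb _
    _ = ε + 𝔼 B ∈ matrixBox n p, 𝔼 b ∈ matrixBox n L, G (((M * L : ℕ) : ℤ) • B + b) := by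
        simp only [Finset.expect_add_distrib, Finset.expect_const (matrixBox_nonempty n hL),
          Finset.expect_const (matrixBox_nonempty n hp)]
    _ ≤ ε + M ^ (n * n) * gridAverage j (p * (M * L)) F (normalizedScaling n j p) := by
        gcongr
        exact expect_matrixBox_expect_matrixBox_le hp hL hM fun B => hF0 _

lemma gridAverage_birkhoffAverage_normalizedScaling {H : ℕ} (hp : 1 ≤ p) (hH : 1 ≤ H)
    (f : XSpace n → ℝ) (z : Matrix (Fin n) (Fin n) ℤ) :
    gridAverage j p (birkhoffAverage ℝ
      (fun x => x <• lowerUnipotent j (z.map (Int.cast : ℤ → ℝ))) f H)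
      (normalizedScaling n j p) = gridAverage j p f (normalizedScaling n j p) := by
  have hgrid (h : ℕ) : (p : ℝ)⁻¹ • h • z.map (Int.cast : ℤ → ℝ) = gridPoint p (h • z) := by
    ext i k
    rw [gridPoint_apply, Matrix.smul_apply, Matrix.smul_apply, Matrix.smul_apply, Matrix.map_apply,
      nsmul_eq_mul, nsmul_eq_mul, Int.cast_mul, Int.cast_natCast, smul_eq_mul, inv_mul_eq_div]
  simp only [gridAverage_birkhoffAverage, normalizedScaling_mul_lowerUnipotent hp, hgrid,
    gridAverage_lowerUnipotent_mul hp]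
  exact Finset.expect_const (Finset.nonempty_range_iff.2 (by lia)) _

lemma abs_gridAverage_sub_le_gridAverage_abs_birkhoffAverage_sub {H : ℕ} (hp : 1 ≤ p) (hH : 1 ≤ H)
    (f : XSpace n → ℝ) (z : Matrix (Fin n) (Fin n) ℤ) (c : ℝ) :
    |gridAverage j p f (normalizedScaling n j p) - c| ≤ gridAverage j p (fun x => |birkhoffAverage ℝ
      (fun x => x <• lowerUnipotent j (z.map (Int.cast : ℤ → ℝ))) f H x - c|)
      (normalizedScaling n j p) := by
  rw [← gridAverage_birkhoffAverage_normalizedScaling hp hH f z]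
  exact abs_expect_sub_le_expect_abs_sub (matrixBox_nonempty n hp) c

lemma exists_forall_abs_rightSMul_lowerUnipotent_gridPoint_sub_le (j : ℕ) {f : XSpace n → ℝ}
    (hf : BddRightUnifCont SL(n, ℝ) f) {ε : ℝ} (hε : 0 < ε) :
    ∃ M ≥ 1, ∀ L, ∀ b ∈ matrixBox n L, ∀ x,
      |f (x <• lowerUnipotent j (gridPoint (M * L) b)) - f x| ≤ ε := by
  obtain ⟨δ, hδ, hδf⟩ := exists_forall_abs_sub_one_le_mem (hf.eventually_abs_sub_le hε)
  obtain ⟨M, hM⟩ := exists_nat_one_div_lt hδ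
  refine ⟨M + 1, Nat.le_add_left 1 M, fun L b hb => hδf _ fun i k => ?_⟩
  have hscale : gridPoint ((M + 1) * L) b i k = 1 / (M + 1 : ℝ) * gridPoint L b i k := by
    rw [gridPoint_apply, gridPoint_apply]
    push_cast
    rw [div_mul_div_comm, one_mul]
  obtain ⟨h0, h1⟩ := gridPoint_mem_Icc hb i k
  refine (abs_lowerUnipotent_sub_one_le j _ i k).trans ?_
  rw [hscale, abs_of_nonneg (by positivity)]
  exact (mul_le_of_le_one_right (by positivity) h1).trans hM.le

lemma le_add_abs_birkhoffAverage_rightSMul_sub {f : XSpace n → ℝ} {s t : Matrix (Fin n) (Fin n) ℝ}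
    {H : ℕ} (hH : 1 ≤ H) {ε : ℝ} (ht : ∀ x, |f (x <• lowerUnipotent j t) - f x| ≤ ε) (c : ℝ)
    (x : XSpace n) :
    |birkhoffAverage ℝ (fun x => x <• lowerUnipotent j s) f H x - c| ≤ ε +
      |birkhoffAverage ℝ (fun x => x <• lowerUnipotent j s) f H (x <• lowerUnipotent j t) - c| := by
  have hcomm : Commute (lowerUnipotent j s) (lowerUnipotent j t) := by
    rw [Commute, SemiconjBy, lowerUnipotent_mul, lowerUnipotent_mul, add_comm]
  have hclose := abs_birkhoffAverage_rightSMul_sub_le hcomm hH ht x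
  rw [abs_sub_comm] at hclose
  exact (abs_sub_le _ _ c).trans (by gcongr)

variable {μ : Measure (XSpace n)} [IsProbabilityMeasure μ]
  [SMulInvariantMeasure SL(n, ℝ)ᵐᵒᵖ (XSpace n) μ]

/-- The coarse grid is invariant under the discrete unipotent flow, so `f` may be replaced by a
Birkhoff average, whose mean distance to `∫ f` is controlled by the average over a finer grid. -/
theorem tendsto_gridAverage_normalizedScaling {f : XSpace n → ℝ}
    (hf : BddRightUnifCont SL(n, ℝ) f) {k l : Fin n} (hl : (l : ℕ) < j) (hk : j ≤ (k : ℕ)) :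
    Tendsto (fun p => gridAverage j p f (normalizedScaling n j p)) atTop (𝓝 (∫ x, f x ∂μ)) := by
  refine Metric.tendsto_nhds.2 fun ε hε => ?_
  set c := ∫ x, f x ∂μ
  set z : Matrix (Fin n) (Fin n) ℤ := single k l 1
  set u : SL(n, ℝ) := lowerUnipotent j (z.map (Int.cast : ℤ → ℝ)) with hu
  have hsingle : u = lowerUnipotent j (single k l 1) := by
    rw [hu, show z.map (Int.cast : ℤ → ℝ) = single k l ((1 : ℤ) : ℝ) from
      map_single k l 1 (Int.castAddHom ℝ), Int.cast_one]
  obtain ⟨M, hM, hMf⟩ :=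
    exists_forall_abs_rightSMul_lowerUnipotent_gridPoint_sub_le j hf (ε := ε / 4) (by positivity)
  obtain ⟨H, hH, hH1⟩ : ∃ H, (M : ℝ) ^ (n * n) *
      ∫ x, |birkhoffAverage ℝ (fun x => x <• u) f H x - c| ∂μ < ε / 4 ∧ 1 ≤ H := by
    have hlim := (tendsto_integral_abs_birkhoffAverage_sub (μ := μ) hf (hsingle ▸
      eq_top_of_mautnerClosed_of_lowerUnipotent_single_mem hl hk)).const_mul ((M : ℝ) ^ (n * n))
    rw [mul_zero] at hlim
    exact ((hlim.eventually_lt_const (by positivity)).and (eventually_ge_atTop 1)).exists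
  set F : XSpace n → ℝ := fun x => |birkhoffAverage ℝ (fun x => x <• u) f H x - c|
  have hF : BddRightUnifCont SL(n, ℝ) F := ((hf.birkhoffAverage _ H).sub (.const c)).abs
  obtain ⟨L, hL, hfine⟩ := exists_forall_abs_gridAverage_mul_sub_le (μ := μ) hF hl hk
    (ε := ε / (4 * (M : ℝ) ^ (n * n))) (by positivity)
  filter_upwards [hfine, eventually_ge_atTop 1] with p hfinep hp
  have hcoarse := abs_gridAverage_sub_le_gridAverage_abs_birkhoffAverage_sub (j := j) hp hH1 f z c
  have hrefine := gridAverage_le_add_mul_gridAverage hp hL hM (fun x => abs_nonneg _) fun b hb =>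
    le_add_abs_birkhoffAverage_rightSMul_sub hH1 (s := z.map (Int.cast : ℤ → ℝ)) (hMf L b hb) c
  have herror : (M : ℝ) ^ (n * n) * gridAverage j (p * (M * L)) F (normalizedScaling n j p) ≤
      (M : ℝ) ^ (n * n) * ∫ x, F x ∂μ + ε / 4 := by
    have hle := (abs_le.1 (hfinep _ (Nat.le_mul_of_pos_left L hM))).2
    rw [sub_le_iff_le_add'] at hle
    calc _ ≤ (M : ℝ) ^ (n * n) * (∫ x, F x ∂μ + ε / (4 * (M : ℝ) ^ (n * n))) := by gcongr
      _ = _ := by field_simp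
  rw [Real.dist_eq]
  linarith

end CoarseGrid

/-! ### Lattices of positive bases -/

/-- The subgroup of row vectors `x` with `x P ∈ H`. -/
def vecMulComap {R : Type*} [CommRing R] {n : ℕ} (P : Matrix (Fin n) (Fin n) R)
    (H : AddSubgroup (Fin n → R)) : AddSubgroup (Fin n → R) :=
  H.comap P.vecMulLinear.toAddMonoidHom

section PositiveBasis

variable {n : ℕ} {L L' : AddSubgroup (Fin n → ℤ)} {M M' Q : Matrix (Fin n) (Fin n) ℤ}

/-- The rows of `M` form a positively oriented basis of the lattice `L`. -/
structure IsPositiveBasis (L : AddSubgroup (Fin n → ℤ)) (M : Matrix (Fin n) (Fin n) ℤ) : Prop where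
  det_pos : 0 < M.det
  mem_iff : ∀ x, x ∈ L ↔ ∃ v, v ᵥ* M = x

lemma exists_natAbs_det_eq_index (L : AddSubgroup (Fin n → ℤ)) [L.FiniteIndex] :
    ∃ M : Matrix (Fin n) (Fin n) ℤ, M.det.natAbs = L.index ∧ ∀ x, x ∈ L ↔ ∃ v, v ᵥ* M = x := by
  have hrank : Module.finrank ℤ L = n := by
    rw [AddSubgroup.finrank_eq_of_finiteIndex, Module.finrank_fin_fun]
  have : Module.Free ℤ L := inferInstanceAs (Module.Free ℤ (AddSubgroup.toIntSubmodule L))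
  have : Module.Finite ℤ L := inferInstanceAs (Module.Finite ℤ (AddSubgroup.toIntSubmodule L))
  let b : Module.Basis (Fin n) ℤ L := Module.finBasisOfFinrankEq ℤ L hrank
  let M : Matrix (Fin n) (Fin n) ℤ := Matrix.of fun i => (b i : Fin n → ℤ)
  have hM (v : Fin n → ℤ) : v ᵥ* M = ((∑ i, v i • b i : L) : Fin n → ℤ) := by
    rw [Matrix.vecMul_eq_sum, AddSubgroup.val_finsetSum]
    rfl
  refine ⟨M, ?_, fun x => ⟨fun hx => ⟨b.repr ⟨x, hx⟩, by rw [hM, b.sum_repr]⟩, ?_⟩⟩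
  · rw [AddSubgroup.index_eq_natAbs_det (Pi.basisFun ℤ (Fin n)) _ b, Module.Basis.det_apply,
      ← Matrix.det_transpose]
    rfl
  · rintro ⟨v, rfl⟩
    rw [hM]
    exact SetLike.coe_mem _

lemma exists_isPositiveBasis (L : AddSubgroup (Fin n → ℤ)) [L.FiniteIndex] :
    ∃ M, IsPositiveBasis L M ∧ M.det = L.index := by
  obtain ⟨M, hdet, hmem⟩ := exists_natAbs_det_eq_index L
  have hindex : 0 < L.index := Nat.pos_of_ne_zero AddSubgroup.FiniteIndex.index_ne_zero
  rcases Int.natAbs_eq M.det with hpos | hneg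
  · exact ⟨M, ⟨by lia, hmem⟩, by lia⟩
  cases n with
  | zero =>
    rw [det_isEmpty] at hneg
    lia
  | succ n =>
    let R : Matrix (Fin (n + 1)) (Fin (n + 1)) ℤ := diagonal (Function.update 1 0 (-1))
    have hRR : R * R = 1 := by
      rw [diagonal_mul_diagonal, ← diagonal_one]
      congr 1
      ext i
      by_cases hi : i = 0 <;> simp [hi]
    have hR : R.det = -1 := by
      rw [det_diagonal, Finset.prod_update_of_mem (Finset.mem_univ _)]
      simp
    have hRM : (R * M).det = L.index := by rw [det_mul, hR]; lia
    refine ⟨R * M, ⟨by lia, fun x => (hmem x).trans ⟨?_, ?_⟩⟩, hRM⟩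
    · rintro ⟨v, rfl⟩
      exact ⟨v ᵥ* R, by rw [vecMul_vecMul, ← mul_assoc, hRR, one_mul]⟩
    · rintro ⟨v, rfl⟩
      exact ⟨v ᵥ* R, by rw [vecMul_vecMul]⟩

namespace IsPositiveBasis

lemma exists_eq_mul (hM : IsPositiveBasis L M) (hM' : IsPositiveBasis L M') :
    ∃ Q : Matrix (Fin n) (Fin n) ℤ, M' = Q * M := by
  have hrow (i : Fin n) : ∃ v, v ᵥ* M = M' i :=
    (hM.mem_iff _).1 ((hM'.mem_iff _).2 ⟨Pi.single i 1, single_one_vecMul i M'⟩)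
  choose Q hQ using hrow
  exact ⟨Matrix.of Q, by ext i k; exact (congrFun (hQ i) k).symm⟩

lemma exists_eq_mul_det_eq_one (hM : IsPositiveBasis L M) (hM' : IsPositiveBasis L M') :
    ∃ Q : Matrix (Fin n) (Fin n) ℤ, Q.det = 1 ∧ M' = Q * M := by
  obtain ⟨Q, hQ⟩ := hM.exists_eq_mul hM'
  obtain ⟨Q', hQ'⟩ := hM'.exists_eq_mul hM
  have hdetQ : 0 < Q.det := by
    have hpos := hM'.det_pos
    rw [hQ, det_mul] at hpos
    exact (pos_iff_pos_of_mul_pos hpos).2 hM.det_pos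
  have hmul : Q.det * Q'.det = 1 := by
    have hdet : Q.det * Q'.det * M'.det = 1 * M'.det := by
      rw [one_mul, mul_assoc, ← det_mul, ← hQ', ← det_mul, ← hQ]
    exact mul_right_cancel₀ hM'.det_pos.ne' hdet
  exact ⟨Q, Int.eq_one_of_mul_eq_one_right hdetQ.le hmul, hQ⟩

lemma mul (hM : IsPositiveBasis (vecMulComap Q L) M)
    (hQ : IsPositiveBasis L' Q) : IsPositiveBasis (L ⊓ L') (M * Q) := by
  refine ⟨by rw [det_mul]; exact mul_pos hM.det_pos hQ.det_pos, fun x => ⟨?_, ?_⟩⟩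
  · rintro ⟨hx, hx'⟩
    obtain ⟨v, rfl⟩ := (hQ.mem_iff x).1 hx'
    obtain ⟨w, rfl⟩ := (hM.mem_iff v).1 hx
    exact ⟨w, (vecMul_vecMul w M Q).symm⟩
  · rintro ⟨v, rfl⟩
    rw [← vecMul_vecMul]
    exact ⟨(hM.mem_iff _).2 ⟨v, rfl⟩, (hQ.mem_iff _).2 ⟨_, rfl⟩⟩

end IsPositiveBasis

lemma isPositiveBasis_top (hQ : Q.det = 1) : IsPositiveBasis ⊤ Q :=
  ⟨hQ ▸ one_pos, fun x => ⟨fun _ => ⟨x ᵥ* Q.adjugate, by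
    rw [vecMul_vecMul, adjugate_mul, hQ, one_smul, vecMul_one]⟩, fun _ => AddSubgroup.mem_top x⟩⟩

/-- The element of `SL_n(ℝ)` proportional to an integer matrix of positive determinant. -/
def intDetNormalize (M : Matrix (Fin n) (Fin n) ℤ) : SL(n, ℝ) :=
  detNormalize (M.map (Int.cast : ℤ → ℝ))

lemma det_map_intCast_pos (hM : 0 < M.det) : 0 < (M.map (Int.cast : ℤ → ℝ)).det := by
  rw [← Int.cast_det]
  exact_mod_cast hM

lemma coe_intDetNormalize (hM : 0 < M.det) : (intDetNormalize M : Matrix (Fin n) (Fin n) ℝ) =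
    ((M.det : ℝ) ^ (-(1 / n : ℝ))) • M.map (Int.cast : ℤ → ℝ) := by
  rw [intDetNormalize, coe_detNormalize (det_map_intCast_pos hM), ← Int.cast_det]

lemma intDetNormalize_mul (hM : 0 < M.det) (hQ : 0 < Q.det) :
    intDetNormalize (M * Q) = intDetNormalize M * intDetNormalize Q := by
  rw [intDetNormalize, intDetNormalize, intDetNormalize,
    ← detNormalize_mul (det_map_intCast_pos hM) (det_map_intCast_pos hQ)]
  exact congrArg detNormalize (Matrix.map_mul (f := Int.castRingHom ℝ))

lemma intDetNormalize_eq_map (Q : SL(n, ℤ)) : intDetNormalize (Q : Matrix (Fin n) (Fin n) ℤ) =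
    Matrix.SpecialLinearGroup.map (Int.castRingHom ℝ) Q :=
  detNormalize_coe (Matrix.SpecialLinearGroup.map (Int.castRingHom ℝ) Q)

lemma intDetNormalize_mem_Gamma (hQ : Q.det = 1) : intDetNormalize Q ∈ Gamma n :=
  ⟨⟨Q, hQ⟩, (intDetNormalize_eq_map ⟨Q, hQ⟩).symm⟩

lemma exists_intDetNormalize_eq_of_mem_Gamma {γ : SL(n, ℝ)} (hγ : γ ∈ Gamma n) :
    ∃ Q : Matrix (Fin n) (Fin n) ℤ, Q.det = 1 ∧ intDetNormalize Q = γ := by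
  obtain ⟨Q, rfl⟩ := hγ
  exact ⟨Q, Q.2, intDetNormalize_eq_map Q⟩

open Classical in
/-- The point of `SL_n(ℤ)\SL_n(ℝ)` corresponding to the lattice `L g`, scaled to covolume one; it is
computed from an arbitrary positive basis of `L`, or from `1` when there is none. -/
def latticePoint (L : AddSubgroup (Fin n → ℤ)) (g : SL(n, ℝ)) : XSpace n :=
  XSpace.mk (intDetNormalize (if h : ∃ M, IsPositiveBasis L M then h.choose else 1) * g)

lemma IsPositiveBasis.latticePoint_eq (hM : IsPositiveBasis L M) (g : SL(n, ℝ)) :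
    latticePoint L g = XSpace.mk (intDetNormalize M * g) := by
  have h : ∃ M, IsPositiveBasis L M := ⟨M, hM⟩
  obtain ⟨Q, hQ, hchoose⟩ := hM.exists_eq_mul_det_eq_one h.choose_spec
  rw [latticePoint, dif_pos h, hchoose, intDetNormalize_mul (hQ ▸ one_pos) hM.det_pos, mul_assoc,
    XSpace.mk_mul_of_mem (intDetNormalize_mem_Gamma hQ)]

lemma latticePoint_rightSMul (L : AddSubgroup (Fin n → ℤ)) (g h : SL(n, ℝ)) :
    latticePoint L g <• h = latticePoint L (g * h) := by
  rw [latticePoint, latticePoint, XSpace.mk_rightSMul, mul_assoc]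

lemma IsPositiveBasis.latticePoint_inf [(vecMulComap Q L).FiniteIndex]
    (hQ : IsPositiveBasis L' Q) (g : SL(n, ℝ)) : latticePoint (L ⊓ L') g =
    latticePoint (vecMulComap Q L) (intDetNormalize Q * g) := by
  obtain ⟨M, hM, -⟩ := exists_isPositiveBasis (vecMulComap Q L)
  rw [(hM.mul hQ).latticePoint_eq, hM.latticePoint_eq, intDetNormalize_mul hM.det_pos hQ.det_pos,
    mul_assoc]

end PositiveBasis

/-! ### Congruence subgroups and Hecke operators -/

section SystemKernel

variable {R : Type*} [CommRing R] {n j : ℕ}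

/-- The group of solutions of the linear system `A x = 0`. -/
def systemKernel (A : Matrix (Fin j) (Fin n) R) : AddSubgroup (Fin n → R) :=
  A.mulVecLin.toAddMonoidHom.ker

lemma mem_systemKernel {A : Matrix (Fin j) (Fin n) R} {x : Fin n → R} :
    x ∈ systemKernel A ↔ A *ᵥ x = 0 := Iff.rfl

lemma mem_vecMulComap {P : Matrix (Fin n) (Fin n) R} {H : AddSubgroup (Fin n → R)} {x : Fin n → R} :
    x ∈ vecMulComap P H ↔ x ᵥ* P ∈ H := Iff.rfl

lemma vecMulComap_systemKernel (P : Matrix (Fin n) (Fin n) R) (A : Matrix (Fin j) (Fin n) R) :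
    vecMulComap P (systemKernel A) = systemKernel (A * Pᵀ) := by
  ext x
  rw [mem_vecMulComap, mem_systemKernel, mem_systemKernel, ← mulVec_mulVec, mulVec_transpose]

lemma vecMulComap_vecMulComap_of_mul_eq_one {P Q : Matrix (Fin n) (Fin n) R} (h : P * Q = 1)
    (H : AddSubgroup (Fin n → R)) : vecMulComap P (vecMulComap Q H) = H := by
  ext x
  rw [mem_vecMulComap, mem_vecMulComap, vecMul_vecMul, h, vecMul_one]

lemma surjective_mulVec_mul_of_isUnit_det {A : Matrix (Fin j) (Fin n) R}
    (hA : Function.Surjective A.mulVec) {P : Matrix (Fin n) (Fin n) R} (hP : IsUnit P.det) :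
    Function.Surjective (A * P).mulVec := fun y => by
  obtain ⟨x, hx⟩ := hA y
  refine ⟨P⁻¹ *ᵥ x, ?_⟩
  rw [mulVec_mulVec, Matrix.mul_assoc, mul_nonsing_inv P hP, Matrix.mul_one, hx]

end SystemKernel

section CongruenceSet

variable {N n j : ℕ} {H : AddSubgroup (Fin n → ZMod N)}

lemma mem_congruenceSet_iff : H ∈ congruenceSet N n j ↔
    ∃ A : Matrix (Fin j) (Fin n) (ZMod N), Function.Surjective A.mulVec ∧ systemKernel A = H := by
  constructor
  · rintro ⟨A, hA, hH⟩
    exact ⟨A, hA, SetLike.coe_injective hH.symm⟩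
  · rintro ⟨A, hA, rfl⟩
    exact ⟨A, hA, rfl⟩

lemma index_of_mem_congruenceSet (hH : H ∈ congruenceSet N n j) : H.index = N ^ j := by
  obtain ⟨A, hA, rfl⟩ := mem_congruenceSet_iff.1 hH
  have hA' : A.mulVecLin.toAddMonoidHom.range = ⊤ := AddMonoidHom.range_eq_top.2 hA
  rw [systemKernel, AddSubgroup.index_ker, hA', AddSubgroup.card_top, Nat.card_fun, Nat.card_zmod,
    Nat.card_fin]

lemma vecMulComap_mem_congruenceSet {P : Matrix (Fin n) (Fin n) (ZMod N)} (hP : IsUnit P.det)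
    (hH : H ∈ congruenceSet N n j) : vecMulComap P H ∈ congruenceSet N n j := by
  obtain ⟨A, hA, rfl⟩ := mem_congruenceSet_iff.1 hH
  rw [vecMulComap_systemKernel]
  exact mem_congruenceSet_iff.2
    ⟨A * Pᵀ, surjective_mulVec_mul_of_isUnit_det hA (by rwa [det_transpose]), rfl⟩

open Classical in
/-- The set `H_{N,j}(n)` as a finset; it is empty when `N = 0` and `H_{0,j}(n)` is infinite. -/
def congruenceFinset (N n j : ℕ) : Finset (AddSubgroup (Fin n → ZMod N)) :=
  if h : (congruenceSet N n j).Finite then h.toFinset else ∅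

lemma mem_congruenceFinset [NeZero N] : H ∈ congruenceFinset N n j ↔ H ∈ congruenceSet N n j := by
  rw [congruenceFinset, dif_pos (Set.toFinite _), Set.Finite.mem_toFinset]

lemma congruenceFinset_nonempty [NeZero N] (hj : j ≤ n) : (congruenceFinset N n j).Nonempty := by
  let A : Matrix (Fin j) (Fin n) (ZMod N) := (1 : Matrix _ _ _).submatrix (Fin.castLE hj) id
  refine ⟨systemKernel A, mem_congruenceFinset.2 (mem_congruenceSet_iff.2 ⟨A, fun y => ?_, rfl⟩)⟩
  refine ⟨fun i => if h : (i : ℕ) < j then y ⟨i, h⟩ else 0, ?_⟩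
  ext l
  have hsum (x : Fin n → ZMod N) : (A *ᵥ x) l = x (Fin.castLE hj l) := by
    simp [A, mulVec, dotProduct, one_apply]
  rw [hsum]
  exact dif_pos l.isLt

lemma expect_vecMulComap [NeZero N] {P : Matrix (Fin n) (Fin n) (ZMod N)} (hP : IsUnit P.det)
    (F : AddSubgroup (Fin n → ZMod N) → ℝ) :
    𝔼 H ∈ congruenceFinset N n j, F (vecMulComap P H) = 𝔼 H ∈ congruenceFinset N n j, F H := by
  have hP' : IsUnit P⁻¹.det := isUnit_nonsing_inv_det P hP
  refine Finset.expect_nbij' (vecMulComap P) (vecMulComap P⁻¹) ?_ ?_ ?_ ?_ fun _ _ => rfl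
  · exact fun H hH => mem_congruenceFinset.2
      (vecMulComap_mem_congruenceSet hP (mem_congruenceFinset.1 hH))
  · exact fun H hH => mem_congruenceFinset.2
      (vecMulComap_mem_congruenceSet hP' (mem_congruenceFinset.1 hH))
  · exact fun H _ => vecMulComap_vecMulComap_of_mul_eq_one (nonsing_inv_mul P hP) H
  · exact fun H _ => vecMulComap_vecMulComap_of_mul_eq_one (mul_nonsing_inv P hP) H

/-- The lattice of integer vectors whose reduction modulo `N` lies in `H`. -/
def integralLift (H : AddSubgroup (Fin n → ZMod N)) : AddSubgroup (Fin n → ℤ) :=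
  H.comap ((Int.castRingHom (ZMod N)).toAddMonoidHom.compLeft (Fin n))

lemma mem_integralLift {x : Fin n → ℤ} :
    x ∈ integralLift H ↔ (fun i => (x i : ZMod N)) ∈ H := Iff.rfl

lemma index_integralLift (H : AddSubgroup (Fin n → ZMod N)) :
    (integralLift H).index = H.index :=
  AddSubgroup.index_comap_of_surjective H
    (Function.Surjective.comp_left (ZMod.intCast_surjective (n := N)))

instance [NeZero N] (H : AddSubgroup (Fin n → ZMod N)) : (integralLift H).FiniteIndex :=
  ⟨by rw [index_integralLift]; exact AddSubgroup.FiniteIndex.index_ne_zero⟩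

lemma integralLift_vecMulComap (Q : Matrix (Fin n) (Fin n) ℤ) (H : AddSubgroup (Fin n → ZMod N)) :
    integralLift (vecMulComap (Q.map (Int.cast : ℤ → ZMod N)) H) =
      vecMulComap Q (integralLift H) := by
  ext x
  rw [mem_integralLift, mem_vecMulComap, mem_vecMulComap, mem_integralLift]
  have hreduce := RingHom.map_vecMul (Int.castRingHom (ZMod N)) Q x
  exact Iff.of_eq (congrArg (· ∈ H) (funext hreduce).symm)

lemma isUnit_det_map_intCast {Q : Matrix (Fin n) (Fin n) ℤ} (hQ : IsUnit (Q.det : ZMod N)) :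
    IsUnit (Q.map (Int.cast : ℤ → ZMod N)).det := by
  rwa [← Int.cast_det]

end CongruenceSet

section HeckeOperator

variable {N n j : ℕ} {f : XSpace n → ℝ}

/-- The Hecke operator averaging `f` over the sublattices `integralLift H` of the lattice `x`, for
`H` in `H_{N,j}(n)`. -/
def heckeOperator (j N : ℕ) (f : XSpace n → ℝ) (x : XSpace n) : ℝ :=
  𝔼 H ∈ congruenceFinset N n j, f (latticePoint (integralLift H) (XSpace.mk_surjective x).choose)

/-- Multiplying by a matrix invertible modulo `N` permutes the congruence subgroups. -/
lemma expect_latticePoint_intDetNormalize_mul [NeZero N] {L : AddSubgroup (Fin n → ℤ)}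
    {Q : Matrix (Fin n) (Fin n) ℤ} (hQ : IsPositiveBasis L Q) (hu : IsUnit (Q.det : ZMod N))
    (f : XSpace n → ℝ) (g : SL(n, ℝ)) :
    𝔼 H ∈ congruenceFinset N n j, f (latticePoint (integralLift H) (intDetNormalize Q * g)) =
      𝔼 H ∈ congruenceFinset N n j, f (latticePoint (integralLift H ⊓ L) g) := by
  rw [← expect_vecMulComap (isUnit_det_map_intCast hu)]
  refine Finset.expect_congr rfl fun H _ => ?_
  have : (vecMulComap Q (integralLift H)).FiniteIndex := by
    rw [← integralLift_vecMulComap]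
    infer_instance
  rw [integralLift_vecMulComap, hQ.latticePoint_inf]

lemma expect_latticePoint_congr [NeZero N] {g g' : SL(n, ℝ)} (h : XSpace.mk g = XSpace.mk g')
    (f : XSpace n → ℝ) :
    𝔼 H ∈ congruenceFinset N n j, f (latticePoint (integralLift H) g) =
      𝔼 H ∈ congruenceFinset N n j, f (latticePoint (integralLift H) g') := by
  obtain ⟨Q, hQ, hγ⟩ := exists_intDetNormalize_eq_of_mem_Gamma (XSpace.mk_eq_mk_iff.1 h)
  have hu : IsUnit (Q.det : ZMod N) := by rw [hQ, Int.cast_one]; exact isUnit_one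
  have hg' : g' = intDetNormalize Q * g := by rw [hγ, inv_mul_cancel_right]
  rw [hg', expect_latticePoint_intDetNormalize_mul (isPositiveBasis_top hQ) hu]
  simp only [inf_top_eq]

lemma heckeOperator_mk [NeZero N] (j : ℕ) (f : XSpace n → ℝ) (g : SL(n, ℝ)) :
    heckeOperator j N f (XSpace.mk g) =
      𝔼 H ∈ congruenceFinset N n j, f (latticePoint (integralLift H) g) :=
  expect_latticePoint_congr (XSpace.mk_surjective (XSpace.mk g)).choose_spec f

lemma heckeOperator_rightSMul [NeZero N] (f : XSpace n → ℝ) (x : XSpace n) (h : SL(n, ℝ)) :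
    heckeOperator j N f (x <• h) = heckeOperator j N (fun y => f (y <• h)) x := by
  obtain ⟨g, rfl⟩ := XSpace.mk_surjective x
  simp only [XSpace.mk_rightSMul, heckeOperator_mk, latticePoint_rightSMul]

lemma abs_heckeOperator_le [NeZero N] (hj : j ≤ n) {C : ℝ} (hC : ∀ x, |f x| ≤ C) (x : XSpace n) :
    |heckeOperator j N f x| ≤ C :=
  (Finset.abs_expect_le _ _).trans (Finset.expect_le (congruenceFinset_nonempty hj) fun _ _ => hC _)

lemma BddRightUnifCont.heckeOperator [NeZero N] (hf : BddRightUnifCont SL(n, ℝ) f) (hj : j ≤ n) :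
    BddRightUnifCont SL(n, ℝ) (heckeOperator j N f) := by
  have huniform : TendstoUniformly (fun (g : SL(n, ℝ)) x => _root_.heckeOperator j N f (x <• g))
      (_root_.heckeOperator j N f) (𝓝 1) := by
    refine Metric.tendstoUniformly_iff.2 fun ε hε => ?_
    filter_upwards [hf.eventually_abs_sub_le (half_pos hε)] with g hg x
    rw [dist_comm, Real.dist_eq, heckeOperator_rightSMul]
    exact (abs_expect_sub_expect_le (congruenceFinset_nonempty hj) fun H _ => hg _).trans_lt
      (half_lt_self hε)
  obtain ⟨C, hC⟩ := hf.bdd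
  exact
    { bdd := ⟨C, abs_heckeOperator_le hj hC⟩
      continuous := continuous_of_tendstoUniformly_rightSMul XSpace.isOpenMap_rightSMul huniform
      uniform := huniform }

end HeckeOperator

section Glue

variable {R S T : Type*} [CommRing R] [CommRing S] [CommRing T] {φ : R →+* S} {ψ : R →+* T}
  {n j : ℕ}

/-- The subgroup of vectors whose reductions by `φ` and `ψ` lie in `H` and `K`. For the two
projections of the Chinese remainder isomorphism it combines congruence conditions with coprime
moduli. -/
def glueSubgroup (φ : R →+* S) (ψ : R →+* T) (H : AddSubgroup (Fin n → S))
    (K : AddSubgroup (Fin n → T)) : AddSubgroup (Fin n → R) :=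
  H.comap (φ.toAddMonoidHom.compLeft (Fin n)) ⊓ K.comap (ψ.toAddMonoidHom.compLeft (Fin n))

lemma mem_glueSubgroup {H : AddSubgroup (Fin n → S)} {K : AddSubgroup (Fin n → T)} {x : Fin n → R} :
    x ∈ glueSubgroup φ ψ H K ↔ φ ∘ x ∈ H ∧ ψ ∘ x ∈ K := Iff.rfl

lemma exists_comp_eq_and_comp_eq {ι : Type*} (h : Function.Surjective (φ.prod ψ)) (x : ι → S)
    (y : ι → T) : ∃ z : ι → R, φ ∘ z = x ∧ ψ ∘ z = y := by
  choose z hz using fun i => h (x i, y i)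
  exact ⟨z, funext fun i => congrArg Prod.fst (hz i), funext fun i => congrArg Prod.snd (hz i)⟩

lemma eq_of_comp_eq_of_comp_eq {ι : Type*} (h : Function.Injective (φ.prod ψ)) {x y : ι → R}
    (hφ : φ ∘ x = φ ∘ y) (hψ : ψ ∘ x = ψ ∘ y) : x = y :=
  funext fun i => h (Prod.ext (congrFun hφ i) (congrFun hψ i))

lemma comp_mulVec (φ : R →+* S) (A : Matrix (Fin j) (Fin n) R) (x : Fin n → R) :
    φ ∘ (A *ᵥ x) = A.map φ *ᵥ (φ ∘ x) :=
  funext (RingHom.map_mulVec φ A x)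

lemma glueSubgroup_systemKernel (h : Function.Injective (φ.prod ψ))
    (A : Matrix (Fin j) (Fin n) R) :
    glueSubgroup φ ψ (systemKernel (A.map φ)) (systemKernel (A.map ψ)) = systemKernel A := by
  ext x
  rw [mem_glueSubgroup, mem_systemKernel, mem_systemKernel, mem_systemKernel, ← comp_mulVec,
    ← comp_mulVec]
  have hφ : φ ∘ (0 : Fin j → R) = 0 := funext fun _ => map_zero φ
  have hψ : ψ ∘ (0 : Fin j → R) = 0 := funext fun _ => map_zero ψ
  refine ⟨fun hx => eq_of_comp_eq_of_comp_eq h (hx.1.trans hφ.symm) (hx.2.trans hψ.symm), ?_⟩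
  rintro hx
  rw [hx]
  exact ⟨hφ, hψ⟩

lemma glueSubgroup_le_glueSubgroup_iff (h : Function.Surjective (φ.prod ψ))
    {H H' : AddSubgroup (Fin n → S)} {K K' : AddSubgroup (Fin n → T)} :
    glueSubgroup φ ψ H K ≤ glueSubgroup φ ψ H' K' ↔ H ≤ H' ∧ K ≤ K' := by
  refine ⟨fun hle => ⟨fun x hx => ?_, fun y hy => ?_⟩, fun hle x hx => ⟨hle.1 hx.1, hle.2 hx.2⟩⟩
  · obtain ⟨z, hz, hz'⟩ := exists_comp_eq_and_comp_eq h x 0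
    have hmem := hle (mem_glueSubgroup.2 ⟨hz ▸ hx, hz' ▸ zero_mem K⟩)
    exact hz ▸ hmem.1
  · obtain ⟨z, hz, hz'⟩ := exists_comp_eq_and_comp_eq h 0 y
    have hmem := hle (mem_glueSubgroup.2 ⟨hz ▸ zero_mem H, hz' ▸ hy⟩)
    exact hz' ▸ hmem.2

lemma surjective_mulVec_map (hφ : Function.Surjective φ) {A : Matrix (Fin j) (Fin n) R}
    (hA : Function.Surjective A.mulVec) : Function.Surjective (A.map φ).mulVec := fun y => by
  obtain ⟨z, rfl⟩ := hφ.comp_left y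
  obtain ⟨x, rfl⟩ := hA z
  exact ⟨φ ∘ x, (comp_mulVec φ A x).symm⟩

lemma surjective_mulVec_of_map_map (h : Function.Bijective (φ.prod ψ))
    {A : Matrix (Fin j) (Fin n) R} (hφ : Function.Surjective (A.map φ).mulVec)
    (hψ : Function.Surjective (A.map ψ).mulVec) : Function.Surjective A.mulVec := fun y => by
  obtain ⟨u, hu⟩ := hφ (φ ∘ y)
  obtain ⟨v, hv⟩ := hψ (ψ ∘ y)
  obtain ⟨x, rfl, rfl⟩ := exists_comp_eq_and_comp_eq h.2 u v
  exact ⟨x, eq_of_comp_eq_of_comp_eq h.1 (by rw [comp_mulVec, hu]) (by rw [comp_mulVec, hv])⟩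

end Glue

section ChineseRemainder

variable {a b n j : ℕ} {φ : ZMod (a * b) →+* ZMod a} {ψ : ZMod (a * b) →+* ZMod b}

lemma integralLift_glueSubgroup (φ : ZMod (a * b) →+* ZMod a) (ψ : ZMod (a * b) →+* ZMod b)
    (H : AddSubgroup (Fin n → ZMod a)) (K : AddSubgroup (Fin n → ZMod b)) :
    integralLift (glueSubgroup φ ψ H K) = integralLift H ⊓ integralLift K := by
  ext x
  rw [mem_integralLift, mem_glueSubgroup, AddSubgroup.mem_inf, mem_integralLift, mem_integralLift]
  simp only [Function.comp_def, map_intCast]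

lemma glueSubgroup_mem_congruenceSet (h : Function.Bijective (φ.prod ψ))
    {H : AddSubgroup (Fin n → ZMod a)} {K : AddSubgroup (Fin n → ZMod b)}
    (hH : H ∈ congruenceSet a n j) (hK : K ∈ congruenceSet b n j) :
    glueSubgroup φ ψ H K ∈ congruenceSet (a * b) n j := by
  obtain ⟨A, hA, rfl⟩ := mem_congruenceSet_iff.1 hH
  obtain ⟨B, hB, rfl⟩ := mem_congruenceSet_iff.1 hK
  obtain ⟨C, hCA, hCB⟩ := exists_comp_eq_and_comp_eq h.2 (fun q : Fin j × Fin n => A q.1 q.2)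
    fun q => B q.1 q.2
  let C' : Matrix (Fin j) (Fin n) (ZMod (a * b)) := Matrix.of fun l i => C (l, i)
  obtain rfl : C'.map φ = A := by ext l i; exact congrFun hCA (l, i)
  obtain rfl : C'.map ψ = B := by ext l i; exact congrFun hCB (l, i)
  exact mem_congruenceSet_iff.2
    ⟨C', surjective_mulVec_of_map_map h hA hB, (glueSubgroup_systemKernel h.1 C').symm⟩

lemma exists_glueSubgroup_eq (h : Function.Injective (φ.prod ψ))
    {H : AddSubgroup (Fin n → ZMod (a * b))} (hH : H ∈ congruenceSet (a * b) n j) :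
    ∃ K ∈ congruenceSet a n j, ∃ K' ∈ congruenceSet b n j, glueSubgroup φ ψ K K' = H := by
  obtain ⟨A, hA, rfl⟩ := mem_congruenceSet_iff.1 hH
  exact ⟨_, mem_congruenceSet_iff.2 ⟨_, surjective_mulVec_map (ZMod.ringHom_surjective φ) hA, rfl⟩,
    _, mem_congruenceSet_iff.2 ⟨_, surjective_mulVec_map (ZMod.ringHom_surjective ψ) hA, rfl⟩,
    glueSubgroup_systemKernel h A⟩

lemma expect_congruenceFinset_mul [NeZero a] [NeZero b] (h : Function.Bijective (φ.prod ψ))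
    (F : AddSubgroup (Fin n → ZMod (a * b)) → ℝ) :
    𝔼 H ∈ congruenceFinset (a * b) n j, F H =
      𝔼 K ∈ congruenceFinset b n j, 𝔼 H ∈ congruenceFinset a n j, F (glueSubgroup φ ψ H K) := by
  rw [← Finset.expect_product' (f := fun K H => F (glueSubgroup φ ψ H K))]
  symm
  refine Finset.expect_nbij (fun q => glueSubgroup φ ψ q.2 q.1) ?_ (fun _ _ => rfl) ?_ ?_
  · rintro ⟨K, H⟩ hq
    rw [Finset.mem_product, mem_congruenceFinset, mem_congruenceFinset] at hq
    exact mem_congruenceFinset.2 (glueSubgroup_mem_congruenceSet h hq.2 hq.1)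
  · rintro ⟨K, H⟩ - ⟨K', H'⟩ - heq
    have hle := (glueSubgroup_le_glueSubgroup_iff h.2).1 (le_of_eq heq)
    have hge := (glueSubgroup_le_glueSubgroup_iff h.2).1 (ge_of_eq heq)
    exact Prod.ext (le_antisymm hle.2 hge.2) (le_antisymm hle.1 hge.1)
  · intro H hH
    obtain ⟨K, hK, K', hK', rfl⟩ :=
      exists_glueSubgroup_eq h.1 (mem_congruenceFinset.1 (Finset.mem_coe.1 hH))
    exact ⟨(K', K), Finset.mem_coe.2 (Finset.mem_product.2
      ⟨mem_congruenceFinset.2 hK', mem_congruenceFinset.2 hK⟩), rfl⟩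

lemma heckeOperator_mul_of_coprime [NeZero a] [NeZero b] (hab : a.Coprime b) (f : XSpace n → ℝ) :
    heckeOperator j (a * b) f = heckeOperator j b (heckeOperator j a f) := by
  ext x
  obtain ⟨g, rfl⟩ := XSpace.mk_surjective x
  let e : ZMod (a * b) ≃+* ZMod a × ZMod b := ZMod.chineseRemainder hab
  have he : Function.Bijective (((RingHom.fst _ _).comp e.toRingHom).prod
    ((RingHom.snd _ _).comp e.toRingHom)) := e.bijective
  rw [heckeOperator_mk, heckeOperator_mk, expect_congruenceFinset_mul he]
  refine Finset.expect_congr rfl fun K hK => ?_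
  obtain ⟨Q, hQ, hdet⟩ := exists_isPositiveBasis (integralLift K)
  have hu : IsUnit (Q.det : ZMod a) := by
    rw [hdet, index_integralLift, index_of_mem_congruenceSet (mem_congruenceFinset.1 hK)]
    exact_mod_cast ((ZMod.isUnit_iff_coprime b a).2 hab.symm).pow j
  rw [hQ.latticePoint_eq, heckeOperator_mk, expect_latticePoint_intDetNormalize_mul hQ hu]
  simp only [integralLift_glueSubgroup]

end ChineseRemainder

/-! ### Graph subgroups modulo primes -/

section GraphSubgroup

variable {R : Type*} [CommRing R] {n j k : ℕ}

/-- The vectors whose `j` leading coordinates vanish. -/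
def trailingSubgroup (R : Type*) [CommRing R] (n j : ℕ) : AddSubgroup (Fin n → R) :=
  AddSubgroup.pi {i : Fin n | (i : ℕ) < j} fun _ => ⊥

lemma mem_trailingSubgroup {x : Fin n → R} :
    x ∈ trailingSubgroup R n j ↔ ∀ i : Fin n, (i : ℕ) < j → x i = 0 := Iff.rfl

/-- The vectors whose `j` leading coordinates are the linear functions of the trailing ones given by
the lower left block of `-s`. -/
def graphSubgroup (j : ℕ) (s : Matrix (Fin n) (Fin n) R) : AddSubgroup (Fin n → R) :=
  vecMulComap (lowerUnipotent j s : Matrix (Fin n) (Fin n) R) (trailingSubgroup R n j)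

lemma systemKernel_mul_of_isUnit_det {U : Matrix (Fin j) (Fin j) R} (hU : IsUnit U.det)
    (A : Matrix (Fin j) (Fin n) R) : systemKernel (U * A) = systemKernel A := by
  ext x
  rw [mem_systemKernel, mem_systemKernel, ← mulVec_mulVec]
  have hinj := mulVec_injective_of_isUnit ((isUnit_iff_isUnit_det U).2 hU)
  exact ⟨fun h => hinj (h.trans (mulVec_zero U).symm), fun h => by rw [h, mulVec_zero]⟩

lemma exists_systemKernel_eq_graphSubgroup_of_leading_eq_one {A : Matrix (Fin j) (Fin (j + k)) R}
    (hA : A.submatrix id (Fin.castAdd k) = 1) :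
    ∃ s, systemKernel A = graphSubgroup j s := by
  let s : Matrix (Fin (j + k)) (Fin (j + k)) R :=
    Matrix.of fun i l => if h : (l : ℕ) < j then A ⟨l, h⟩ i else 0
  have hcol (i : Fin (j + k)) (l : Fin j) :
      (lowerUnipotent j s : Matrix _ _ R) i (Fin.castAdd k l) = A l i := by
    rw [coe_lowerUnipotent, Matrix.add_apply, lowerLeftBlock_apply]
    refine Fin.addCases (fun l' => ?_) (fun i' => ?_) i
    · have hentry := congrFun (congrFun hA l) l'
      rw [submatrix_apply, id, one_apply] at hentry
      rw [if_neg (by simp), add_zero, one_apply, hentry]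
      simp only [Fin.castAdd_inj, eq_comm]
    · rw [one_apply_ne (by simp [Fin.ext_iff]; lia), zero_add]
      simp [s]
  refine ⟨s, ?_⟩
  ext x
  have hmulVec (l : Fin j) : (x ᵥ* (lowerUnipotent j s : Matrix _ _ R)) (Fin.castAdd k l) =
      (A *ᵥ x) l := by
    simp only [vecMul, mulVec, dotProduct, hcol, mul_comm]
  rw [mem_systemKernel, graphSubgroup, mem_vecMulComap, mem_trailingSubgroup, funext_iff]
  refine ⟨fun h i hi => (hmulVec ⟨i, hi⟩).trans (h ⟨i, hi⟩), fun h l => ?_⟩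
  rw [← hmulVec]
  exact h _ l.isLt

lemma exists_systemKernel_eq_graphSubgroup {A : Matrix (Fin j) (Fin (j + k)) R}
    (hA : IsUnit (A.submatrix id (Fin.castAdd k)).det) :
    ∃ s, systemKernel A = graphSubgroup j s := by
  set U := A.submatrix id (Fin.castAdd k)
  have hlead : (U⁻¹ * A).submatrix id (Fin.castAdd k) = 1 := nonsing_inv_mul U hA
  obtain ⟨s, hs⟩ := exists_systemKernel_eq_graphSubgroup_of_leading_eq_one hlead
  exact ⟨s, by rw [← hs, systemKernel_mul_of_isUnit_det (isUnit_nonsing_inv_det U hA)]⟩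

end GraphSubgroup

section GraphLattice

variable {n j p : ℕ}

lemma isPositiveBasis_trailingSubgroup (hp : 1 ≤ p) :
    IsPositiveBasis (integralLift (trailingSubgroup (ZMod p) n j)) (blockScaling ℤ n j p) := by
  refine ⟨det_blockScaling_pos n j hp, fun x => ?_⟩
  have hvecMul (v : Fin n → ℤ) (i : Fin n) :
      (v ᵥ* blockScaling ℤ n j p) i = v i * if (i : ℕ) < j then (p : ℤ) else 1 :=
    vecMul_diagonal _ _ i
  simp only [mem_integralLift, mem_trailingSubgroup, ZMod.intCast_zmod_eq_zero_iff_dvd]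
  constructor
  · intro hx
    refine ⟨fun i => if (i : ℕ) < j then x i / p else x i, ?_⟩
    ext i
    rw [hvecMul]
    split_ifs with hi
    · exact Int.ediv_mul_cancel (hx i hi)
    · exact mul_one _
  · rintro ⟨v, rfl⟩ i hi
    rw [hvecMul, if_pos hi]
    exact dvd_mul_left _ _

lemma intDetNormalize_blockScaling (n j p : ℕ) :
    intDetNormalize (blockScaling ℤ n j p) = normalizedScaling n j p := by
  rw [intDetNormalize, normalizedScaling, blockScaling, blockScaling, diagonal_map Int.cast_zero]
  congr 2
  ext i
  simp only [apply_ite (Int.cast : ℤ → ℝ), Int.cast_natCast, Int.cast_one]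

lemma latticePoint_vecMulComap {L : AddSubgroup (Fin n → ℤ)} {Q : SL(n, ℤ)}
    [(vecMulComap (Q : Matrix (Fin n) (Fin n) ℤ) L).FiniteIndex] (g : SL(n, ℝ)) :
    latticePoint (vecMulComap (Q : Matrix (Fin n) (Fin n) ℤ) L) g =
      latticePoint L ((Matrix.SpecialLinearGroup.map (Int.castRingHom ℝ) Q)⁻¹ * g) := by
  have hinf := (isPositiveBasis_top Q.2).latticePoint_inf (L := L)
    ((Matrix.SpecialLinearGroup.map (Int.castRingHom ℝ) Q)⁻¹ * g)
  rw [inf_top_eq, intDetNormalize_eq_map, mul_inv_cancel_left] at hinf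
  exact hinf.symm

lemma integralLift_graphSubgroup (z : Matrix (Fin n) (Fin n) ℤ) :
    integralLift (graphSubgroup j (z.map (Int.cast : ℤ → ZMod p))) =
      vecMulComap (lowerUnipotent j z : Matrix (Fin n) (Fin n) ℤ)
        (integralLift (trailingSubgroup (ZMod p) n j)) := by
  rw [← integralLift_vecMulComap, graphSubgroup]
  congr 2
  exact congrArg Subtype.val (map_lowerUnipotent (Int.castRingHom (ZMod p)) j z).symm

lemma latticePoint_graphSubgroup [NeZero p] (z : Matrix (Fin n) (Fin n) ℤ) (g : SL(n, ℝ)) :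
    latticePoint (integralLift (graphSubgroup j (z.map (Int.cast : ℤ → ZMod p)))) g =
      XSpace.mk (normalizedScaling n j p * lowerUnipotent j ((-z).map (Int.cast : ℤ → ℝ)) * g) := by
  have : (vecMulComap (lowerUnipotent j z : Matrix (Fin n) (Fin n) ℤ)
      (integralLift (trailingSubgroup (ZMod p) n j))).FiniteIndex := by
    rw [← integralLift_graphSubgroup]
    infer_instance
  rw [integralLift_graphSubgroup, latticePoint_vecMulComap,
    (isPositiveBasis_trailingSubgroup NeZero.one_le).latticePoint_eq, intDetNormalize_blockScaling,
    ← map_inv, lowerUnipotent_inv, map_lowerUnipotent, mul_assoc]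
  rfl

lemma expect_latticePoint_graphSubgroup [NeZero p] (s : Matrix (Fin n) (Fin n) (ZMod p))
    (f : XSpace n → ℝ) :
    𝔼 B ∈ matrixBox n p, f (latticePoint (integralLift (graphSubgroup j s))
      (lowerUnipotent j (B.map (Int.cast : ℤ → ℝ)))) =
      gridAverage j p f (normalizedScaling n j p) := by
  have hp : 1 ≤ p := NeZero.one_le
  obtain ⟨z, rfl⟩ : ∃ z : Matrix (Fin n) (Fin n) ℤ, z.map (Int.cast : ℤ → ZMod p) = s := by
    choose z hz using fun i k => ZMod.intCast_surjective (s i k)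
    exact ⟨Matrix.of z, by ext i k; exact hz i k⟩
  rw [← gridAverage_lowerUnipotent_mul hp f (-z), gridAverage]
  refine Finset.expect_congr rfl fun B _ => ?_
  rw [latticePoint_graphSubgroup, mul_assoc, lowerUnipotent_mul,
    normalizedScaling_mul_lowerUnipotent hp, ← mul_assoc, lowerUnipotent_mul, smul_add, add_comm]
  rfl

end GraphLattice

section SingularMatrices

variable (j p : ℕ)

lemma card_matrix_zmod (j k p : ℕ) : Nat.card (Matrix (Fin j) (Fin k) (ZMod p)) = p ^ (j * k) := by
  simp [Matrix, Nat.card_fun, pow_mul, pow_right_comm]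

lemma card_singular_add_card_GL (p : ℕ) [NeZero p] :
    Nat.card {V : Matrix (Fin j) (Fin j) (ZMod p) // ¬ IsUnit V.det} +
      Nat.card (GL (Fin j) (ZMod p)) = p ^ (j * j) := by
  let e : GL (Fin j) (ZMod p) ≃ {V : Matrix (Fin j) (Fin j) (ZMod p) // IsUnit V.det} :=
    Equiv.ofBijective (fun U => ⟨U.1, (isUnit_iff_isUnit_det U.1).1 U.isUnit⟩)
      ⟨fun _ _ h => Units.ext (congrArg Subtype.val h), fun V => by
        obtain ⟨U, hU⟩ := (isUnit_iff_isUnit_det V.1).2 V.2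
        exact ⟨U, Subtype.ext hU⟩⟩
  rw [Nat.card_congr e, add_comm, ← Nat.card_sum, ← card_matrix_zmod]
  classical
  exact Nat.card_congr (Equiv.sumCompl fun V : Matrix (Fin j) (Fin j) (ZMod p) => IsUnit V.det)

/-- For `p` prime, the number of singular `j × j` matrices modulo `p` divided by the order of
`GL (Fin j) (ZMod p)`. -/
def singularRatio : ℝ :=
  (p : ℝ) ^ (j * j) / ∏ i : Fin j, ((p : ℝ) ^ j - (p : ℝ) ^ (i : ℕ)) - 1

lemma card_GL_zmod [hp : Fact p.Prime] :
    (Nat.card (GL (Fin j) (ZMod p)) : ℝ) = ∏ i : Fin j, ((p : ℝ) ^ j - (p : ℝ) ^ (i : ℕ)) := by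
  rw [card_GL_field, Nat.cast_prod]
  refine Finset.prod_congr rfl fun i _ => ?_
  rw [ZMod.card, Nat.cast_sub (Nat.pow_le_pow_right hp.out.pos i.2.le), Nat.cast_pow, Nat.cast_pow]

lemma card_singular_eq [Fact p.Prime] :
    (Nat.card {V : Matrix (Fin j) (Fin j) (ZMod p) // ¬ IsUnit V.det} : ℝ) =
      singularRatio j p * Nat.card (GL (Fin j) (ZMod p)) := by
  have hsum : (_ : ℝ) = _ := congrArg (Nat.cast (R := ℝ)) (card_singular_add_card_GL j p)
  have hne : (Nat.card (GL (Fin j) (ZMod p)) : ℝ) ≠ 0 := Nat.cast_ne_zero.2 Nat.card_pos.ne'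
  rw [singularRatio, ← card_GL_zmod, sub_mul, div_mul_cancel₀ _ hne, one_mul, eq_sub_iff_add_eq]
  exact_mod_cast hsum

lemma prod_pow_sub_pow {x : ℝ} (hx : x ≠ 0) :
    ∏ i : Fin j, (x ^ j - x ^ (i : ℕ)) = x ^ (j * j) * ∏ i : Fin j, (1 - x ^ (i : ℕ) / x ^ j) := by
  calc ∏ i : Fin j, (x ^ j - x ^ (i : ℕ))
      = ∏ i : Fin j, x ^ j * (1 - x ^ (i : ℕ) / x ^ j) :=
        Finset.prod_congr rfl fun i _ => by field_simp
    _ = x ^ (j * j) * ∏ i : Fin j, (1 - x ^ (i : ℕ) / x ^ j) := by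
        rw [Finset.prod_mul_distrib, Finset.prod_const, Finset.card_univ, Fintype.card_fin, pow_mul]

lemma tendsto_singularRatio : Tendsto (singularRatio j) atTop (𝓝 0) := by
  have hprod : Tendsto (fun p : ℕ => ∏ i : Fin j, (1 - (p : ℝ) ^ (i : ℕ) / (p : ℝ) ^ j)) atTop
      (𝓝 (∏ _ : Fin j, (1 - 0))) :=
    tendsto_finsetProd _ fun i _ => tendsto_const_nhds.sub
      ((tendsto_pow_div_pow_atTop_zero i.2).comp tendsto_natCast_atTop_atTop)
  rw [sub_zero, Finset.prod_const_one] at hprod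
  have hinv := (hprod.inv₀ one_ne_zero).sub_const 1
  rw [inv_one, sub_self] at hinv
  refine hinv.congr' ?_
  filter_upwards [eventually_ne_atTop 0] with p hp
  have hp : (p : ℝ) ≠ 0 := Nat.cast_ne_zero.2 hp
  rw [singularRatio, prod_pow_sub_pow j hp, div_mul_eq_div_div, div_self (pow_ne_zero _ hp),
    one_div]

end SingularMatrices

section NongraphSubgroups

variable {n j k N p : ℕ}

open Classical in
/-- The congruence subgroups which are not graphs over the trailing `k` coordinates. -/
def nongraphFinset (j k p : ℕ) : Finset (AddSubgroup (Fin (j + k) → ZMod p)) :=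
  (congruenceFinset p (j + k) j).filter fun H => H ∉ Set.range (graphSubgroup j)

lemma mem_nongraphFinset {H : AddSubgroup (Fin (j + k) → ZMod p)} : H ∈ nongraphFinset j k p ↔
    H ∈ congruenceFinset p (j + k) j ∧ H ∉ Set.range (graphSubgroup j) := by
  simp only [nongraphFinset, Finset.mem_filter]

lemma eq_of_mul_eq_mul_of_surjective_mulVec {R : Type*} [CommRing R] {A : Matrix (Fin j) (Fin n) R}
    (hA : Function.Surjective A.mulVec) {U V : Matrix (Fin j) (Fin j) R} (h : U * A = V * A) :
    U = V := by
  refine mulVec_injective (funext fun y => ?_)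
  obtain ⟨x, rfl⟩ := hA y
  rw [mulVec_mulVec, mulVec_mulVec, h]

lemma exists_singular_of_mem_nongraphFinset [NeZero p] {H : AddSubgroup (Fin (j + k) → ZMod p)}
    (hH : H ∈ nongraphFinset j k p) :
    ∃ A : Matrix (Fin j) (Fin (j + k)) (ZMod p), Function.Surjective A.mulVec ∧
      systemKernel A = H ∧ ¬ IsUnit (A.submatrix id (Fin.castAdd k)).det := by
  obtain ⟨hmem, hgraph⟩ := mem_nongraphFinset.1 hH
  obtain ⟨A, hsurj, rfl⟩ := mem_congruenceSet_iff.1 (mem_congruenceFinset.1 hmem)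
  refine ⟨A, hsurj, rfl, fun hunit => ?_⟩
  obtain ⟨s, hs⟩ := exists_systemKernel_eq_graphSubgroup hunit
  exact hgraph ⟨s, hs.symm⟩

/-- The matrices `U * A`, for `A` a system defining `H` and `U` invertible, are pairwise distinct
and have singular leading block. -/
lemma card_nongraphFinset_mul_le (j k p : ℕ) [NeZero p] :
    (nongraphFinset j k p).card * Nat.card (GL (Fin j) (ZMod p)) ≤
      Nat.card {V : Matrix (Fin j) (Fin j) (ZMod p) // ¬ IsUnit V.det} * p ^ (j * k) := by
  choose A hsurj hker hsing using fun H : nongraphFinset j k p =>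
    exists_singular_of_mem_nongraphFinset H.2
  have hsing' (U : GL (Fin j) (ZMod p)) (H : nongraphFinset j k p) :
      ¬ IsUnit ((U.1 * A H).submatrix id (Fin.castAdd k)).det := fun h =>
    hsing H (isUnit_of_mul_isUnit_right ((det_mul U.1 _).symm ▸ h))
  rw [← card_matrix_zmod j k p, ← Nat.card_eq_finsetCard, ← Nat.card_prod, ← Nat.card_prod]
  refine Nat.card_le_card_of_injective (fun q : nongraphFinset j k p × GL (Fin j) (ZMod p) =>
    (⟨(q.2.1 * A q.1).submatrix id (Fin.castAdd k), hsing' q.2 q.1⟩,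
      (q.2.1 * A q.1).submatrix id (Fin.natAdd j))) ?_
  rintro ⟨H, U⟩ ⟨H', U'⟩ h
  obtain ⟨hlead, htrail⟩ := Prod.mk.inj h
  have heq : U.1 * A H = U'.1 * A H' := by
    ext l i
    induction i using Fin.addCases with
    | left i => exact congrFun (congrFun (congrArg Subtype.val hlead) l) i
    | right i => exact congrFun (congrFun htrail l) i
  have hdet (U : GL (Fin j) (ZMod p)) : IsUnit U.1.det := (isUnit_iff_isUnit_det U.1).1 U.isUnit
  have hH : H = H' := Subtype.ext <| by
    rw [← hker H, ← hker H', ← systemKernel_mul_of_isUnit_det (hdet U), heq,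
      systemKernel_mul_of_isUnit_det (hdet U')]
  subst hH
  rw [Units.ext (eq_of_mul_eq_mul_of_surjective_mulVec (hsurj H) heq)]

/-- The matrix with leading block `1` and trailing block `C`. -/
def oneAppend (C : Matrix (Fin j) (Fin k) (ZMod p)) : Matrix (Fin j) (Fin (j + k)) (ZMod p) :=
  Matrix.of fun l => Fin.append (fun i => (1 : Matrix (Fin j) (Fin j) (ZMod p)) l i) (C l)

lemma oneAppend_mulVec_append (C : Matrix (Fin j) (Fin k) (ZMod p)) (u : Fin j → ZMod p)
    (v : Fin k → ZMod p) : oneAppend C *ᵥ Fin.append u v = u + C *ᵥ v := by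
  ext l
  simp [oneAppend, mulVec, dotProduct, Fin.sum_univ_add, one_apply]

lemma systemKernel_oneAppend_injective :
    Function.Injective fun C : Matrix (Fin j) (Fin k) (ZMod p) => systemKernel (oneAppend C) := by
  intro C C' h
  refine mulVec_injective (funext fun v => ?_)
  have hmem : Fin.append (-(C *ᵥ v)) v ∈ systemKernel (oneAppend C) := by
    rw [mem_systemKernel, oneAppend_mulVec_append, neg_add_cancel]
  rw [show systemKernel (oneAppend C) = systemKernel (oneAppend C') from h, mem_systemKernel,
    oneAppend_mulVec_append] at hmem
  exact neg_add_eq_zero.1 hmem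

lemma pow_le_card_congruenceFinset (j k p : ℕ) [NeZero p] :
    p ^ (j * k) ≤ (congruenceFinset p (j + k) j).card := by
  have hmem (C : Matrix (Fin j) (Fin k) (ZMod p)) :
      systemKernel (oneAppend C) ∈ congruenceFinset p (j + k) j :=
    mem_congruenceFinset.2 <| mem_congruenceSet_iff.2
      ⟨oneAppend C, fun y => ⟨Fin.append y 0, by simp [oneAppend_mulVec_append]⟩, rfl⟩
  rw [← card_matrix_zmod, ← Nat.card_eq_finsetCard]
  exact Nat.card_le_card_of_injective (fun C => ⟨_, hmem C⟩) fun _ _ h =>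
    systemKernel_oneAppend_injective (congrArg Subtype.val h)

lemma card_nongraphFinset_le (j k p : ℕ) [hp : Fact p.Prime] :
    ((nongraphFinset j k p).card : ℝ) ≤
      singularRatio j p * (congruenceFinset p (j + k) j).card := by
  have hGL : (0 : ℝ) < Nat.card (GL (Fin j) (ZMod p)) := Nat.cast_pos.2 Nat.card_pos
  refine le_of_mul_le_mul_right ?_ hGL
  calc ((nongraphFinset j k p).card : ℝ) * Nat.card (GL (Fin j) (ZMod p))
      ≤ Nat.card {V : Matrix (Fin j) (Fin j) (ZMod p) // ¬ IsUnit V.det} * (p ^ (j * k) : ℕ) := by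
        exact_mod_cast card_nongraphFinset_mul_le j k p
    _ ≤ Nat.card {V : Matrix (Fin j) (Fin j) (ZMod p) // ¬ IsUnit V.det} *
          (congruenceFinset p (j + k) j).card := by
        gcongr
        exact pow_le_card_congruenceFinset j k p
    _ = singularRatio j p * (congruenceFinset p (j + k) j).card *
          Nat.card (GL (Fin j) (ZMod p)) := by
        rw [card_singular_eq]
        ring

variable {f : XSpace (j + k) → ℝ} {C : ℝ}

lemma expect_expect_latticePoint_lowerUnipotent [NeZero p] (f : XSpace n → ℝ) :
    𝔼 H ∈ congruenceFinset p n j, 𝔼 B ∈ matrixBox n p, f (latticePoint (integralLift H)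
      (lowerUnipotent j (B.map (Int.cast : ℤ → ℝ)))) = heckeOperator j p f (XSpace.mk 1) := by
  rw [Finset.expect_comm, ← Finset.expect_const (matrixBox_nonempty n (NeZero.one_le : 1 ≤ p))
    (heckeOperator j p f (XSpace.mk 1))]
  refine Finset.expect_congr rfl fun B _ => ?_
  rw [heckeOperator_mk]
  refine expect_latticePoint_congr ?_ f
  rw [← XSpace.mk_mul_of_mem (lowerUnipotent_intCast_mem_Gamma j B) 1, mul_one]

lemma abs_heckeOperator_sub_gridAverage_le [hp : Fact p.Prime] (hC : ∀ x, |f x| ≤ C) :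
    |heckeOperator j p f (XSpace.mk 1) - gridAverage j p f (normalizedScaling (j + k) j p)| ≤
      2 * C * singularRatio j p := by
  classical
  have hcongr := congruenceFinset_nonempty (N := p) (Nat.le_add_right j k)
  have hcard : (0 : ℝ) < (congruenceFinset p (j + k) j).card := Nat.cast_pos.2 hcongr.card_pos
  have hbox := matrixBox_nonempty (j + k) hp.out.one_le
  have hC₀ : 0 ≤ C := (abs_nonneg _).trans (hC (XSpace.mk 1))
  set P := gridAverage j p f (normalizedScaling (j + k) j p)
  have hP : |P| ≤ C := (Finset.abs_expect_le _ _).trans (Finset.expect_le hbox fun _ _ => hC _)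
  have hterm (H) (hH : H ∈ congruenceFinset p (j + k) j) :
      |𝔼 B ∈ matrixBox (j + k) p, f (latticePoint (integralLift H)
        (lowerUnipotent j (B.map (Int.cast : ℤ → ℝ)))) - P| ≤
      if H ∈ nongraphFinset j k p then 2 * C else 0 := by
    split_ifs with hnongraph
    · refine (abs_sub _ _).trans ?_
      rw [two_mul]
      exact add_le_add ((Finset.abs_expect_le _ _).trans (Finset.expect_le hbox fun _ _ => hC _)) hP
    · obtain ⟨s, rfl⟩ := not_not.1 fun h => hnongraph (mem_nongraphFinset.2 ⟨hH, h⟩)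
      rw [expect_latticePoint_graphSubgroup, sub_self, abs_zero]
  rw [← expect_expect_latticePoint_lowerUnipotent]
  refine (abs_expect_sub_le_expect_abs_sub hcongr P).trans ?_
  refine (Finset.expect_le_expect hterm).trans ?_
  rw [Finset.expect_eq_sum_div_card, Finset.sum_ite_mem,
    Finset.inter_eq_right.2 fun H hH => (mem_nongraphFinset.1 hH).1, Finset.sum_const,
    nsmul_eq_mul, div_le_iff₀ hcard, mul_comm, mul_assoc (2 * C)]
  exact mul_le_mul_of_nonneg_left (card_nongraphFinset_le j k p) (by positivity)

end NongraphSubgroups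

/-! ### Equidistribution of Hecke orbits -/

section HeckeEquidistribution

variable {n j : ℕ} {μ : Measure (XSpace n)} [IsProbabilityMeasure μ]
  [SMulInvariantMeasure SL(n, ℝ)ᵐᵒᵖ (XSpace n) μ] {f : XSpace n → ℝ}

/-- The neighbourhoods of infinity in the set of primes. -/
def primesAtTop : Filter ℕ := atTop ⊓ 𝓟 {p | p.Prime}

instance : primesAtTop.NeBot :=
  frequently_mem_iff_neBot.1 (Nat.frequently_atTop_iff_infinite.2 Nat.infinite_setOfPred_prime)

instance : primesAtTop.IsCountablyGenerated := by
  unfold primesAtTop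
  infer_instance

lemma primesAtTop_le_atTop : primesAtTop ≤ atTop := inf_le_left

lemma eventually_prime_primesAtTop : ∀ᶠ p in primesAtTop, p.Prime :=
  eventually_inf_principal.2 (Eventually.of_forall fun _ hp => hp)

lemma tendsto_heckeOperator_mk_one_primesAtTop (hj : 1 ≤ j) (hjn : j < n)
    (hf : BddRightUnifCont SL(n, ℝ) f) :
    Tendsto (fun p => heckeOperator j p f (XSpace.mk 1)) primesAtTop (𝓝 (∫ x, f x ∂μ)) := by
  obtain ⟨C, hC⟩ := hf.bdd
  have hgrid := tendsto_gridAverage_normalizedScaling (μ := μ) hf (j := j) (k := ⟨n - 1, by lia⟩)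
    (l := ⟨0, by lia⟩) hj (Nat.le_sub_one_of_lt hjn)
  obtain ⟨k, rfl⟩ := Nat.exists_eq_add_of_le hjn.le
  have hbound := (tendsto_singularRatio j).const_mul (2 * C)
  rw [mul_zero] at hbound
  have hsub : Tendsto (fun p => heckeOperator j p f (XSpace.mk 1) -
      gridAverage j p f (normalizedScaling (j + k) j p)) primesAtTop (𝓝 0) := by
    refine squeeze_zero_norm' ?_ (hbound.mono_left primesAtTop_le_atTop)
    filter_upwards [eventually_prime_primesAtTop] with p hp
    have : Fact p.Prime := ⟨hp⟩
    exact abs_heckeOperator_sub_gridAverage_le hC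
  simpa only [sub_add_cancel, zero_add] using hsub.add (hgrid.mono_left primesAtTop_le_atTop)

lemma tendsto_heckeOperator_primesAtTop (hj : 1 ≤ j) (hjn : j < n)
    (hf : BddRightUnifCont SL(n, ℝ) f) (x : XSpace n) :
    Tendsto (fun p => heckeOperator j p f x) primesAtTop (𝓝 (∫ x, f x ∂μ)) := by
  obtain ⟨g, rfl⟩ := XSpace.mk_surjective x
  have hlim := tendsto_heckeOperator_mk_one_primesAtTop (μ := μ) hj hjn (hf.translate g)
  rw [integral_smul_eq_self f (g := MulOpposite.op g)] at hlim
  refine hlim.congr' ?_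
  filter_upwards [eventually_prime_primesAtTop] with p hp
  have : NeZero p := ⟨hp.ne_zero⟩
  rw [← heckeOperator_rightSMul, XSpace.mk_rightSMul, one_mul]

lemma tendsto_integral_abs_heckeOperator_sub (hj : 1 ≤ j) (hjn : j < n)
    (hf : BddRightUnifCont SL(n, ℝ) f) :
    Tendsto (fun p => ∫ x, |heckeOperator j p f x - ∫ y, f y ∂μ| ∂μ) primesAtTop (𝓝 0) := by
  obtain ⟨C, hC⟩ := hf.bdd
  set c := ∫ y, f y ∂μ with hc
  have hdom := tendsto_integral_filter_of_dominated_convergence (μ := μ) (l := primesAtTop)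
    (F := fun p x => |heckeOperator j p f x - c|) (f := fun _ => 0) (fun _ => C + |c|) ?_ ?_
    (integrable_const _) ?_
  · simpa only [integral_zero] using hdom
  · filter_upwards [eventually_prime_primesAtTop] with p hp
    have : NeZero p := ⟨hp.ne_zero⟩
    exact ((hf.heckeOperator hjn.le).sub (.const c)).abs.continuous.aestronglyMeasurable
  · filter_upwards [eventually_prime_primesAtTop] with p hp
    have : NeZero p := ⟨hp.ne_zero⟩
    refine Eventually.of_forall fun x => ?_
    rw [Real.norm_eq_abs, abs_abs]
    exact (abs_sub _ _).trans (add_le_add_left (abs_heckeOperator_le hjn.le hC x) _)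
  · refine Eventually.of_forall fun x => ?_
    have hlim := ((tendsto_heckeOperator_primesAtTop (μ := μ) hj hjn hf x).sub_const c).abs
    rwa [← hc, sub_self, abs_zero] at hlim

lemma tendsto_expect {ι κ : Type*} {s : Finset ι} (hs : s.Nonempty) {l : Filter κ} {F : κ → ι → ℝ}
    {c : ℝ} (h : ∀ i ∈ s, Tendsto (F · i) l (𝓝 c)) :
    Tendsto (fun a => 𝔼 i ∈ s, F a i) l (𝓝 c) := by
  rw [← Finset.expect_const hs c]
  simp only [Finset.expect_eq_sum_div_card]
  exact (tendsto_finsetSum s h).div_const _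

/-- Both sides are the limit, as `p → ∞`, of the average of `f` over the Hecke orbit of level
`p * M` at the base point. -/
lemma integral_heckeOperator (hj : 1 ≤ j) (hjn : j < n) (hf : BddRightUnifCont SL(n, ℝ) f)
    (M : ℕ) [NeZero M] : ∫ x, heckeOperator j M f x ∂μ = ∫ x, f x ∂μ := by
  have hleft := tendsto_heckeOperator_mk_one_primesAtTop (μ := μ) hj hjn
    (hf.heckeOperator (N := M) hjn.le)
  have hright : Tendsto (fun p => heckeOperator j M (heckeOperator j p f) (XSpace.mk 1))
      primesAtTop (𝓝 (∫ x, f x ∂μ)) := by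
    refine tendsto_expect (congruenceFinset_nonempty hjn.le) fun H _ => ?_
    exact tendsto_heckeOperator_primesAtTop hj hjn hf _
  refine tendsto_nhds_unique hleft (hright.congr' ?_)
  filter_upwards [eventually_prime_primesAtTop,
    primesAtTop_le_atTop (eventually_gt_atTop M)] with p hp hMp
  have : NeZero p := ⟨hp.ne_zero⟩
  have hcop : p.Coprime M := Nat.coprime_of_lt_prime (NeZero.ne M) hMp hp
  rw [← heckeOperator_mul_of_coprime hcop, mul_comm, heckeOperator_mul_of_coprime hcop.symm]

lemma eventually_exists_prime_dvd_of_squarefree (P : ℕ) :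
    ∀ᶠ N : ℕ in atTop, Squarefree N → ∃ p, p.Prime ∧ P ≤ p ∧ p ∣ N := by
  filter_upwards [eventually_gt_atTop (∏ q ∈ Finset.range P with q.Prime, q)] with N hN hsq
  by_contra! hsmall
  refine hN.not_ge ?_
  rw [← Nat.prod_primeFactors_of_squarefree hsq]
  refine Finset.prod_le_prod_of_subset_of_one_le' (fun p hp => ?_)
    fun q hq _ => (Finset.mem_filter.1 hq).2.one_le
  have hprime := Nat.prime_of_mem_primeFactors hp
  refine Finset.mem_filter.2 ⟨Finset.mem_range.2 (lt_of_not_ge fun hle => ?_), hprime⟩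
  exact hsmall p hprime hle (Nat.dvd_of_mem_primeFactors hp)

lemma abs_heckeOperator_mul_sub_le {p M : ℕ} [NeZero p] [NeZero M] (hcop : p.Coprime M)
    (hjn : j ≤ n) (f : XSpace n → ℝ) (c : ℝ) (x : XSpace n) :
    |heckeOperator j (p * M) f x - c| ≤
      heckeOperator j M (fun y => |heckeOperator j p f y - c|) x := by
  rw [heckeOperator_mul_of_coprime hcop]
  exact abs_expect_sub_le_expect_abs_sub (congruenceFinset_nonempty hjn) c

/-- Pointwise bounds from bounds in the mean: moving the base point by a small `w` changes the Hecke
average by at most `ε`, and the average over `w` is controlled by an integral. -/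
lemma exists_abs_heckeOperator_mul_sub_le (hj : 1 ≤ j) (hjn : j < n)
    (hf : BddRightUnifCont SL(n, ℝ) f) (c : ℝ) {ε : ℝ} (hε : 0 < ε) :
    ∃ C : ℝ, ∀ p M : ℕ, p ≠ 0 → M ≠ 0 → p.Coprime M →
      |heckeOperator j (p * M) f (XSpace.mk 1) - c| ≤
        ε + C * ∫ x, |heckeOperator j p f x - c| ∂μ := by
  obtain ⟨W, hW1, hWε, hW⟩ := local_compact_nhds (hf.eventually_abs_sub_le hε)
  obtain ⟨C, hle⟩ := exists_le_mul_integral_of_le_expect (μ := μ) (isCompact_singleton (x := 1))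
    hW hW1 (XSpace.mk (1 : SL(n, ℝ)))
  refine ⟨C, fun p M hp hM hcop => ?_⟩
  have : NeZero p := ⟨hp⟩
  have : NeZero M := ⟨hM⟩
  have hF := ((hf.heckeOperator (j := j) (N := p) hjn.le).sub (.const c)).abs
  have hTF := hF.heckeOperator (j := j) (N := M) hjn.le
  rw [← integral_heckeOperator hj hjn hF M, ← sub_le_iff_le_add']
  refine hle _ hTF.continuous.measurable (hTF.integrable μ)
    (fun x => Finset.expect_nonneg fun _ _ => abs_nonneg _) {()} (Finset.singleton_nonempty _)
    (fun _ => 1) (fun _ _ => rfl) _ fun w hw => ?_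
  rw [Finset.expect_singleton, one_mul, sub_le_iff_le_add']
  have hclose : |heckeOperator j (p * M) f (XSpace.mk 1 <• w) -
      heckeOperator j (p * M) f (XSpace.mk 1)| ≤ ε := by
    rw [heckeOperator_rightSMul]
    exact abs_expect_sub_expect_le (congruenceFinset_nonempty hjn.le) fun H _ => hWε hw _
  calc |heckeOperator j (p * M) f (XSpace.mk 1) - c|
      ≤ |heckeOperator j (p * M) f (XSpace.mk 1) -
          heckeOperator j (p * M) f (XSpace.mk 1 <• w)| +
        |heckeOperator j (p * M) f (XSpace.mk 1 <• w) - c| := abs_sub_le _ _ _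
    _ ≤ ε + heckeOperator j M (fun y => |heckeOperator j p f y - c|) (XSpace.mk 1 <• w) :=
      add_le_add ((abs_sub_comm _ _).trans_le hclose)
        (abs_heckeOperator_mul_sub_le hcop hjn.le f c _)

/-- A large square-free integer has a large prime factor `p`, and the Hecke average of level `p` is
already close to the integral in the mean. -/
theorem tendsto_heckeOperator_squarefree (hj : 1 ≤ j) (hjn : j < n)
    (hf : BddRightUnifCont SL(n, ℝ) f) :
    Tendsto (fun N => heckeOperator j N f (XSpace.mk 1)) (atTop ⊓ 𝓟 {N | Squarefree N})
      (𝓝 (∫ x, f x ∂μ)) := by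
  rw [Metric.tendsto_nhds]
  intro ε hε
  obtain ⟨C, hle⟩ := exists_abs_heckeOperator_mul_sub_le (μ := μ) hj hjn hf
    (∫ x, f x ∂μ) (half_pos hε)
  have hmean := (tendsto_integral_abs_heckeOperator_sub (μ := μ) hj hjn hf).const_mul C
  rw [mul_zero] at hmean
  have hsmall := hmean.eventually (gt_mem_nhds (half_pos hε))
  rw [primesAtTop, eventually_inf_principal, eventually_atTop] at hsmall
  obtain ⟨P, hP⟩ := hsmall
  rw [eventually_inf_principal]
  filter_upwards [eventually_exists_prime_dvd_of_squarefree P] with N hN hsq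
  obtain ⟨p, hp, hPp, M, rfl⟩ := hN hsq
  have hcop : p.Coprime M := Nat.coprime_of_squarefree_mul hsq
  have hM : M ≠ 0 := right_ne_zero_of_mul hsq.ne_zero
  rw [Real.dist_eq]
  linarith [hle p M hp.ne_zero hM hcop, hP p hPp hp]

end HeckeEquidistribution

/-! ### Short vectors and truncated minima -/

section ShortVectors

variable {n : ℕ}

/-- The integer coordinates `v` of the vectors `vg` of length at most `t` in the lattice `ℤⁿg`. -/
def shortVectors (g : SL(n, ℝ)) (t : ℝ) : Set (Fin n → ℤ) :=
  {v | ‖(fun i => (v i : ℝ)) ᵥ* (g : Matrix (Fin n) (Fin n) ℝ)‖ ≤ t}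

lemma mem_shortVectors {g : SL(n, ℝ)} {t : ℝ} {v : Fin n → ℤ} :
    v ∈ shortVectors g t ↔ ‖(fun i => (v i : ℝ)) ᵥ* (g : Matrix (Fin n) (Fin n) ℝ)‖ ≤ t :=
  Iff.rfl

lemma norm_vecMul_le {M : Matrix (Fin n) (Fin n) ℝ} {B : ℝ} (hB : ∀ i k, |M i k| ≤ B)
    (w : Fin n → ℝ) : ‖w ᵥ* M‖ ≤ n * B * ‖w‖ := by
  rcases isEmpty_or_nonempty (Fin n) with hempty | ⟨⟨i₀⟩⟩
  · simp [Subsingleton.elim w 0]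
  have hB0 : 0 ≤ B := (abs_nonneg _).trans (hB i₀ i₀)
  refine (pi_norm_le_iff_of_nonneg (by positivity)).2 fun k => ?_
  calc ‖(w ᵥ* M) k‖ ≤ ∑ i, ‖w i * M i k‖ := norm_sum_le Finset.univ fun i => w i * M i k
    _ ≤ ∑ _i : Fin n, ‖w‖ * B := by
        refine Finset.sum_le_sum fun i _ => ?_
        rw [norm_mul]
        exact mul_le_mul (norm_le_pi_norm w i) (hB i k) (norm_nonneg _) (norm_nonneg _)
    _ = n * B * ‖w‖ := by
        rw [Finset.sum_const, Finset.card_univ, Fintype.card_fin, nsmul_eq_mul]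
        ring

lemma finite_norm_intCast_le (n : ℕ) (R : ℝ) :
    {v : Fin n → ℤ | ‖(fun i => (v i : ℝ))‖ ≤ R}.Finite := by
  refine (isCompact_closedBall (0 : Fin n → ℤ) R).finite_of_discrete.subset fun v hv => ?_
  rw [mem_closedBall_zero_iff]
  exact hv

lemma vecMul_coe_vecMul_coe_inv (g : SL(n, ℝ)) (w : Fin n → ℝ) :
    (w ᵥ* (g : Matrix (Fin n) (Fin n) ℝ)) ᵥ* ((g⁻¹ : SL(n, ℝ)) : Matrix (Fin n) (Fin n) ℝ) = w := by
  rw [vecMul_vecMul, ← Matrix.SpecialLinearGroup.coe_mul, mul_inv_cancel,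
    Matrix.SpecialLinearGroup.coe_one, vecMul_one]

lemma finite_shortVectors (g : SL(n, ℝ)) (t : ℝ) : (shortVectors g t).Finite := by
  obtain ⟨B, hB⟩ := Finite.exists_le fun p : Fin n × Fin n => |(g⁻¹ : SL(n, ℝ)) p.1 p.2|
  refine (finite_norm_intCast_le n (n * |B| * t)).subset fun v hv => ?_
  have hbound := norm_vecMul_le (fun i k => (hB (i, k)).trans (le_abs_self B))
    ((fun i => (v i : ℝ)) ᵥ* (g : Matrix (Fin n) (Fin n) ℝ))
  rw [vecMul_coe_vecMul_coe_inv] at hbound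
  exact hbound.trans (mul_le_mul_of_nonneg_left hv (by positivity))

lemma shortVectors_mono (g : SL(n, ℝ)) {s t : ℝ} (hst : s ≤ t) :
    shortVectors g s ⊆ shortVectors g t :=
  fun _ hv => le_trans hv hst

lemma eventually_shortVectors_subset_right (g : SL(n, ℝ)) (t : ℝ) :
    ∀ᶠ s in 𝓝[>] t, shortVectors g s ⊆ shortVectors g t := by
  have hlong : ∀ᶠ s in 𝓝 t, ∀ v ∈ shortVectors g (t + 1) \ shortVectors g t,
      v ∉ shortVectors g s := by
    rw [eventually_all_finite ((finite_shortVectors g (t + 1)).subset Set.sdiff_subset)]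
    rintro v ⟨-, hv⟩
    simp only [mem_shortVectors, not_le] at hv ⊢
    exact eventually_lt_nhds hv
  filter_upwards [nhdsWithin_le_nhds hlong, nhdsWithin_le_nhds (eventually_lt_nhds (lt_add_one t))]
    with s hs hs1 v hv
  by_contra hvt
  exact hs v ⟨shortVectors_mono g hs1.le hv, hvt⟩ hv

lemma eventually_shortVectors_subset_left {g : SL(n, ℝ)} {t : ℝ}
    (hne : ∀ v : Fin n → ℤ, ‖(fun i => (v i : ℝ)) ᵥ* (g : Matrix (Fin n) (Fin n) ℝ)‖ ≠ t) :
    ∀ᶠ s in 𝓝[<] t, shortVectors g t ⊆ shortVectors g s := by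
  have hall : ∀ᶠ s in 𝓝 t, ∀ v ∈ shortVectors g t, v ∈ shortVectors g s := by
    rw [eventually_all_finite (finite_shortVectors g t)]
    intro v hv
    exact (eventually_gt_nhds (lt_of_le_of_ne hv (hne v))).mono fun s hs => hs.le
  exact nhdsWithin_le_nhds hall

lemma intCast_vecMul (v : Fin n → ℤ) (M : Matrix (Fin n) (Fin n) ℤ) :
    (fun i => ((v ᵥ* M) i : ℝ)) = (fun i => (v i : ℝ)) ᵥ* M.map (Int.cast : ℤ → ℝ) :=
  funext fun i => RingHom.map_vecMul (Int.castRingHom ℝ) M v i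

lemma ncard_shortVectors_mul_le {γ : SL(n, ℝ)} (hγ : γ ∈ Gamma n) (g : SL(n, ℝ)) (t : ℝ) :
    (shortVectors (γ * g) t).ncard ≤ (shortVectors g t).ncard := by
  obtain ⟨Q, rfl⟩ := hγ
  have hinj : Function.Injective fun v : Fin n → ℤ => v ᵥ* (Q : Matrix (Fin n) (Fin n) ℤ) :=
    vecMul_injective_of_isUnit ((isUnit_iff_isUnit_det _).2 (by rw [Q.2]; exact isUnit_one))
  refine Set.ncard_le_ncard_of_injOn _ (fun v hv => ?_) hinj.injOn (finite_shortVectors g t)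
  rw [mem_shortVectors, Matrix.SpecialLinearGroup.coe_mul, ← vecMul_vecMul] at hv
  rw [mem_shortVectors, intCast_vecMul]
  exact hv

lemma ncard_shortVectors_mul {γ : SL(n, ℝ)} (hγ : γ ∈ Gamma n) (g : SL(n, ℝ)) (t : ℝ) :
    (shortVectors (γ * g) t).ncard = (shortVectors g t).ncard := by
  refine (ncard_shortVectors_mul_le hγ g t).antisymm ?_
  simpa only [inv_mul_cancel_left] using ncard_shortVectors_mul_le (inv_mem hγ) (γ * g) t

/-- The number of vectors of length at most `t` in the lattice `x`, computed with an arbitrary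
representative of the coset. -/
def shortCount (t : ℝ) (x : XSpace n) : ℕ :=
  (shortVectors (XSpace.mk_surjective x).choose t).ncard

lemma shortCount_mk (t : ℝ) (g : SL(n, ℝ)) :
    shortCount t (XSpace.mk g) = (shortVectors g t).ncard := by
  have hrep := XSpace.mk_eq_mk_iff.1 (XSpace.mk_surjective (XSpace.mk g)).choose_spec
  rw [shortCount, ← ncard_shortVectors_mul hrep, inv_mul_cancel_right]

lemma shortCount_mono (x : XSpace n) {s t : ℝ} (hst : s ≤ t) : shortCount s x ≤ shortCount t x :=
  Set.ncard_le_ncard (shortVectors_mono _ hst) (finite_shortVectors _ t)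

lemma eventually_shortCount_le_right (x : XSpace n) (t : ℝ) :
    ∀ᶠ s in 𝓝[>] t, shortCount s x ≤ shortCount t x :=
  (eventually_shortVectors_subset_right _ t).mono fun _ hs =>
    Set.ncard_le_ncard hs (finite_shortVectors _ t)

lemma mem_OmegaTilde_iff {D : ℝ} {r : ℕ} {x : XSpace n} :
    x ∈ OmegaTilde n D r ↔ shortCount D x = r := by
  constructor
  · rintro ⟨g, rfl, hg⟩
    exact (shortCount_mk D g).trans hg
  · intro hx
    obtain ⟨g, rfl⟩ := XSpace.mk_surjective x
    exact ⟨g, rfl, (shortCount_mk D g).symm.trans hx⟩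

lemma eventually_norm_vecMul_le {η : ℝ} (hη : 0 < η) :
    ∀ᶠ h : SL(n, ℝ) in 𝓝 1, ∀ w, ‖w ᵥ* (h : Matrix (Fin n) (Fin n) ℝ)‖ ≤ (1 + η) * ‖w‖ := by
  have hδ : 0 < η / (n + 1) := by positivity
  filter_upwards [eventually_forall_abs_sub_one_le hδ] with h hh w
  have hsmall : n * (η / (n + 1)) ≤ η := by
    rw [mul_div_assoc', div_le_iff₀ (by positivity)]
    linarith
  calc ‖w ᵥ* (h : Matrix (Fin n) (Fin n) ℝ)‖
      = ‖w + w ᵥ* ((h : Matrix (Fin n) (Fin n) ℝ) - 1)‖ := by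
        rw [vecMul_sub, vecMul_one, add_sub_cancel]
    _ ≤ ‖w‖ + n * (η / (n + 1)) * ‖w‖ :=
        (norm_add_le _ _).trans (by gcongr; exact norm_vecMul_le hh w)
    _ ≤ ‖w‖ + η * ‖w‖ := by gcongr
    _ = (1 + η) * ‖w‖ := by ring

lemma shortCount_le_shortCount_rightSMul {K : ℝ} (hK : 0 ≤ K) {h : SL(n, ℝ)}
    (hh : ∀ w, ‖w ᵥ* (h : Matrix (Fin n) (Fin n) ℝ)‖ ≤ K * ‖w‖) (t : ℝ) (x : XSpace n) :
    shortCount t x ≤ shortCount (K * t) (x <• h) := by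
  obtain ⟨g, rfl⟩ := XSpace.mk_surjective x
  rw [XSpace.mk_rightSMul, shortCount_mk, shortCount_mk]
  refine Set.ncard_le_ncard (fun v hv => ?_) (finite_shortVectors _ _)
  rw [mem_shortVectors, Matrix.SpecialLinearGroup.coe_mul, ← vecMul_vecMul]
  exact (hh _).trans (mul_le_mul_of_nonneg_left hv hK)

end ShortVectors

section TruncatedMinimum

variable {n r : ℕ} {b t : ℝ} {x : XSpace n}

/-- The minimum of `b` and the least `t ≥ 0` such that the lattice `x` has at least `r` vectors of
length at most `t`; vectors are counted without regard to linear independence. -/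
def truncatedMinimum (r : ℕ) (b : ℝ) (x : XSpace n) : ℝ :=
  sInf (insert b {t | 0 ≤ t ∧ r ≤ shortCount t x})

lemma zero_mem_lowerBounds_insert (hb : 0 ≤ b) (r : ℕ) (x : XSpace n) :
    0 ∈ lowerBounds (insert b {t | 0 ≤ t ∧ r ≤ shortCount t x}) := by
  rintro t (rfl | ht)
  exacts [hb, ht.1]

lemma truncatedMinimum_nonneg (hb : 0 ≤ b) : 0 ≤ truncatedMinimum r b x :=
  le_csInf (Set.insert_nonempty _ _) (zero_mem_lowerBounds_insert hb r x)

lemma truncatedMinimum_le (hb : 0 ≤ b) : truncatedMinimum r b x ≤ b :=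
  csInf_le ⟨0, zero_mem_lowerBounds_insert hb r x⟩ (Set.mem_insert _ _)

lemma truncatedMinimum_le_of_le_shortCount (hb : 0 ≤ b) (ht : 0 ≤ t) (h : r ≤ shortCount t x) :
    truncatedMinimum r b x ≤ t :=
  csInf_le ⟨0, zero_mem_lowerBounds_insert hb r x⟩ (Set.mem_insert_of_mem _ ⟨ht, h⟩)

lemma truncatedMinimum_le_iff (ht : 0 ≤ t) (htb : t < b) :
    truncatedMinimum r b x ≤ t ↔ r ≤ shortCount t x := by
  refine ⟨fun hle => ?_, truncatedMinimum_le_of_le_shortCount (ht.trans htb.le) ht⟩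
  obtain ⟨s, ⟨hcount, hsb⟩, hts⟩ := ((eventually_shortCount_le_right x t).and
    (nhdsWithin_le_nhds (eventually_lt_nhds htb))).and self_mem_nhdsWithin |>.exists
  obtain ⟨u, rfl | hu, hus⟩ := exists_lt_of_csInf_lt (Set.insert_nonempty _ _)
    (hle.trans_lt hts)
  · exact absurd hus hsb.not_gt
  · exact hu.2.trans ((shortCount_mono x hus.le).trans hcount)

lemma truncatedMinimum_rightSMul_le (hb : 0 ≤ b) {η : ℝ} (hη : 0 ≤ η) {h : SL(n, ℝ)}
    (hh : ∀ w, ‖w ᵥ* (h : Matrix (Fin n) (Fin n) ℝ)‖ ≤ (1 + η) * ‖w‖) :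
    truncatedMinimum r b (x <• h) ≤ truncatedMinimum r b x + η * b := by
  have hmul : truncatedMinimum r b (x <• h) / (1 + η) ≤ truncatedMinimum r b x := by
    refine le_csInf (Set.insert_nonempty _ _) ?_
    rintro t (rfl | ⟨ht, hcount⟩) <;> rw [div_le_iff₀' (by positivity)]
    · exact (truncatedMinimum_le hb).trans (le_mul_of_one_le_left hb (by linarith))
    · exact truncatedMinimum_le_of_le_shortCount hb (by positivity)
        (hcount.trans (shortCount_le_shortCount_rightSMul (by positivity) hh t x))
  rw [div_le_iff₀' (by positivity)] at hmul
  have hle := mul_le_mul_of_nonneg_left (truncatedMinimum_le (r := r) (x := x) hb) hη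
  linarith

lemma bddRightUnifCont_truncatedMinimum (r : ℕ) (hb : 0 ≤ b) :
    BddRightUnifCont SL(n, ℝ) (truncatedMinimum r b : XSpace n → ℝ) := by
  have huniform : TendstoUniformly
      (fun (h : SL(n, ℝ)) (x : XSpace n) => truncatedMinimum r b (x <• h))
      (truncatedMinimum r b) (𝓝 1) := by
    refine Metric.tendstoUniformly_iff.2 fun ε hε => ?_
    have hη : 0 < ε / (b + 1) := by positivity
    have hinv : Tendsto (fun h : SL(n, ℝ) => h⁻¹) (𝓝 1) (𝓝 1) :=
      continuous_inv.tendsto' 1 1 inv_one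
    have hsmall : ε / (b + 1) * b < ε := by
      rw [div_mul_eq_mul_div, div_lt_iff₀ (by positivity)]
      linarith
    filter_upwards [eventually_norm_vecMul_le hη, hinv.eventually (eventually_norm_vecMul_le hη)]
      with h hh hh' x
    have hup := truncatedMinimum_rightSMul_le (r := r) (x := x) hb hη.le hh
    have hdown := truncatedMinimum_rightSMul_le (r := r) (x := x <• h) hb hη.le hh'
    rw [smul_smul, ← MulOpposite.op_mul, mul_inv_cancel, MulOpposite.op_one, one_smul] at hdown
    rw [Real.dist_eq, abs_lt]
    constructor <;> linarith
  refine ⟨⟨b, fun x => ?_⟩, ?_, huniform⟩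
  · rw [abs_of_nonneg (truncatedMinimum_nonneg hb)]
    exact truncatedMinimum_le hb
  · exact continuous_of_tendstoUniformly_rightSMul XSpace.isOpenMap_rightSMul huniform

lemma exists_norm_vecMul_eq_of_truncatedMinimum_eq {g : SL(n, ℝ)} (ht : 0 < t) (htb : t < b)
    (hmin : truncatedMinimum r b (XSpace.mk g) = t) :
    ∃ v : Fin n → ℤ, ‖(fun i => (v i : ℝ)) ᵥ* (g : Matrix (Fin n) (Fin n) ℝ)‖ = t := by
  by_contra! hne
  obtain ⟨s, ⟨hsub, hs⟩, hst⟩ := ((eventually_shortVectors_subset_left hne).and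
    (nhdsWithin_le_nhds (eventually_gt_nhds ht))).and self_mem_nhdsWithin |>.exists
  have hcount : r ≤ shortCount s (XSpace.mk g) := by
    rw [shortCount_mk]
    refine le_trans ?_ (Set.ncard_le_ncard hsub (finite_shortVectors g s))
    rw [← shortCount_mk]
    exact (truncatedMinimum_le_iff ht.le htb).1 hmin.le
  have hle := truncatedMinimum_le_of_le_shortCount (ht.le.trans htb.le) hs.le hcount
  exact absurd (hmin ▸ hle) (not_le.2 hst)

end TruncatedMinimum

/-! ### Lattices with a vector of prescribed length -/

lemma measure_eq_zero_of_finite_rightSMul_mem {G X : Type*} [Group G] [MulAction Gᵐᵒᵖ X]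
    [MeasurableSpace X] [MeasurableConstSMul Gᵐᵒᵖ X] {μ : Measure X} [IsFiniteMeasure μ]
    [SMulInvariantMeasure Gᵐᵒᵖ X μ] {B : Set X} (hB : MeasurableSet B) (h : ℕ → G)
    (hfin : ∀ x : X, {k | x <• h k ∈ B}.Finite) : μ B = 0 := by
  let E : ℕ → Set X := fun m => ⋃ k ≥ m, (fun x : X => x <• h k) ⁻¹' B
  have hanti : Antitone E := fun a b hab => Set.biUnion_subset_biUnion_left fun k hk => hab.trans hk
  have hmeas : ∀ m, MeasurableSet (E m) := fun m =>
    .iUnion fun k => .iUnion fun _ => measurable_const_smul (MulOpposite.op (h k)) hB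
  have hempty : ⋂ m, E m = ∅ := by
    refine Set.eq_empty_of_forall_notMem fun x hx => ?_
    obtain ⟨m, hm⟩ := (hfin x).bddAbove
    obtain ⟨k, hk, hxk⟩ := Set.mem_iUnion₂.1 (Set.mem_iInter.1 hx (m + 1))
    exact absurd (hm hxk) (Nat.lt_of_succ_le hk).not_ge
  have hlim : Tendsto (μ ∘ E) atTop (𝓝 0) := by
    simpa only [hempty, measure_empty] using tendsto_measure_iInter_atTop (μ := μ)
      (fun m => (hmeas m).nullMeasurableSet) hanti ⟨0, measure_ne_top μ _⟩
  refine le_antisymm (ge_of_tendsto' hlim fun m => ?_) zero_le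
  calc μ B = μ ((fun x : X => x <• h m) ⁻¹' B) := (measure_preimage_smul μ _ B).symm
    _ ≤ μ (E m) := measure_mono (Set.subset_iUnion₂_of_subset m le_rfl subset_rfl)

section PrescribedLength

variable {n : ℕ} {e : Fin n → ℝ} {t : ℝ}

/-- The one-parameter group of determinant-one diagonal matrices with rates of growth `e`. It
changes the length of a vector strictly as soon as all rates are nonzero, which shows that
prescribing the length of some lattice vector is a null condition. -/
def diagonalFlow (e : Fin n → ℝ) (he : ∑ i, e i = 0) (s : ℝ) : SL(n, ℝ) :=
  ⟨diagonal fun i => Real.exp (s * e i), by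
    rw [det_diagonal, ← Real.exp_sum, ← Finset.mul_sum, he, mul_zero, Real.exp_zero]⟩

lemma vecMul_diagonalFlow_apply (he : ∑ i, e i = 0) (s : ℝ) (w : Fin n → ℝ) (i : Fin n) :
    (w ᵥ* (diagonalFlow e he s : Matrix (Fin n) (Fin n) ℝ)) i = w i * Real.exp (s * e i) :=
  vecMul_diagonal w (fun i => Real.exp (s * e i)) i

lemma exists_sum_eq_zero_forall_ne_zero (hn : 2 ≤ n) :
    ∃ e : Fin n → ℝ, ∑ i, e i = 0 ∧ ∀ i, e i ≠ 0 := by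
  obtain ⟨m, rfl⟩ := Nat.exists_eq_add_of_le' hn
  refine ⟨Fin.cons (-(m + 1)) fun _ => 1, ?_, Fin.cases ?_ fun i => ?_⟩
  · simp [Fin.sum_univ_succ]
  · rw [Fin.cons_zero]
    exact (neg_neg_of_pos (by positivity)).ne
  · rw [Fin.cons_succ]
    exact one_ne_zero

lemma exists_abs_eq_of_norm_eq {u : Fin n → ℝ} (ht : 0 < t) (hu : ‖u‖ = t) : ∃ i, |u i| = t := by
  by_contra! hne
  refine ((pi_norm_lt_iff ht).2 fun i => ?_).ne hu
  exact lt_of_le_of_ne (hu ▸ norm_le_pi_norm u i) (hne i)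

lemma norm_le_of_norm_vecMul_diagonalFlow_eq (he : ∑ i, e i = 0) {s : ℝ} (hs : s ∈ Set.Icc 0 1)
    {w : Fin n → ℝ} (hw : ‖w ᵥ* (diagonalFlow e he s : Matrix (Fin n) (Fin n) ℝ)‖ = t) :
    ‖w‖ ≤ t * Real.exp ‖e‖ := by
  have ht : 0 ≤ t := hw ▸ norm_nonneg _
  refine (pi_norm_le_iff_of_nonneg (by positivity)).2 fun i => ?_
  have hexp : -(s * e i) ≤ ‖e‖ :=
    calc -(s * e i) ≤ |s * e i| := neg_le_abs _
      _ = s * |e i| := by rw [abs_mul, abs_of_nonneg hs.1]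
      _ ≤ 1 * ‖e‖ := mul_le_mul hs.2 (norm_le_pi_norm e i) (abs_nonneg _) zero_le_one
      _ = ‖e‖ := one_mul _
  calc ‖w i‖ = ‖(w ᵥ* (diagonalFlow e he s : Matrix (Fin n) (Fin n) ℝ)) i‖ *
        Real.exp (-(s * e i)) := by
        rw [vecMul_diagonalFlow_apply, norm_mul, Real.norm_of_nonneg (Real.exp_pos _).le,
          mul_assoc, ← Real.exp_add, add_neg_cancel, Real.exp_zero, mul_one]
    _ ≤ t * Real.exp ‖e‖ := mul_le_mul (hw ▸ norm_le_pi_norm _ i) (Real.exp_le_exp.2 hexp)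
        (Real.exp_pos _).le ht

lemma subsingleton_setOf_mul_exp_eq {a c : ℝ} (hc : c ≠ 0) (ht : t ≠ 0) :
    {s : ℝ | a * Real.exp (s * c) = t}.Subsingleton := by
  intro s hs s' hs'
  have ha : a ≠ 0 := fun h0 => ht (by rw [← (hs : a * _ = t), h0, zero_mul])
  have hexp := mul_left_cancel₀ ha (hs.trans (hs' : _ = t).symm)
  exact mul_right_cancel₀ hc (Real.exp_injective hexp)

lemma finite_setOf_norm_vecMul_mul_diagonalFlow_eq (he : ∑ i, e i = 0) (hne : ∀ i, e i ≠ 0)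
    (ht : 0 < t) (g : SL(n, ℝ)) :
    {s ∈ Set.Icc (0 : ℝ) 1 | ∃ v : Fin n → ℤ, ‖(fun i => (v i : ℝ)) ᵥ*
      ((g * diagonalFlow e he s : SL(n, ℝ)) : Matrix (Fin n) (Fin n) ℝ)‖ = t}.Finite := by
  refine ((finite_shortVectors g (t * Real.exp ‖e‖)).biUnion fun v _ =>
    Set.finite_iUnion fun i => (subsingleton_setOf_mul_exp_eq
      (a := |((fun i => (v i : ℝ)) ᵥ* (g : Matrix (Fin n) (Fin n) ℝ)) i|) (hne i) ht.ne').finite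
    ).subset ?_
  rintro s ⟨hs, v, hv⟩
  rw [Matrix.SpecialLinearGroup.coe_mul, ← vecMul_vecMul] at hv
  obtain ⟨i, hi⟩ := exists_abs_eq_of_norm_eq ht hv
  rw [vecMul_diagonalFlow_apply, abs_mul, Real.abs_exp] at hi
  exact Set.mem_biUnion (norm_le_of_norm_vecMul_diagonalFlow_eq he hs hv) (Set.mem_iUnion.2 ⟨i, hi⟩)

lemma measure_truncatedMinimum_eq (μ : Measure (XSpace n)) [IsFiniteMeasure μ]
    [SMulInvariantMeasure SL(n, ℝ)ᵐᵒᵖ (XSpace n) μ] (hn : 2 ≤ n) (r : ℕ) {b : ℝ} (ht : 0 < t)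
    (htb : t < b) : μ {x | truncatedMinimum r b x = t} = 0 := by
  obtain ⟨e, he, hne⟩ := exists_sum_eq_zero_forall_ne_zero hn
  have hcont := (bddRightUnifCont_truncatedMinimum (n := n) r (ht.le.trans htb.le)).continuous
  refine measure_eq_zero_of_finite_rightSMul_mem
    (isClosed_eq hcont continuous_const).measurableSet
    (fun k => diagonalFlow e he (1 / ((k : ℝ) + 1))) fun x => ?_
  obtain ⟨g, rfl⟩ := XSpace.mk_surjective x
  have hinj : Function.Injective fun k : ℕ => 1 / ((k : ℝ) + 1) := fun k l hkl => by
    simpa using hkl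
  refine ((finite_setOf_norm_vecMul_mul_diagonalFlow_eq he hne ht g).preimage
    hinj.injOn).subset fun k hk => ⟨⟨by positivity, ?_⟩, ?_⟩
  · exact (div_le_one (by positivity)).2 (le_add_of_nonneg_left k.cast_nonneg)
  · exact exists_norm_vecMul_eq_of_truncatedMinimum_eq ht htb hk

end PrescribedLength

/-! ### From test functions to continuity sets -/

lemma measureReal_preimage_closure {X : Type*} [MeasurableSpace X] {μ : Measure X} {φ : X → ℝ}
    {S : Set ℝ} (hS : μ (φ ⁻¹' frontier S) = 0) :
    μ.real (φ ⁻¹' closure S) = μ.real (φ ⁻¹' S) := by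
  rw [closure_eq_self_union_frontier, Set.preimage_union]
  exact measureReal_congr (union_ae_eq_left_of_ae_eq_empty (ae_eq_empty.2 hS))

section ContinuitySets

variable {n j : ℕ} {μ : Measure (XSpace n)} [IsProbabilityMeasure μ]
  [SMulInvariantMeasure SL(n, ℝ)ᵐᵒᵖ (XSpace n) μ] {φ : XSpace n → ℝ}

lemma heckeOperator_mono (N : ℕ) {f f' : XSpace n → ℝ} (h : ∀ x, f x ≤ f' x) (x : XSpace n) :
    heckeOperator j N f x ≤ heckeOperator j N f' x :=
  Finset.expect_le_expect fun _ _ => h _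

lemma heckeOperator_sub (N : ℕ) (f f' : XSpace n → ℝ) (x : XSpace n) :
    heckeOperator j N (fun y => f y - f' y) x =
      heckeOperator j N f x - heckeOperator j N f' x :=
  Finset.expect_sub_distrib _ _ _

lemma heckeOperator_const {N : ℕ} [NeZero N] (hj : j ≤ n) (c : ℝ) (x : XSpace n) :
    heckeOperator j N (fun _ => c) x = c :=
  Finset.expect_const (congruenceFinset_nonempty hj) c

lemma eventually_heckeOperator_indicator_lt_of_isClosed (hj : 1 ≤ j) (hjn : j < n)
    (hφ : BddRightUnifCont SL(n, ℝ) φ) {F : Set ℝ} (hF : IsClosed F) {a : ℝ}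
    (ha : μ.real (φ ⁻¹' F) < a) :
    ∀ᶠ N in atTop ⊓ 𝓟 {N | Squarefree N},
      heckeOperator j N ((φ ⁻¹' F).indicator fun _ => 1) (XSpace.mk 1) < a := by
  have hδ : ∀ k : ℕ, 0 < 1 / ((k : ℝ) + 1) := fun k => by positivity
  have hlim := tendsto_integral_thickenedIndicator_of_isClosed (μ.map φ) hF hδ
    tendsto_one_div_add_atTop_nhds_zero_nat
  rw [map_measureReal_apply hφ.continuous.measurable hF.measurableSet] at hlim
  obtain ⟨k, hk⟩ := (hlim.eventually (gt_mem_nhds ha)).exists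
  have hlip := lipschitzWith_thickenedIndicator (hδ k) F
  have hψ : UniformContinuous fun y => (thickenedIndicator (hδ k) F y : ℝ) :=
    NNReal.isUniformEmbedding_coe.uniformContinuous.comp hlip.uniformContinuous
  rw [integral_map hφ.continuous.aemeasurable hψ.continuous.aestronglyMeasurable] at hk
  have htest := tendsto_heckeOperator_squarefree (μ := μ) hj hjn (hφ.comp_left hψ)
  filter_upwards [htest.eventually (gt_mem_nhds hk)] with N hN
  refine (heckeOperator_mono N (fun x => ?_) _).trans_lt hN
  have hle := NNReal.coe_le_coe.2 (indicator_le_thickenedIndicator (hδ k) F (φ x))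
  by_cases hx : φ x ∈ F
  · simpa [Set.indicator, hx] using hle
  · simp [Set.indicator, hx]

lemma eventually_heckeOperator_indicator_lt (hj : 1 ≤ j) (hjn : j < n)
    (hφ : BddRightUnifCont SL(n, ℝ) φ) {S : Set ℝ} (hS : μ (φ ⁻¹' frontier S) = 0) {a : ℝ}
    (ha : μ.real (φ ⁻¹' S) < a) :
    ∀ᶠ N in atTop ⊓ 𝓟 {N | Squarefree N},
      heckeOperator j N ((φ ⁻¹' S).indicator fun _ => 1) (XSpace.mk 1) < a := by
  rw [← measureReal_preimage_closure hS] at ha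
  filter_upwards [eventually_heckeOperator_indicator_lt_of_isClosed hj hjn hφ isClosed_closure ha]
    with N hN
  refine (heckeOperator_mono N (fun x => ?_) _).trans_lt hN
  exact Set.indicator_le_indicator_of_subset (Set.preimage_mono subset_closure)
    (fun _ => zero_le_one) x

lemma heckeOperator_indicator_compl {N : ℕ} [NeZero N] (hj : j ≤ n) (A : Set (XSpace n))
    (x : XSpace n) : heckeOperator j N (Aᶜ.indicator fun _ => 1) x =
      1 - heckeOperator j N (A.indicator fun _ => 1) x := by
  rw [Set.indicator_compl]
  exact (heckeOperator_sub N _ _ x).trans (by rw [heckeOperator_const hj])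

lemma tendsto_heckeOperator_indicator (hj : 1 ≤ j) (hjn : j < n)
    (hφ : BddRightUnifCont SL(n, ℝ) φ) {S : Set ℝ} (hSm : MeasurableSet S)
    (hS : μ (φ ⁻¹' frontier S) = 0) :
    Tendsto (fun N => heckeOperator j N ((φ ⁻¹' S).indicator fun _ => 1) (XSpace.mk 1))
      (atTop ⊓ 𝓟 {N | Squarefree N}) (𝓝 (μ.real (φ ⁻¹' S))) := by
  refine tendsto_order.2 ⟨fun a ha => ?_, fun a ha =>
    eventually_heckeOperator_indicator_lt hj hjn hφ hS ha⟩
  have hcompl : μ.real (φ ⁻¹' Sᶜ) < 1 - a := by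
    rw [Set.preimage_compl, probReal_compl_eq_one_sub (hφ.continuous.measurable hSm)]
    linarith
  filter_upwards [eventually_heckeOperator_indicator_lt hj hjn hφ (by rwa [frontier_compl]) hcompl,
    (eventually_gt_atTop 0).filter_mono inf_le_left] with N hN hpos
  have : NeZero N := ⟨hpos.ne'⟩
  rw [Set.preimage_compl, heckeOperator_indicator_compl hjn.le] at hN
  linarith

end ContinuitySets

/-! ### Counting short solutions -/

section ShortSolutions

variable {n j N : ℕ}

lemma OmegaTilde_eq_sdiff (D : ℝ) (r : ℕ) :
    OmegaTilde n D r = {x | r ≤ shortCount D x} \ {x | r + 1 ≤ shortCount D x} := by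
  ext x
  rw [mem_OmegaTilde_iff, Set.mem_sdiff, Set.mem_ofPred_eq, Set.mem_ofPred_eq]
  lia

lemma setOf_le_shortCount_eq_preimage {D : ℝ} (hD : 0 < D) (r : ℕ) :
    {x : XSpace n | r ≤ shortCount D x} = truncatedMinimum r (D + 1) ⁻¹' Set.Iic D :=
  Set.ext fun _ => (truncatedMinimum_le_iff hD.le (lt_add_one D)).symm

lemma measurableSet_le_shortCount {D : ℝ} (hD : 0 < D) (r : ℕ) :
    MeasurableSet {x : XSpace n | r ≤ shortCount D x} := by
  rw [setOf_le_shortCount_eq_preimage hD]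
  have hφ := bddRightUnifCont_truncatedMinimum (n := n) (b := D + 1) r (by positivity)
  exact hφ.continuous.measurable measurableSet_Iic

section Limit

variable {μ : Measure (XSpace n)} [IsProbabilityMeasure μ]
  [SMulInvariantMeasure SL(n, ℝ)ᵐᵒᵖ (XSpace n) μ] {D : ℝ}

lemma tendsto_heckeOperator_indicator_le_shortCount (hj : 1 ≤ j) (hjn : j < n) (hD : 0 < D)
    (r : ℕ) :
    Tendsto (fun N => heckeOperator j N
        ({x : XSpace n | r ≤ shortCount D x}.indicator fun _ => 1) (XSpace.mk 1))
      (atTop ⊓ 𝓟 {N | Squarefree N}) (𝓝 (μ.real {x | r ≤ shortCount D x})) := by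
  rw [setOf_le_shortCount_eq_preimage hD]
  refine tendsto_heckeOperator_indicator hj hjn
    (bddRightUnifCont_truncatedMinimum r (by positivity)) measurableSet_Iic ?_
  rw [frontier_Iic]
  exact measure_truncatedMinimum_eq μ (by lia) r hD (lt_add_one D)

lemma tendsto_heckeOperator_indicator_OmegaTilde (hj : 1 ≤ j) (hjn : j < n) (hD : 0 < D) (r : ℕ) :
    Tendsto (fun N => heckeOperator j N ((OmegaTilde n D r).indicator fun _ => 1) (XSpace.mk 1))
      (atTop ⊓ 𝓟 {N | Squarefree N}) (𝓝 (μ.real (OmegaTilde n D r))) := by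
  have hsub : {x : XSpace n | r + 1 ≤ shortCount D x} ⊆ {x | r ≤ shortCount D x} :=
    fun _ hx => (Nat.le_succ r).trans hx
  rw [OmegaTilde_eq_sdiff, measureReal_sdiff hsub (measurableSet_le_shortCount hD (r + 1)),
    Set.indicator_sdiff hsub]
  exact ((tendsto_heckeOperator_indicator_le_shortCount hj hjn hD r).sub
    (tendsto_heckeOperator_indicator_le_shortCount hj hjn hD (r + 1))).congr
      fun N => (heckeOperator_sub N _ _ _).symm

end Limit

lemma IsPositiveBasis.vecMul_injective {L : AddSubgroup (Fin n → ℤ)} {M : Matrix (Fin n) (Fin n) ℤ}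
    (hM : IsPositiveBasis L M) : Function.Injective fun v : Fin n → ℤ => v ᵥ* M := fun v w h =>
  sub_eq_zero.1 <| eq_zero_of_vecMul_eq_zero hM.det_pos.ne' <|
    (sub_vecMul M v w).trans (sub_eq_zero.2 h)

lemma shortCount_latticePoint_one (L : AddSubgroup (Fin n → ℤ)) [L.FiniteIndex] (D : ℝ) :
    shortCount D (latticePoint L 1) =
      {x : Fin n → ℤ | ‖(fun i => (x i : ℝ))‖ ≤ D * (L.index : ℝ) ^ (1 / n : ℝ) ∧ x ∈ L}.ncard := by
  obtain ⟨M, hM, hdet⟩ := exists_isPositiveBasis L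
  have hindex : 0 < L.index := Nat.pos_of_ne_zero AddSubgroup.FiniteIndex.index_ne_zero
  have hpos : (0 : ℝ) < (L.index : ℝ) ^ (1 / n : ℝ) := by positivity
  have hshort (v : Fin n → ℤ) : v ∈ shortVectors (intDetNormalize M) D ↔
      ‖(fun i => ((v ᵥ* M) i : ℝ))‖ ≤ D * (L.index : ℝ) ^ (1 / n : ℝ) := by
    rw [mem_shortVectors, coe_intDetNormalize hM.det_pos, hdet, Int.cast_natCast,
      Real.rpow_neg (Nat.cast_nonneg _), vecMul_smul, norm_smul, norm_inv,
      Real.norm_of_nonneg hpos.le, ← intCast_vecMul, inv_mul_le_iff₀ hpos, mul_comm D]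
  rw [hM.latticePoint_eq, mul_one, shortCount_mk,
    ← Set.ncard_image_of_injective _ hM.vecMul_injective]
  congr 1
  ext x
  constructor
  · rintro ⟨v, hv, rfl⟩
    exact ⟨(hshort v).1 hv, (hM.mem_iff _).2 ⟨v, rfl⟩⟩
  · rintro ⟨hx, hxL⟩
    obtain ⟨v, rfl⟩ := (hM.mem_iff x).1 hxL
    exact ⟨v, (hshort v).2 hx, rfl⟩

lemma shortCount_latticePoint_integralLift [NeZero N] {H : AddSubgroup (Fin n → ZMod N)}
    (hH : H ∈ congruenceSet N n j) (D : ℝ) :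
    shortCount D (latticePoint (integralLift H) 1) =
      {x : Fin n → ℤ | ‖(fun i => (x i : ℝ))‖ ≤ D * (N : ℝ) ^ ((j : ℝ) / n) ∧
        (fun i => (x i : ZMod N)) ∈ H}.ncard := by
  have hscale : ((integralLift H).index : ℝ) ^ (1 / n : ℝ) = (N : ℝ) ^ ((j : ℝ) / n) := by
    rw [index_integralLift, index_of_mem_congruenceSet hH, Nat.cast_pow, ← Real.rpow_natCast,
      ← Real.rpow_mul N.cast_nonneg, mul_one_div]
  rw [shortCount_latticePoint_one, hscale]
  rfl

lemma ncard_div_ncard_eq_heckeOperator [NeZero N] (n j r : ℕ) (D : ℝ) :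
    ({H ∈ congruenceSet N n j | {x : Fin n → ℤ | ‖(fun i => (x i : ℝ))‖ ≤
        D * (N : ℝ) ^ ((j : ℝ) / n) ∧ (fun i => (x i : ZMod N)) ∈ H}.ncard = r}.ncard : ℝ) /
      (congruenceSet N n j).ncard =
    heckeOperator j N ((OmegaTilde n D r).indicator fun _ => 1) (XSpace.mk 1) := by
  classical
  have hset : congruenceSet N n j = congruenceFinset N n j :=
    Set.ext fun _ => mem_congruenceFinset.symm
  have hfilter : {H ∈ congruenceSet N n j | {x : Fin n → ℤ | ‖(fun i => (x i : ℝ))‖ ≤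
      D * (N : ℝ) ^ ((j : ℝ) / n) ∧ (fun i => (x i : ZMod N)) ∈ H}.ncard = r} =
      ({H ∈ congruenceFinset N n j | latticePoint (integralLift H) 1 ∈ OmegaTilde n D r} :
        Finset _) := by
    ext H
    rw [Finset.coe_filter, Set.mem_ofPred_eq, Set.mem_ofPred_eq, mem_congruenceFinset]
    refine and_congr_right fun hH => ?_
    rw [mem_OmegaTilde_iff, shortCount_latticePoint_integralLift hH]
  rw [hfilter, hset, Set.ncard_coe_finset, Set.ncard_coe_finset, heckeOperator_mk,
    Finset.expect_eq_sum_div_card, Finset.natCast_card_filter]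
  rfl

end ShortSolutions

theorem prob_system_has_r_short_solutions_squarefree_general {n j : ℕ} (hj : 1 ≤ j) (hjn : j < n)
    (r : ℕ) {D : ℝ} (hD : 0 < D) (μ : Measure (XSpace n)) [IsProbabilityMeasure μ]
    [SMulInvariantMeasure SL(n, ℝ)ᵐᵒᵖ (XSpace n) μ] :
    Tendsto (fun N : ℕ =>
      ({H ∈ congruenceSet N n j | {x : Fin n → ℤ | ‖(fun i => (x i : ℝ))‖ ≤
          D * (N : ℝ) ^ ((j : ℝ) / n) ∧ (fun i => (x i : ZMod N)) ∈ H}.ncard = r}.ncard : ℝ) /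
        (congruenceSet N n j).ncard)
      (atTop ⊓ 𝓟 {N | Squarefree N}) (𝓝 (μ.real (OmegaTilde n D r))) := by
  refine (tendsto_heckeOperator_indicator_OmegaTilde hj hjn hD r).congr' ?_
  filter_upwards [(eventually_gt_atTop 0).filter_mono inf_le_left] with N hN
  have : NeZero N := ⟨hN.ne'⟩
  exact (ncard_div_ncard_eq_heckeOperator n j r D).symm

lemma smulInvariantMeasure_of_map_rightTranslate {n : ℕ} {μ : Measure (XSpace n)}
    (hinv : ∀ g, Measure.map (rightTranslate n g) μ = μ) :
    SMulInvariantMeasure SL(n, ℝ)ᵐᵒᵖ (XSpace n) μ where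
  measure_preimage_smul g s hs := by
    conv_rhs => rw [← hinv g.unop]
    exact (Measure.map_apply (measurable_const_smul g) hs).symm

open Filter in
/-- Let `n ≥ 2`, `1 ≤ j ≤ n−1`, `0 < D < 1`, `r ≥ 1`, and let `μ` be the
right-invariant Borel probability measure on `X = SL_n(ℤ)\SL_n(ℝ)`. As `N → ∞` along
square-free integers, the proportion of `H ∈ H_{N,j}(n)` such that
`#{x ∈ ℤⁿ : ‖x‖∞ ≤ D·N^{j/n}, (x mod N) ∈ H} = r` tends to `c_{n,r} = μ(Ω̃_{n,r})`. -/
theorem prob_system_has_r_short_solutions_squarefree (n j r : ℕ)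
    (hn : 2 ≤ n) (hj1 : 1 ≤ j) (hj : j ≤ n - 1) (hr : 1 ≤ r)
    (D : ℝ) (hD0 : 0 < D) (hD1 : D < 1)
    (μ : Measure (XSpace n)) (hprob : IsProbabilityMeasure μ)
    (hinv : ∀ g, Measure.map (rightTranslate n g) μ = μ) :
    Tendsto (fun N : ℕ =>
      (Set.ncard {H ∈ congruenceSet N n j |
          Set.ncard {x : Fin n → ℤ |
            ‖(fun i => (x i : ℝ))‖ ≤ D * (N : ℝ) ^ ((j : ℝ) / (n : ℝ)) ∧
            (fun i => ((x i : ZMod N))) ∈ H} = r} : ℝ) /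
        (Set.ncard (congruenceSet N n j) : ℝ))
      (atTop ⊓ Filter.principal {N : ℕ | Squarefree N})
      (nhds ((μ (OmegaTilde n D r)).toReal)) := by
  have := smulInvariantMeasure_of_map_rightTranslate hinv
  exact prob_system_has_r_short_solutions_squarefree_general hj1 (by lia) r hD0 μ
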